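/- arXiv:1809.08554 — 4 statements merged into one kernel-verified Lean document; each statement's English description precedes it below -/
import Mathlib

section
/- Let f : [0,1] → ℝ be continuously differentiable, monotonically nondecreasing and convex, with ∫₀¹ (t − 2/3)·f(t) dt = 0. Then there exists a (nonnegative) measure μ on ℝ³ concentrated on the triangle Δ = {(x,y,z) ∈ [0,1]³ : x + y + z = 2} (that is, μ(Δ) equals the total mass of μ) such that the pushforward of μ under each of the three coordinate projections is absolutely continuous with respect to Lebesgue measure on [0,1] with density f. -/
open Set MeasureTheory intervalIntegral

/-- The triangle `Δ = {(x,y,z) ∈ [0,1]³ : x + y + z = 2}`. -/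
def triangleΔ : Set (ℝ × ℝ × ℝ) :=
  {p | p.1 ∈ Set.Icc (0 : ℝ) 1 ∧ p.2.1 ∈ Set.Icc (0 : ℝ) 1 ∧ p.2.2 ∈ Set.Icc (0 : ℝ) 1 ∧
    p.1 + p.2.1 + p.2.2 = 2}

theorem le_of_hasDerivAt_nonneg {g g' : ℝ → ℝ} {a b : ℝ} (hab : a ≤ b)
    (hg : ∀ x, HasDerivAt g (g' x) x) (hg' : ∀ x ∈ Icc a b, 0 ≤ g' x) : g a ≤ g b := by
  refine monotoneOn_of_deriv_nonneg (convex_Icc a b)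
    (fun x _ => (hg x).continuousAt.continuousWithinAt)
    (fun x _ => (hg x).differentiableAt.differentiableWithinAt) (fun x hx => ?_)
    (left_mem_Icc.2 hab) (right_mem_Icc.2 hab) hab
  rw [(hg x).deriv]
  exact hg' x (interior_subset hx)

/-- `Ψ` is an antiderivative of `y`, and `y` of `ψ`, where `ψ u + ψ v + ψ w ≥ 0` on the standard
simplex `u + v + w = 1`, so that `Ψ u + Ψ v + Ψ w` is subharmonic there. -/
structure IsSimplexPotential (Ψ y ψ : ℝ → ℝ) : Prop where
  hasDerivAt : ∀ x, HasDerivAt Ψ (y x) x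
  hasDerivAt_deriv : ∀ x, HasDerivAt y (ψ x) x
  map_zero : Ψ 0 = 0
  deriv_zero : y 0 = 0
  deriv_one : y 1 = 0
  sum_nonneg : ∀ u v w, 0 ≤ u → 0 ≤ v → 0 ≤ w → u + v + w = 1 → 0 ≤ ψ u + ψ v + ψ w

namespace IsSimplexPotential

variable {Ψ y ψ : ℝ → ℝ}

theorem hasDerivAt_comp (h : IsSimplexPotential Ψ y ψ) (c m x : ℝ) :
    HasDerivAt (fun t => Ψ (c - m * t)) (y (c - m * x) * -m) x := by
  have := (((hasDerivAt_id x).const_mul m).const_sub c)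
  simp only [id, mul_one] at this
  exact (h.hasDerivAt _).comp x this

theorem hasDerivAt_deriv_comp (h : IsSimplexPotential Ψ y ψ) (c m x : ℝ) :
    HasDerivAt (fun t => y (c - m * t)) (ψ (c - m * x) * -m) x := by
  have := (((hasDerivAt_id x).const_mul m).const_sub c)
  simp only [id, mul_one] at this
  exact (h.hasDerivAt_deriv _).comp x this

/-- The integral of `ψ u + ψ v + ψ w` along the segment `u = c`, `α ≤ v ≤ β`. -/
theorem segment_nonneg (h : IsSimplexPotential Ψ y ψ) {c α β : ℝ} (hc : 0 ≤ c) (hα : 0 ≤ α)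
    (hαβ : α ≤ β) (hβ : β ≤ 1 - c) :
    0 ≤ (β - α) * ψ c + (y β - y α) + (y (1 - c - α) - y (1 - c - β)) := by
  have := le_of_hasDerivAt_nonneg hαβ (g := fun v => v * ψ c + y v - y (1 - c - 1 * v))
    (fun x => (((hasDerivAt_id x).mul_const (ψ c)).add (h.hasDerivAt_deriv x)).sub
      (h.hasDerivAt_deriv_comp (1 - c) 1 x))
    (fun x hx => by
      have := h.sum_nonneg c x (1 - c - 1 * x) hc (hα.trans hx.1) (by linarith [hx.2]) (by ring)
      linarith)
  simp only [one_mul] at this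
  linarith

theorem deriv_le (h : IsSimplexPotential Ψ y ψ) {a : ℝ} (h0 : 0 ≤ a) (h1 : a ≤ 1 / 2) :
    y (1 - 2 * a) ≤ 4 * y a := by
  have := le_of_hasDerivAt_nonneg h0 (g := fun t => 4 * y t - y (1 - 2 * t))
    (fun x => ((h.hasDerivAt_deriv x).const_mul 4).sub (h.hasDerivAt_deriv_comp 1 2 x))
    (fun x hx => by
      have := h.sum_nonneg x x (1 - 2 * x) hx.1 hx.1 (by linarith [hx.2]) (by ring)
      linarith)
  simp only [mul_zero, sub_zero, h.deriv_zero, h.deriv_one] at this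
  linarith

theorem eight_mul_add_le (h : IsSimplexPotential Ψ y ψ) {a b : ℝ} (ha : 0 ≤ a) (hab : a ≤ b)
    (hb : b ≤ 1 / 2) : 8 * Ψ a + Ψ (1 - 2 * a) ≤ 8 * Ψ b + Ψ (1 - 2 * b) :=
  le_of_hasDerivAt_nonneg hab (g := fun t => 8 * Ψ t + Ψ (1 - 2 * t))
    (fun x => ((h.hasDerivAt x).const_mul 8).add (h.hasDerivAt_comp 1 2 x))
    (fun x hx => by
      have := h.deriv_le (ha.trans hx.1) (hx.2.trans hb)
      linarith)

/-- Subharmonicity integrated over the trapezoid `a ≤ u ≤ b`. -/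
theorem trapezoid_le (h : IsSimplexPotential Ψ y ψ) {a b : ℝ} (ha : 0 ≤ a) (hab : a ≤ b)
    (hb : b ≤ 1) :
    (1 - a) * y a + Ψ a - 2 * Ψ (1 - a) ≤ (1 - b) * y b + Ψ b - 2 * Ψ (1 - b) := by
  have := le_of_hasDerivAt_nonneg hab (g := fun c => (1 - c) * y c + Ψ c - 2 * Ψ (1 - 1 * c))
    (fun x => ((((hasDerivAt_id x).const_sub 1).mul (h.hasDerivAt_deriv x)).add
      (h.hasDerivAt x)).sub ((h.hasDerivAt_comp 1 1 x).const_mul 2))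
    (fun x hx => by
      have := h.segment_nonneg (ha.trans hx.1) le_rfl (by linarith [hx.2] : 0 ≤ 1 - x) le_rfl
      simp only [sub_zero, sub_self, h.deriv_zero, one_mul, id] at this ⊢
      linarith)
  simpa only [one_mul] using this

theorem one_nonneg (h : IsSimplexPotential Ψ y ψ) : 0 ≤ Ψ 1 := by
  have := h.trapezoid_le le_rfl zero_le_one le_rfl
  simp only [sub_zero, sub_self, h.deriv_zero, h.map_zero] at this
  linarith

/-- Subharmonicity integrated over the medial triangle. -/
theorem half_le (h : IsSimplexPotential Ψ y ψ) : 2 * Ψ (1 / 2) ≤ y (1 / 2) := by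
  have := le_of_hasDerivAt_nonneg (by norm_num : (0 : ℝ) ≤ 1 / 2)
    (g := fun c => c * y c - Ψ c + c * (2 * y (1 / 2)) + 2 * Ψ (1 / 2 - 1 * c))
    (fun x => ((((hasDerivAt_id x).mul (h.hasDerivAt_deriv x)).sub (h.hasDerivAt x)).add
      ((hasDerivAt_id x).mul_const (2 * y (1 / 2)))).add
      ((h.hasDerivAt_comp (1 / 2) 1 x).const_mul 2))
    (fun x hx => by
      have := h.segment_nonneg (α := 1 / 2 - x) (β := 1 / 2) hx.1 (by linarith [hx.2])
        (by linarith [hx.1]) (by linarith [hx.2])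
      rw [show 1 - x - (1 / 2 - x) = 1 / 2 by ring, show 1 - x - 1 / 2 = 1 / 2 - x by ring] at this
      simp only [id, one_mul]
      linarith)
  simp only [mul_zero, one_mul, sub_zero, sub_self, h.deriv_zero, h.map_zero] at this
  linarith

/-- Subharmonicity integrated over the hexagon `u, v, w ≤ b`. -/
theorem hexagon_le (h : IsSimplexPotential Ψ y ψ) {b : ℝ} (h0 : 1 / 2 ≤ b) (h1 : b ≤ 1) :
    2 * Ψ (1 - b) ≤ Ψ b + (1 - b) * y b := by
  have h2 := h.trapezoid_le (by norm_num) h0 h1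
  have h3 := h.half_le
  norm_num at h2 h3
  linarith

/-- Subharmonicity integrated over the complement of the triangle `u, v, w ≥ b`. -/
theorem frame_nonneg (h : IsSimplexPotential Ψ y ψ) {b : ℝ} (h0 : 0 ≤ b) (h1 : b ≤ 1 / 3) :
    0 ≤ Ψ 1 - Ψ (1 - 2 * b) + Ψ b + (1 - 3 * b) * y b := by
  have := le_of_hasDerivAt_nonneg h0
    (g := fun c => (1 - b - c) * y c + Ψ c - Ψ (1 - 1 * c) - c * y b - Ψ (1 - b - 1 * c))
    (fun x => (((((hasDerivAt_id x).const_sub (1 - b)).mul (h.hasDerivAt_deriv x)).add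
      (h.hasDerivAt x)).sub (h.hasDerivAt_comp 1 1 x)).sub ((hasDerivAt_id x).mul_const (y b))
      |>.sub (h.hasDerivAt_comp (1 - b) 1 x))
    (fun x hx => by
      have := h.segment_nonneg (α := b) (β := 1 - x) hx.1 h0 (by linarith [hx.2]) le_rfl
      rw [show 1 - x - b = 1 - b - x by ring] at this
      simp only [id, one_mul, sub_self, h.deriv_zero] at this ⊢
      linarith)
  simp only [one_mul, sub_zero, h.deriv_zero, h.map_zero] at this
  rw [show 1 - b - b = 1 - 2 * b by ring] at this
  linarith

theorem nonneg_of_le_third (h : IsSimplexPotential Ψ y ψ) {b : ℝ} (h0 : 0 ≤ b)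
    (h1 : b ≤ 1 / 3) : 0 ≤ Ψ b := by
  rcases h1.eq_or_lt with rfl | h1
  · have := h.eight_mul_add_le le_rfl h0 (by norm_num)
    have := h.one_nonneg
    norm_num [h.map_zero] at *
    linarith
  have key : ∀ x ∈ Icc 0 b, 0 ≤ 9 * Ψ x + (1 - 3 * x) * y x := fun x hx => by
    have h2 := h.frame_nonneg hx.1 (by linarith [hx.2])
    have h3 := h.eight_mul_add_le le_rfl hx.1 (by linarith [hx.2])
    simp only [mul_zero, sub_zero, h.map_zero] at h3
    linarith
  have hmono : MonotoneOn (fun x => Ψ x / (1 - 3 * x) ^ 3) (Icc 0 b) := by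
    have hne : ∀ x ∈ Icc 0 b, 0 < 1 - 3 * x := fun x hx => by linarith [hx.2]
    have hd : ∀ x ∈ Icc 0 b, HasDerivAt (fun x => Ψ x / (1 - 3 * x) ^ 3)
        ((9 * Ψ x + (1 - 3 * x) * y x) / (1 - 3 * x) ^ 4) x := fun x hx => by
      have h4 : HasDerivAt (fun x => (1 - 3 * x) ^ 3) (3 * (1 - 3 * x) ^ 2 * -(3 * 1)) x :=
        (((hasDerivAt_id x).const_mul 3).const_sub 1).pow 3
      refine ((h.hasDerivAt x).div h4 (pow_pos (hne x hx) 3).ne').congr_deriv ?_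
      have := (hne x hx).ne'
      field_simp
      ring
    refine monotoneOn_of_deriv_nonneg (convex_Icc 0 b)
      (fun x hx => (hd x hx).continuousAt.continuousWithinAt)
      (fun x hx => (hd x (interior_subset hx)).differentiableAt.differentiableWithinAt)
      (fun x hx => ?_)
    rw [(hd x (interior_subset hx)).deriv]
    exact div_nonneg (key x (interior_subset hx)) (pow_pos (hne x (interior_subset hx)) 4).le
  have := hmono (left_mem_Icc.2 h0) (right_mem_Icc.2 h0) h0
  simp only [h.map_zero, zero_div] at this
  rwa [le_div_iff₀ (pow_pos (by linarith) 3), zero_mul] at this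

theorem le_eight_mul (h : IsSimplexPotential Ψ y ψ) {b : ℝ} (h0 : 1 / 3 ≤ b) (h1 : b ≤ 1 / 2) :
    Ψ (4 * b - 1) ≤ 8 * Ψ b := by
  have h2 := h.eight_mul_add_le (a := 1 - 2 * b) (b := b) (by linarith) (by linarith) h1
  have h3 := h.nonneg_of_le_third (b := 1 - 2 * b) (by linarith) (by linarith)
  rw [show 1 - 2 * (1 - 2 * b) = 4 * b - 1 by ring] at h2
  linarith

theorem nonneg (h : IsSimplexPotential Ψ y ψ) {x : ℝ} (hx : x ∈ Icc (0 : ℝ) 1) : 0 ≤ Ψ x := by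
  rcases le_total x (1 / 3) with h3 | h3
  · exact h.nonneg_of_le_third hx.1 h3
  obtain ⟨b, hb, hmin⟩ := isCompact_Icc.exists_isMinOn (nonempty_Icc.2 (by norm_num))
    (fun x _ => (h.hasDerivAt x).continuousAt.continuousWithinAt : ContinuousOn Ψ (Icc (1 / 3) 1))
  have hle : ∀ t, 1 / 3 ≤ t → t ≤ 1 → Ψ b ≤ Ψ t := fun t h0 h1 => hmin ⟨h0, h1⟩
  refine le_trans ?_ (hle x h3 hx.2)
  rcases le_or_gt b (1 / 2) with h2 | h2
  · have := h.le_eight_mul hb.1 h2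
    have := hle (4 * b - 1) (by linarith [hb.1]) (by linarith)
    linarith
  rcases hb.2.eq_or_lt with rfl | h1
  · exact h.one_nonneg
  have hy : y b = 0 :=
    (hmin.isLocalMin (Icc_mem_nhds (by linarith) h1)).hasDerivAt_eq_zero (h.hasDerivAt b)
  have hhex := h.hexagon_le h2.le h1.le
  rw [hy, mul_zero, add_zero] at hhex
  rcases le_total (1 - b) (1 / 3) with h4 | h4
  · linarith [h.nonneg_of_le_third (by linarith) h4]
  · have := h.le_eight_mul h4 (by linarith)
    have := hle (4 * (1 - b) - 1) (by linarith) (by linarith)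
    linarith

end IsSimplexPotential

/-- If `y` has a nonnegative antiderivative vanishing at `0`, its integral against a nonnegative
antitone function is nonnegative. -/
theorem integral_mul_antitoneOn_nonneg {Ψ y η : ℝ → ℝ} (hΨ : ∀ x, HasDerivAt Ψ (y x) x)
    (hy : Continuous y) (hΨ0 : Ψ 0 = 0) (hΨnonneg : ∀ x ∈ Icc (0 : ℝ) 1, 0 ≤ Ψ x)
    (hη : AntitoneOn η (Icc 0 1)) (hηc : ContinuousOn η (Icc 0 1)) (hη1 : 0 ≤ η 1) :
    0 ≤ ∫ x in (0 : ℝ)..1, y x * η x := by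
  obtain ⟨M, hM⟩ := (isCompact_Icc (a := (0 : ℝ)) (b := 1)).exists_bound_of_continuousOn
    hy.continuousOn
  have hint : ∀ a ∈ Icc (0 : ℝ) 1, ∀ b ∈ Icc (0 : ℝ) 1,
      IntervalIntegrable (fun x => y x * η x) volume a b := fun a ha b hb =>
    ((hy.continuousOn.mul hηc).mono (ordConnected_Icc.uIcc_subset ha hb)).intervalIntegrable
  have step : ∀ a ∈ Icc (0 : ℝ) 1, ∀ b ∈ Icc (0 : ℝ) 1, a ≤ b →
      Ψ b * η b - Ψ a * η a - M * (b - a) * (η a - η b) ≤ ∫ x in a..b, y x * η x := by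
    intro a ha b hb hab
    have hyb : IntervalIntegrable (fun x => y x * η b) volume a b :=
      (hy.mul continuous_const).intervalIntegrable a b
    have h1 : ∫ x in a..b, y x * η b = (Ψ b - Ψ a) * η b := by
      rw [intervalIntegral.integral_mul_const, integral_eq_sub_of_hasDerivAt (fun x _ => hΨ x)
        (hy.intervalIntegrable a b)]
    have h2 : ‖∫ x in a..b, (y x * η x - y x * η b)‖ ≤ M * (η a - η b) * |b - a| := by
      refine norm_integral_le_of_norm_le_const fun x hx => ?_
      rw [uIoc_of_le hab] at hx
      have hx' : x ∈ Icc (0 : ℝ) 1 := ⟨ha.1.trans hx.1.le, hx.2.trans hb.2⟩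
      rw [← mul_sub, norm_mul]
      have h3 := hη ha hx' hx.1.le
      have h4 := hη hx' hb hx.2
      refine mul_le_mul (hM x hx') ?_ (norm_nonneg _) ((norm_nonneg _).trans (hM x hx'))
      rw [Real.norm_of_nonneg (by linarith)]
      linarith
    rw [integral_sub (hint a ha b hb) hyb, h1, abs_of_nonneg (sub_nonneg.2 hab),
      Real.norm_eq_abs] at h2
    have h3 := (abs_le.1 h2).1
    have h4 := mul_nonneg (hΨnonneg a ha) (sub_nonneg.2 (hη ha hb hab))
    linarith
  have bound : ∀ n : ℕ, -(M * (η 0 - η 1)) / (n + 1) ≤ ∫ x in (0 : ℝ)..1, y x * η x := by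
    intro n
    set t : ℕ → ℝ := fun i => i / (n + 1) with ht
    have hn : (0 : ℝ) < n + 1 := by positivity
    have htmem : ∀ i ≤ n + 1, t i ∈ Icc (0 : ℝ) 1 := fun i hi =>
      ⟨by positivity, (div_le_one hn).2 (by exact_mod_cast hi)⟩
    have hdiff : ∀ i, t (i + 1) - t i = 1 / (n + 1) := fun i => by
      simp only [ht]; push_cast; ring
    have h0 : t 0 = 0 := by simp [ht]
    have h1 : t (n + 1) = 1 := by simp only [ht]; push_cast; exact div_self hn.ne'
    rw [← h0, ← h1, ← sum_integral_adjacent_intervals (fun i hi =>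
      hint _ (htmem i hi.le) _ (htmem (i + 1) hi))]
    refine le_trans ?_ (Finset.sum_le_sum fun i hi => step _ (htmem i ?_) _ (htmem (i + 1) ?_) ?_)
    · simp only [hdiff]
      rw [Finset.sum_sub_distrib, Finset.sum_range_sub (fun i => Ψ (t i) * η (t i)),
        ← Finset.mul_sum, Finset.sum_range_sub' (fun i => η (t i)), h0, h1, hΨ0]
      have := mul_nonneg (hΨnonneg 1 (by norm_num)) hη1
      have h5 : -(M * (η 0 - η 1)) / (n + 1) = -(M * (1 / (n + 1)) * (η 0 - η 1)) := by ring
      linarith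
    · exact (Finset.mem_range.1 hi).le
    · exact Finset.mem_range.1 hi
    · have := hdiff i
      have : 0 < 1 / ((n : ℝ) + 1) := by positivity
      linarith
  have hlim := (tendsto_one_div_add_atTop_nhds_zero_nat (𝕜 := ℝ)).const_mul (-(M * (η 0 - η 1)))
  rw [mul_zero] at hlim
  exact le_of_tendsto' hlim fun n => by
    rw [mul_one_div]
    exact bound n

theorem ConvexOn.monotoneOn_of_hasDerivWithinAt {s : Set ℝ} {f f' : ℝ → ℝ} (hf : ConvexOn ℝ s f)
    (hf' : ∀ x ∈ s, HasDerivWithinAt f (f' x) s x) : MonotoneOn f' s := by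
  intro x hx z hz hxz
  rcases hxz.eq_or_lt with rfl | hlt
  · exact le_rfl
  · exact (hf.le_slope_of_hasDerivWithinAt hx hz hlt (hf' x hx)).trans
      (hf.slope_le_of_hasDerivWithinAt hx hz hlt (hf' z hz))

/-- The dual form of the theorem, for test functions `φ (x) + φ (y) + φ (z)`. -/
theorem integral_mul_nonneg_of_sum_nonneg {f f' φ : ℝ → ℝ}
    (hderiv : ∀ x ∈ Icc (0 : ℝ) 1, HasDerivWithinAt f (f' x) (Icc (0 : ℝ) 1) x)
    (hf'cont : ContinuousOn f' (Icc (0 : ℝ) 1)) (hmono : MonotoneOn f (Icc (0 : ℝ) 1))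
    (hconv : ConvexOn ℝ (Icc (0 : ℝ) 1) f)
    (hint : (∫ t in (0 : ℝ)..1, (t - 2/3) * f t) = 0) (hφ : Continuous φ)
    (hpos : ∀ p ∈ triangleΔ, 0 ≤ φ p.1 + φ p.2.1 + φ p.2.2) :
    0 ≤ ∫ x in (0 : ℝ)..1, φ x * f x := by
  have hfc : ContinuousOn f (Icc (0 : ℝ) 1) := fun x hx => (hderiv x hx).continuousWithinAt
  set C : ℝ := ∫ t in (0 : ℝ)..1, φ (1 - t) with hC
  set ψ : ℝ → ℝ := fun u => φ (1 - u) + (2 - 6 * u) * C with hψ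
  set y : ℝ → ℝ := fun u => ∫ t in (0 : ℝ)..u, ψ t with hy
  have hψc : Continuous ψ := by fun_prop
  have hyd : ∀ x, HasDerivAt y (ψ x) x := fun x => hψc.integral_hasStrictDerivAt 0 x |>.hasDerivAt
  have hyc : Continuous y := continuous_iff_continuousAt.2 fun x => (hyd x).continuousAt
  have hy1 : y 1 = 0 := by
    have h1 : ∫ t in (0 : ℝ)..1, (2 - 6 * t) = -1 := by
      rw [integral_sub (Continuous.intervalIntegrable (by fun_prop) _ _)
        (Continuous.intervalIntegrable (by fun_prop) _ _),
        intervalIntegral.integral_const_mul, integral_id]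
      norm_num
    simp only [hy, hψ]
    rw [integral_add (Continuous.intervalIntegrable (by fun_prop) _ _)
      (Continuous.intervalIntegrable (by fun_prop) _ _), intervalIntegral.integral_mul_const, h1, ← hC]
    ring
  have hpot : IsSimplexPotential (fun x => ∫ t in (0 : ℝ)..x, y t) y ψ :=
    { hasDerivAt := fun x => hyc.integral_hasStrictDerivAt 0 x |>.hasDerivAt
      hasDerivAt_deriv := hyd
      map_zero := integral_same
      deriv_zero := integral_same
      deriv_one := hy1
      sum_nonneg := fun u v w hu hv hw h => by
        have := hpos (1 - u, 1 - v, 1 - w) ⟨⟨by simp; linarith, by simp; linarith⟩,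
          ⟨by simp; linarith, by simp; linarith⟩, ⟨by simp; linarith, by simp; linarith⟩,
          by simp; linarith⟩
        have hw' : w = 1 - u - v := by linarith
        subst hw'
        simp only [hψ] at this ⊢
        linarith }
  have hf'mono := hconv.monotoneOn_of_hasDerivWithinAt hderiv
  have hf'0 : 0 ≤ f' 0 := by
    rw [← (hderiv 0 (by norm_num)).derivWithin (uniqueDiffOn_Icc one_pos 0 (by norm_num))]
    exact hmono.derivWithin_nonneg
  have hmaps : MapsTo (fun x : ℝ => 1 - x) (Icc 0 1) (Icc 0 1) := fun x hx =>
    ⟨by linarith [hx.2], by linarith [hx.1]⟩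
  have key : 0 ≤ ∫ x in (0 : ℝ)..1, y x * f' (1 - x) :=
    integral_mul_antitoneOn_nonneg hpot.hasDerivAt hyc hpot.map_zero (fun x hx => hpot.nonneg hx)
      (fun a ha b hb hab => hf'mono (hmaps hb) (hmaps ha) (by linarith))
      (hf'cont.comp (by fun_prop) hmaps) (by simpa using hf'0)
  have hflip := integral_comp_sub_left (a := 0) (b := 1) (fun x => y (1 - x) * f' x) 1
  simp only [sub_sub_cancel, sub_self, sub_zero] at hflip
  have hparts := integral_mul_deriv_eq_deriv_mul_of_hasDerivWithinAt (a := 0) (b := 1)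
    (u := f) (u' := f') (v := fun x => -y (1 - x)) (v' := fun x => ψ (1 - x))
    (by rwa [uIcc_of_le zero_le_one])
    (fun x _ => by
      have := ((hyd (1 - x)).comp x ((hasDerivAt_id x).const_sub 1)).neg
      exact (this.congr_deriv (by ring)).hasDerivWithinAt)
    (by rw [← uIcc_of_le zero_le_one] at hf'cont; exact hf'cont.intervalIntegrable)
    (Continuous.intervalIntegrable (by fun_prop) _ _)
  simp only [sub_self, sub_zero, hy1, show y 0 = 0 from hpot.deriv_zero, neg_zero, mul_zero,
    mul_neg, intervalIntegral.integral_neg] at hparts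
  have hsplit : ∫ x in (0 : ℝ)..1, f x * ψ (1 - x) =
      (∫ x in (0 : ℝ)..1, φ x * f x) + 6 * C * ∫ x in (0 : ℝ)..1, (x - 2 / 3) * f x := by
    rw [← intervalIntegral.integral_const_mul, ← intervalIntegral.integral_add]
    · refine integral_congr fun x _ => ?_
      simp only [hψ, sub_sub_cancel]
      ring
    · exact ContinuousOn.intervalIntegrable_of_Icc zero_le_one (hφ.continuousOn.mul hfc)
    · exact ContinuousOn.intervalIntegrable_of_Icc zero_le_one (by fun_prop)
  rw [hint, mul_zero, add_zero] at hsplit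
  rw [hflip] at key
  simp only [mul_comm (f' _)] at hparts
  linarith

/-- A linear functional that is nonnegative wherever `T v ≥ 0` is integration of `T v` against a
finite measure, by the Riesz extension and Riesz–Markov–Kakutani theorems. -/
theorem exists_measure_integral_eq {X V : Type*} [TopologicalSpace X] [T2Space X] [CompactSpace X]
    [MeasurableSpace X] [BorelSpace X] [AddCommGroup V] [Module ℝ V] (T : V →ₗ[ℝ] C(X, ℝ))
    (L : V →ₗ[ℝ] ℝ) (hL : ∀ v, 0 ≤ T v → 0 ≤ L v) {e : V} (he : T e = 1) :
    ∃ μ : Measure X, IsFiniteMeasure μ ∧ ∀ v, ∫ x, T v x ∂μ = L v := by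
  have hker : LinearMap.ker T ≤ LinearMap.ker L := fun v hv => by
    rw [LinearMap.mem_ker] at hv ⊢
    have h2 := hL (-v) (by simp [hv])
    rw [map_neg] at h2
    linarith [hL v hv.ge]
  obtain ⟨g₀, hg₀⟩ : ∃ g₀ : C(X, ℝ) →ₗ[ℝ] ℝ, g₀ ∘ₗ T = L := by
    have : L ∈ LinearMap.range T.dualMap := by
      rw [LinearMap.range_dualMap_eq_dualAnnihilator_ker, Submodule.mem_dualAnnihilator]
      exact fun v hv => hker hv
    exact this
  obtain ⟨g, hgT, hg⟩ := riesz_extension (PointedCone.positive ℝ C(X, ℝ))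
    ⟨LinearMap.range T, g₀.domRestrict _⟩
    (by
      rintro ⟨_, v, rfl⟩ hv
      rw [PointedCone.mem_positive] at hv
      exact (hL v hv).trans_eq (LinearMap.congr_fun hg₀ v).symm)
    (fun y => by
      refine ⟨⟨T (‖y‖ • e), LinearMap.mem_range_self _ _⟩, ?_⟩
      rw [PointedCone.mem_positive, ContinuousMap.le_def]
      intro x
      have := (abs_le.1 ((Real.norm_eq_abs _).symm.trans_le (y.norm_coe_le_norm x))).1
      simp [he]
      linarith)
  let Λ : CompactlySupportedContinuousMap X ℝ →ₚ[ℝ] ℝ := PositiveLinearMap.mk₀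
    { toFun := fun φ => g φ.toContinuousMap
      map_add' := fun φ χ => g.map_add φ.toContinuousMap χ.toContinuousMap
      map_smul' := fun c φ => g.map_smul c φ.toContinuousMap }
    (fun φ hφ => hg _ ((PointedCone.mem_positive _ _).2 hφ))
  refine ⟨RealRMK.rieszMeasure Λ, inferInstance, fun v => ?_⟩
  have h1 := RealRMK.integral_rieszMeasure Λ
    { toContinuousMap := T v, hasCompactSupport' := HasCompactSupport.of_compactSpace _ }
  refine h1.trans ((hgT ⟨T v, LinearMap.mem_range_self _ _⟩).trans ?_)
  exact LinearMap.congr_fun hg₀ v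

/-- The law of `π` under `μ` has density `f` on `[0, 1]` if it does when tested on continuous
functions. -/
theorem map_eq_withDensity_of_integral_eq {X : Type*} [TopologicalSpace X] [MeasurableSpace X]
    [BorelSpace X] {μ : Measure X} [IsFiniteMeasure μ] {π : X → ℝ} (hπ : Continuous π) {f : ℝ → ℝ}
    (hf : ContinuousOn f (Icc 0 1)) (hf0 : ∀ᵐ x ∂volume.restrict (Icc (0 : ℝ) 1), 0 ≤ f x)
    (h : ∀ g : C(ℝ, ℝ), ∫ x, g (π x) ∂μ = ∫ x in (0 : ℝ)..1, g x * f x) :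
    μ.map π = (volume.restrict (Icc (0 : ℝ) 1)).withDensity (fun x => ENNReal.ofReal (f x)) := by
  have hfi : Integrable f (volume.restrict (Icc (0 : ℝ) 1)) :=
    hf.integrableOn_compact isCompact_Icc
  have := isFiniteMeasure_withDensity_ofReal hfi.2
  refine ext_of_forall_integral_eq_of_IsFiniteMeasure fun g => ?_
  rw [integral_map hπ.aemeasurable g.continuous.aestronglyMeasurable,
    integral_withDensity_eq_integral_toReal_smul₀ hfi.1.aemeasurable.ennreal_ofReal
      (by simp)]
  refine (h g.toContinuousMap).trans ?_
  rw [integral_of_le zero_le_one, ← integral_Icc_eq_integral_Ioc]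
  refine integral_congr_ae (hf0.mono fun x hx => ?_)
  simp [ENNReal.toReal_ofReal hx, mul_comm]

theorem nonneg_of_integral_eq_zero {f f' : ℝ → ℝ}
    (hderiv : ∀ x ∈ Icc (0 : ℝ) 1, HasDerivWithinAt f (f' x) (Icc (0 : ℝ) 1) x)
    (hf'cont : ContinuousOn f' (Icc (0 : ℝ) 1)) (hmono : MonotoneOn f (Icc (0 : ℝ) 1))
    (hconv : ConvexOn ℝ (Icc (0 : ℝ) 1) f)
    (hint : (∫ t in (0 : ℝ)..1, (t - 2/3) * f t) = 0) {x : ℝ} (hx : x ∈ Icc (0 : ℝ) 1) :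
    0 ≤ f x := by
  by_contra! hlt
  have hfc : ContinuousOn f (Icc (0 : ℝ) 1) := fun x hx => (hderiv x hx).continuousWithinAt
  set φ : ℝ → ℝ := fun t => max (-IccExtend zero_le_one ((Icc (0 : ℝ) 1).domRestrict f) t) 0 with hφ
  have hφc : Continuous φ := (hfc.domRestrict.Icc_extend' (h := zero_le_one)).neg.max continuous_const
  have hφf : ∀ t ∈ Icc (0 : ℝ) 1, φ t = max (-f t) 0 := fun t ht => by
    simp only [hφ, IccExtend_of_mem _ _ ht, domRestrict_apply]
  have hnonneg := integral_mul_nonneg_of_sum_nonneg hderiv hf'cont hmono hconv hint hφc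
    (fun p _ => add_nonneg (add_nonneg (le_max_right _ _) (le_max_right _ _)) (le_max_right _ _))
  have hpos : 0 < ∫ t in (0 : ℝ)..1, -(φ t * f t) :=
    integral_pos one_pos ((hφc.continuousOn.mul hfc).neg)
      (fun t ht => by
        rw [hφf t (Ioc_subset_Icc_self ht)]
        rcases le_total (f t) 0 with h | h
        · rw [max_eq_left (by linarith)]
          nlinarith
        · rw [max_eq_right (by linarith)]
          simp)
      ⟨x, hx, by
        rw [hφf x hx, max_eq_left (by linarith)]
        nlinarith⟩
  rw [intervalIntegral.integral_neg] at hpos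
  linarith

theorem isCompact_triangleΔ : IsCompact triangleΔ := by
  refine (isCompact_Icc.prod (isCompact_Icc.prod isCompact_Icc) :
    IsCompact (Icc (0 : ℝ) 1 ×ˢ Icc (0 : ℝ) 1 ×ˢ Icc (0 : ℝ) 1)).of_isClosed_subset ?_
    fun p hp => ⟨hp.1, hp.2.1, hp.2.2.1⟩
  exact (isClosed_Icc.preimage (by fun_prop)).inter ((isClosed_Icc.preimage (by fun_prop)).inter
    ((isClosed_Icc.preimage (by fun_prop)).inter (isClosed_eq (by fun_prop) (by fun_prop))))

/-- The function `(x, y, z) ↦ φ₁ x + φ₂ y + φ₃ z` on the triangle. -/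
def sumCoords : C(ℝ, ℝ) × C(ℝ, ℝ) × C(ℝ, ℝ) →ₗ[ℝ] C(triangleΔ, ℝ) where
  toFun φ :=
    { toFun := fun p => φ.1 p.1.1 + φ.2.1 p.1.2.1 + φ.2.2 p.1.2.2
      continuous_toFun := by fun_prop }
  map_add' φ χ := by
    ext p
    simp only [Prod.fst_add, Prod.snd_add, ContinuousMap.add_apply, ContinuousMap.coe_mk]
    ring
  map_smul' c φ := by
    ext p
    simp only [Prod.smul_fst, Prod.smul_snd, ContinuousMap.smul_apply, ContinuousMap.coe_mk,
      RingHom.id_apply, smul_eq_mul]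
    ring

/-- Integration over `[0, 1]` against a function `f`. -/
noncomputable def integralMul (f : ℝ → ℝ) (hf : ContinuousOn f (Icc (0 : ℝ) 1)) :
    C(ℝ, ℝ) →ₗ[ℝ] ℝ where
  toFun φ := ∫ x in (0 : ℝ)..1, φ x * f x
  map_add' φ χ := by
    rw [← intervalIntegral.integral_add]
    · simp only [ContinuousMap.add_apply, add_mul]
    all_goals
      exact ContinuousOn.intervalIntegrable_of_Icc zero_le_one
        ((map_continuous _).continuousOn.mul hf)
  map_smul' c φ := by
    simp only [ContinuousMap.smul_apply, smul_eq_mul, mul_assoc, RingHom.id_apply,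
      intervalIntegral.integral_const_mul]

/-- For every continuously differentiable, nondecreasing, convex `f : [0,1] → ℝ` with
`∫₀¹ (t − 2/3) f(t) dt = 0`, there exists a measure on the triangle `Δ` whose three coordinate
projections all have density `f` with respect to Lebesgue measure on `[0,1]`. -/
theorem exists_measure_on_triangle (f f' : ℝ → ℝ)
    (hderiv : ∀ x ∈ Set.Icc (0 : ℝ) 1, HasDerivWithinAt f (f' x) (Set.Icc (0 : ℝ) 1) x)
    (hf'cont : ContinuousOn f' (Set.Icc (0 : ℝ) 1))
    (hmono : MonotoneOn f (Set.Icc (0 : ℝ) 1))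
    (hconv : ConvexOn ℝ (Set.Icc (0 : ℝ) 1) f)
    (hint : (∫ t in (0 : ℝ)..1, (t - 2/3) * f t) = 0) :
    ∃ μ : Measure (ℝ × ℝ × ℝ), IsFiniteMeasure μ ∧ μ triangleΔ = μ Set.univ ∧
      μ.map (fun p => p.1) =
        (volume.restrict (Set.Icc (0 : ℝ) 1)).withDensity (fun x => ENNReal.ofReal (f x)) ∧
      μ.map (fun p => p.2.1) =
        (volume.restrict (Set.Icc (0 : ℝ) 1)).withDensity (fun x => ENNReal.ofReal (f x)) ∧
      μ.map (fun p => p.2.2) =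
        (volume.restrict (Set.Icc (0 : ℝ) 1)).withDensity (fun x => ENNReal.ofReal (f x)) := by
  have hfc : ContinuousOn f (Icc (0 : ℝ) 1) := fun x hx => (hderiv x hx).continuousWithinAt
  have hf0 : ∀ᵐ x ∂volume.restrict (Icc (0 : ℝ) 1), 0 ≤ f x :=
    (ae_restrict_mem measurableSet_Icc).mono fun x hx =>
      nonneg_of_integral_eq_zero hderiv hf'cont hmono hconv hint hx
  have : CompactSpace triangleΔ := isCompact_iff_compactSpace.1 isCompact_triangleΔ
  let L : C(ℝ, ℝ) × C(ℝ, ℝ) × C(ℝ, ℝ) →ₗ[ℝ] ℝ :=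
    (integralMul f hfc).coprod ((integralMul f hfc).coprod (integralMul f hfc))
  have hL : ∀ φ, L φ = integralMul f hfc (φ.1 + (φ.2.1 + φ.2.2)) := fun φ => by
    simp only [L, LinearMap.coprod_apply, map_add]
  obtain ⟨ν, hν, hνL⟩ := exists_measure_integral_eq sumCoords L (e := (1, 0, 0))
    (fun φ hφ => by
      rw [hL]
      refine integral_mul_nonneg_of_sum_nonneg hderiv hf'cont hmono hconv hint
        (map_continuous _) fun p ⟨h1, h2, h3, h⟩ => ?_
      have H : ∀ q ∈ triangleΔ, 0 ≤ φ.1 q.1 + φ.2.1 q.2.1 + φ.2.2 q.2.2 := fun q hq => hφ ⟨q, hq⟩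
      have H1 := H (p.1, p.2.1, p.2.2) ⟨h1, h2, h3, h⟩
      have H2 := H (p.2.1, p.2.2, p.1) ⟨h2, h3, h1, by simp only; linarith⟩
      have H3 := H (p.2.2, p.1, p.2.1) ⟨h3, h1, h2, by simp only; linarith⟩
      simp only [ContinuousMap.add_apply] at H1 H2 H3 ⊢
      linarith)
    (by ext p; simp [sumCoords])
  have hmeas : MeasurableSet triangleΔ := isCompact_triangleΔ.measurableSet
  refine ⟨ν.map Subtype.val, inferInstance, ?_, ?_, ?_, ?_⟩
  · rw [Measure.map_apply measurable_subtype_coe hmeas,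
      Measure.map_apply measurable_subtype_coe MeasurableSet.univ, Subtype.coe_preimage_self,
      preimage_univ]
  · rw [Measure.map_map (by fun_prop) measurable_subtype_coe]
    refine map_eq_withDensity_of_integral_eq (by fun_prop) hfc hf0 fun g => ?_
    have := hνL (g, 0, 0)
    simpa [hL, sumCoords, integralMul] using this
  · rw [Measure.map_map (by fun_prop) measurable_subtype_coe]
    refine map_eq_withDensity_of_integral_eq (by fun_prop) hfc hf0 fun g => ?_
    have := hνL (0, g, 0)
    simpa [hL, sumCoords, integralMul] using this
  · rw [Measure.map_map (by fun_prop) measurable_subtype_coe]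
    refine map_eq_withDensity_of_integral_eq (by fun_prop) hfc hf0 fun g => ?_
    have := hνL (0, 0, g)
    simpa [hL, sumCoords, integralMul] using this
end

section
/- Let l ∈ (0, 1/4) satisfy 9l + log(1−2l) − log l = 3, let r = 1 − 2l, and let M be as defined. Then there exists a probability measure π on ℝ³ with π(M) = 1 whose pushforwards under the three coordinate projections all equal Lebesgue measure on [0,1]. -/
open Set MeasureTheory

/-- The set `M ⊆ [0,1]³`: the union of the three segments
`Mx = {(t, 1−2t, 1−2t) : 0 ≤ t ≤ l}`, `My = {(1−2t, t, 1−2t) : 0 ≤ t ≤ l}`,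
`Mz = {(1−2t, 1−2t, t) : 0 ≤ t ≤ l}` and the two-dimensional piece
`M₂ = {(x,y,z) : l ≤ x,y,z ≤ 1−2l, xyz = l(1−2l)²}`. -/
def Mset (l : ℝ) : Set (ℝ × ℝ × ℝ) :=
  {p | ∃ t, 0 ≤ t ∧ t ≤ l ∧
    (p = (t, 1 - 2*t, 1 - 2*t) ∨ p = (1 - 2*t, t, 1 - 2*t) ∨ p = (1 - 2*t, 1 - 2*t, t))} ∪
  {p | l ≤ p.1 ∧ p.1 ≤ 1 - 2*l ∧ l ≤ p.2.1 ∧ p.2.1 ≤ 1 - 2*l ∧ l ≤ p.2.2 ∧ p.2.2 ≤ 1 - 2*l ∧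
    p.1 * p.2.1 * p.2.2 = l * (1 - 2*l)^2}

/-- The even profile controlling the angular part of the density on the simplex. -/
noncomputable def angularProfile (c τ : ℝ) : ℝ :=
  c / 2 * (Real.cosh (c * τ) - 2 * τ * Real.sinh (c * τ)) + 3 / 20 * (20 * τ ^ 2 - 1)

/-- The profile controlling the radial part of the density on the simplex. -/
noncomputable def radialProfile (c τ : ℝ) : ℝ :=
  1 / 20 * (1 + 6 * τ ^ 2 + 60 * τ ^ 3) + (Real.sinh (c * τ) - 2 * τ * Real.cosh (c * τ))

/-- An antiderivative of `radialProfile c`. -/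
noncomputable def radialPrimitive (c τ : ℝ) : ℝ :=
  1 / 20 * (τ + 2 * τ ^ 3 + 15 * τ ^ 4) + (Real.cosh (c * τ) / c
    - 2 * τ * Real.sinh (c * τ) / c + 2 * Real.cosh (c * τ) / c ^ 2)

/-- The density, in the coordinates `(u, θ) ↦ (1 - u, u * θ, u * (1 - θ))` of the simplex. -/
noncomputable def simplexDensity (c u θ : ℝ) : ℝ :=
  θ * (1 - θ) * angularProfile c (θ - 1 / 2) + u * radialProfile c (1 / 2 - u)

/-- The marginal density, up to normalization. -/
noncomputable def marginalDensity (c s : ℝ) : ℝ := Real.exp (-(c * (s - 1 / 2))) / c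

@[fun_prop]
lemma continuous_angularProfile (c : ℝ) : Continuous (angularProfile c) := by
  unfold angularProfile; fun_prop

@[fun_prop]
lemma continuous_radialProfile (c : ℝ) : Continuous (radialProfile c) := by
  unfold radialProfile; fun_prop

lemma continuous_simplexDensity (c : ℝ) : Continuous fun p : ℝ × ℝ => simplexDensity c p.1 p.2 := by
  unfold simplexDensity; fun_prop

lemma simplexDensity_symm (c u θ : ℝ) : simplexDensity c u (1 - θ) = simplexDensity c u θ := by
  have h : c * (1 - θ - 1 / 2) = -(c * (θ - 1 / 2)) := by ring
  simp only [simplexDensity, angularProfile, h, Real.cosh_neg, Real.sinh_neg]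
  ring

lemma hasDerivAt_sinh_mul (c x : ℝ) :
    HasDerivAt (fun y => Real.sinh (c * y)) (c * Real.cosh (c * x)) x := by
  have h := ((hasDerivAt_id' x).const_mul c).sinh
  convert h using 1; ring

lemma hasDerivAt_cosh_mul (c x : ℝ) :
    HasDerivAt (fun y => Real.cosh (c * y)) (c * Real.sinh (c * x)) x := by
  have h := ((hasDerivAt_id' x).const_mul c).cosh
  convert h using 1; ring

lemma hasDerivAt_radialProfile (c x : ℝ) :
    HasDerivAt (radialProfile c) (1 / 20 * (12 * x + 180 * x ^ 2)
      + ((c - 2) * Real.cosh (c * x) - 2 * c * x * Real.sinh (c * x))) x := by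
  have hx := hasDerivAt_id' x
  have h := ((((hx.pow 2).const_mul 6).const_add 1 |>.add ((hx.pow 3).const_mul 60)).const_mul
    (1 / 20)).add ((hasDerivAt_sinh_mul c x).sub ((hx.const_mul 2).mul (hasDerivAt_cosh_mul c x)))
  refine h.congr_deriv ?_
  push_cast; ring

lemma hasDerivAt_radialPrimitive {c : ℝ} (hc : c ≠ 0) (x : ℝ) :
    HasDerivAt (radialPrimitive c) (radialProfile c x) x := by
  have hx := hasDerivAt_id' x
  have h := (((hx.add ((hx.pow 3).const_mul 2)).add ((hx.pow 4).const_mul 15)).const_mul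
    (1 / 20)).add ((((hasDerivAt_cosh_mul c x).div_const c).sub
      (((hx.const_mul 2).mul (hasDerivAt_sinh_mul c x)).div_const c)).add
      (((hasDerivAt_cosh_mul c x).const_mul 2).div_const (c ^ 2)))
  refine h.congr_deriv ?_
  rw [radialProfile]
  field_simp
  push_cast; ring

lemma hasDerivAt_marginalDensity {c : ℝ} (hc : c ≠ 0) (x : ℝ) :
    HasDerivAt (marginalDensity c) (-Real.exp (-(c * (x - 1 / 2)))) x := by
  have h := ((((hasDerivAt_id' x).sub_const (1 / 2)).const_mul c).neg.exp).div_const c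
  refine h.congr_deriv ?_
  simp only [Pi.neg_apply]
  field_simp

/-- The angular part of the density has the mass prescribed by the mean condition. -/
lemma integral_angularProfile {c : ℝ} (hc : c ≠ 0)
    (hmean : Real.sinh (c / 2) * (c + 6) = 3 * c * Real.cosh (c / 2)) :
    ∫ θ in (0 : ℝ)..1, θ * (1 - θ) * angularProfile c (θ - 1 / 2) = marginalDensity c 1 := by
  have hd : ∀ x : ℝ, HasDerivAt (fun τ : ℝ =>
      ((-1 / 2 - 3 / c) * τ ^ 2 + (1 / 8 - (-1 / 4 + 1 / c + 6 / c ^ 2) / c)) * Real.sinh (c * τ)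
      + ((-1 / 4 + 1 / c + 6 / c ^ 2) * τ + τ ^ 3) * Real.cosh (c * τ)
      + 3 / 20 * (2 * τ ^ 3 - 4 * τ ^ 5 - τ / 4))
      ((1 / 4 - x ^ 2) * angularProfile c x) x := by
    intro x
    have hx := hasDerivAt_id' x
    have h := (((((hx.pow 2).const_mul (-1 / 2 - 3 / c)).add_const
        (1 / 8 - (-1 / 4 + 1 / c + 6 / c ^ 2) / c)).mul (hasDerivAt_sinh_mul c x)).add
      (((hx.const_mul (-1 / 4 + 1 / c + 6 / c ^ 2)).add (hx.pow 3)).mul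
        (hasDerivAt_cosh_mul c x))).add
      (((((hx.pow 3).const_mul 2).sub ((hx.pow 5).const_mul 4)).sub
        (hx.div_const 4)).const_mul (3 / 20))
    refine h.congr_deriv ?_
    simp only [angularProfile, Pi.add_apply, Pi.pow_apply]
    field_simp
    push_cast; ring
  have h1 : ∀ θ : ℝ, θ * (1 - θ) * angularProfile c (θ - 1 / 2)
      = (fun x => (1 / 4 - x ^ 2) * angularProfile c x) (θ - 1 / 2) := by
    intro θ; simp only; ring
  simp_rw [h1]
  rw [intervalIntegral.integral_comp_sub_right
    (fun x => (1 / 4 - x ^ 2) * angularProfile c x) (1 / 2),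
    intervalIntegral.integral_eq_sub_of_hasDerivAt (fun x _ => hd x)
      (Continuous.intervalIntegrable (by fun_prop) _ _)]
  have e1 : c * ((1 : ℝ) - 1 / 2) = c / 2 := by ring
  have e2 : c * ((0 : ℝ) - 1 / 2) = -(c / 2) := by ring
  rw [marginalDensity, e1, e2, Real.sinh_neg, Real.cosh_neg, ← Real.cosh_sub_sinh]
  field_simp
  linear_combination (-40960) * hmean

lemma integral_simplexDensity_left {c : ℝ} (hc : c ≠ 0)
    (hmean : Real.sinh (c / 2) * (c + 6) = 3 * c * Real.cosh (c / 2)) (u : ℝ) :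
    ∫ θ in (0 : ℝ)..1, simplexDensity c u θ
      = marginalDensity c 1 + u * radialProfile c (1 / 2 - u) := by
  simp only [simplexDensity]
  rw [intervalIntegral.integral_add (Continuous.intervalIntegrable (by fun_prop) _ _)
    (Continuous.intervalIntegrable (by fun_prop) _ _), integral_angularProfile hc hmean]
  simp

lemma integral_simplexDensity_ray {c : ℝ} (hc : c ≠ 0) {s : ℝ} (h0 : 0 < s) (h1 : s < 1) :
    2 * ∫ θ in s..1, θ⁻¹ * simplexDensity c (s / θ) θ
      = marginalDensity c s - marginalDensity c 1 - (1 - s) * radialProfile c (s - 1 / 2) := by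
  have hd : ∀ x ∈ uIcc s 1, HasDerivAt (fun θ => -marginalDensity c θ
      + (1 - θ) * radialProfile c (θ - 1 / 2) + 2 * radialPrimitive c (1 / 2 - θ)
      + 2 * radialPrimitive c (1 / 2 - s / θ)) (2 * (x⁻¹ * simplexDensity c (s / x) x)) x := by
    intro x hx
    rw [uIcc_of_le h1.le] at hx
    have hx0 : x ≠ 0 := (h0.trans_le hx.1).ne'
    have i := hasDerivAt_id' x
    have a1 := hasDerivAt_marginalDensity hc x
    have a2 := (hasDerivAt_radialProfile c (x - 1 / 2)).comp x (i.sub_const (1 / 2))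
    have a3 := (hasDerivAt_radialPrimitive hc (1 / 2 - x)).comp x (i.const_sub (1 / 2))
    have a4 := (hasDerivAt_radialPrimitive hc (1 / 2 - s / x)).comp x
      (((hasDerivAt_const x s).div i hx0).const_sub (1 / 2))
    have h := (((a1.neg.add ((i.const_sub 1).mul a2)).add (a3.const_mul 2)).add (a4.const_mul 2))
    refine h.congr_deriv ?_
    have e : c * (1 / 2 - x) = -(c * (x - 1 / 2)) := by ring
    simp only [simplexDensity, Function.comp_apply]
    generalize radialProfile c (1 / 2 - s / x) = R
    simp only [radialProfile, angularProfile, e, Real.sinh_neg, Real.cosh_neg, Real.exp_neg]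
    rw [← Real.exp_neg, ← Real.cosh_sub_sinh]
    field_simp
    ring
  rw [← intervalIntegral.integral_const_mul, intervalIntegral.integral_eq_sub_of_hasDerivAt hd]
  · rw [div_self h0.ne']; simp only [div_one]; ring_nf
  · apply ContinuousOn.intervalIntegrable
    rw [uIcc_of_le h1.le]
    have : ∀ x ∈ Icc s 1, x ≠ 0 := fun x hx => (h0.trans_le hx.1).ne'
    simp only [simplexDensity]
    have hdiv : ContinuousOn (fun x => s / x) (Icc s 1) :=
      continuousOn_const.div continuousOn_id this
    have h2 : ContinuousOn (fun x => radialProfile c (1 / 2 - s / x)) (Icc s 1) :=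
      (continuous_radialProfile c).comp_continuousOn (continuousOn_const.sub hdiv)
    exact continuousOn_const.mul ((continuousOn_id.inv₀ this).mul
      ((Continuous.continuousOn (by fun_prop)).add (hdiv.mul h2)))

/-- A comparison principle via derivatives. -/
lemma le_of_hasDerivAt_le {f g f' g' : ℝ → ℝ} (hf : ∀ x, HasDerivAt f (f' x) x)
    (hg : ∀ x, HasDerivAt g (g' x) x) (h0 : f 0 ≤ g 0) {a : ℝ}
    (h : ∀ x, 0 ≤ x → x ≤ a → f' x ≤ g' x) {x : ℝ} (hx : 0 ≤ x) (hxa : x ≤ a) : f x ≤ g x := by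
  have hd : ∀ x, HasDerivAt (fun y => g y - f y) (g' x - f' x) x := fun x => (hg x).sub (hf x)
  have hm : MonotoneOn (fun y => g y - f y) (Icc 0 a) := by
    refine monotoneOn_of_hasDerivWithinAt_nonneg (f' := fun x => g' x - f' x) (convex_Icc 0 a)
      (fun x _ => (hd x).continuousAt.continuousWithinAt) (fun x _ => (hd x).hasDerivWithinAt) ?_
    intro x hx
    rw [interior_Icc] at hx
    linarith [h x hx.1.le hx.2.le]
  have := hm ⟨le_rfl, hx.trans hxa⟩ ⟨hx, hxa⟩ hx
  simp only at this
  linarith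

lemma cosh_sinh_upper {y : ℝ} (hy : 0 ≤ y) (hy1 : y ≤ 11 / 10) :
    Real.cosh y ≤ 1 + y ^ 2 / 2 + 77 / 1000 * y ^ 4 ∧
      Real.sinh y ≤ y + y ^ 3 / 6 + 77 / 5000 * y ^ 5 := by
  have hc (x : ℝ) : HasDerivAt Real.cosh (Real.sinh x) x := Real.hasDerivAt_cosh x
  have hs (x : ℝ) : HasDerivAt Real.sinh (Real.cosh x) x := Real.hasDerivAt_sinh x
  have b0 : ∀ x : ℝ, 0 ≤ x → x ≤ 11 / 10 → Real.cosh x ≤ 924 / 500 := by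
    intro x h0 h1
    refine (Real.cosh_le_exp_half_sq x).trans ?_
    have h2 : Real.exp (x ^ 2 / 2) ≤ Real.exp (121 / 200) := Real.exp_le_exp.2 (by nlinarith)
    have h3 := Real.exp_bound' (x := 121 / 200) (n := 5) (by norm_num) (by norm_num) (by norm_num)
    norm_num [Finset.sum_range_succ, Nat.factorial] at h3
    linarith
  have p (n : ℕ) (a x : ℝ) : HasDerivAt (fun y : ℝ => a * y ^ n) (a * (n * x ^ (n - 1))) x :=
    (hasDerivAt_pow n x).const_mul a
  have b1 : ∀ x : ℝ, 0 ≤ x → x ≤ 11 / 10 → Real.sinh x ≤ 924 / 500 * x ^ 1 := fun x h0 h1 =>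
    le_of_hasDerivAt_le hs (p 1 _) (by simp) (fun x h0 h1 => by simpa using b0 x h0 h1) h0 h1
  have b2 : ∀ x : ℝ, 0 ≤ x → x ≤ 11 / 10 → Real.cosh x ≤ 1 + 462 / 500 * x ^ 2 := fun x h0 h1 =>
    le_of_hasDerivAt_le hc (fun x => (p 2 (462 / 500) x).const_add 1) (by simp)
      (fun x h0 h1 => (b1 x h0 h1).trans (by norm_num; linarith)) h0 h1
  have b3 : ∀ x : ℝ, 0 ≤ x → x ≤ 11 / 10 → Real.sinh x ≤ 1 * x ^ 1 + 154 / 500 * x ^ 3 :=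
    fun x h0 h1 => le_of_hasDerivAt_le hs (fun x => (p 1 1 x).add (p 3 (154 / 500) x)) (by simp)
      (fun x h0 h1 => (b2 x h0 h1).trans (by norm_num; linarith)) h0 h1
  have b4 : ∀ x : ℝ, 0 ≤ x → x ≤ 11 / 10 →
      Real.cosh x ≤ 1 + 1 / 2 * x ^ 2 + 77 / 1000 * x ^ 4 := fun x h0 h1 =>
    le_of_hasDerivAt_le hc (fun x => ((p 2 (1 / 2) x).const_add 1).add (p 4 (77 / 1000) x))
      (by simp) (fun x h0 h1 => (b3 x h0 h1).trans (by norm_num; linarith)) h0 h1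
  have b5 : ∀ x : ℝ, 0 ≤ x → x ≤ 11 / 10 →
      Real.sinh x ≤ 1 * x ^ 1 + 1 / 6 * x ^ 3 + 77 / 5000 * x ^ 5 := fun x h0 h1 =>
    le_of_hasDerivAt_le hs (fun x => ((p 1 1 x).add (p 3 (1 / 6) x)).add (p 5 (77 / 5000) x))
      (by simp) (fun x h0 h1 => (b4 x h0 h1).trans (by norm_num; linarith)) h0 h1
  exact ⟨by linarith [b4 y hy hy1], by linarith [b5 y hy hy1]⟩

lemma cosh_lower {y : ℝ} (hy : 0 ≤ y) : 1 + y ^ 2 / 2 ≤ Real.cosh y := by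
  have h := le_of_hasDerivAt_le (fun x => (((hasDerivAt_pow 2 x).div_const 2).const_add 1))
    Real.hasDerivAt_cosh (by simp) (a := y) (fun x hx _ => ?_) hy le_rfl
  · exact h
  · have := Real.self_le_sinh_iff.2 hx
    norm_num; linarith

lemma sinh_lower {y : ℝ} (hy : 0 ≤ y) : y + y ^ 3 / 6 ≤ Real.sinh y := by
  have p (n : ℕ) (a x : ℝ) : HasDerivAt (fun y : ℝ => a * y ^ n) (a * (n * x ^ (n - 1))) x :=
    (hasDerivAt_pow n x).const_mul a
  have h := le_of_hasDerivAt_le (fun x => (p 1 1 x).add (p 3 (1 / 6) x)) Real.hasDerivAt_sinh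
    (by simp) (a := y) (fun x hx _ => ?_) hy le_rfl
  · simp only [Pi.add_apply] at h; linarith
  · have := cosh_lower hx
    norm_num; linarith

lemma angularProfile_nonneg {c : ℝ} (h1 : 107 / 50 ≤ c) (h2 : c ≤ 54 / 25) {τ : ℝ}
    (hτ : |τ| ≤ 1 / 2) : 0 ≤ angularProfile c τ := by
  have key : angularProfile c τ = angularProfile c |τ| := by
    rcases abs_cases τ with ⟨h, _⟩ | ⟨h, _⟩ <;> rw [h]
    simp only [angularProfile, mul_neg, Real.cosh_neg, Real.sinh_neg]; ring
  rw [key, angularProfile]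
  have ht := abs_nonneg τ
  generalize |τ| = t at *
  have hs : 0 ≤ Real.sinh (c * t) := Real.sinh_nonneg_iff.2 (by positivity)
  have he : Real.cosh (c * t) - Real.sinh (c * t) = Real.exp (-(c * t)) := Real.cosh_sub_sinh _
  have hl : 1 / 5 ≤ Real.exp (-(c * t)) := by
    have : Real.exp (-1.1) ≤ Real.exp (-(c * t)) := Real.exp_le_exp.2 (by nlinarith)
    have h3 : (0.45 : ℝ) ≤ Real.exp (-0.55) := by linarith [Real.add_one_le_exp (-0.55 : ℝ)]
    have h4 : Real.exp (-1.1) = Real.exp (-0.55) * Real.exp (-0.55) := by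
      rw [← Real.exp_add]; norm_num
    nlinarith
  have hm : 1 / 5 ≤ Real.cosh (c * t) - 2 * t * Real.sinh (c * t) := by nlinarith
  nlinarith [sq_nonneg t]

lemma radialProfile_nonneg {c : ℝ} (h1 : 107 / 50 ≤ c) (h2 : c ≤ 54 / 25) {τ : ℝ}
    (hτ : |τ| ≤ 1 / 2) : 0 ≤ radialProfile c τ := by
  have hβ1 : 2.945 ≤ c ^ 2 - c ^ 3 / 6 := by
    nlinarith [mul_nonneg (sub_nonneg.2 h1) (sub_nonneg.2 h2), mul_nonneg (mul_nonneg
      (sub_nonneg.2 h1) (sub_nonneg.2 h2)) (show 0 ≤ c by linarith)]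
  have hβ2 : c ^ 2 - c ^ 3 / 6 ≤ 3 := by
    nlinarith [mul_nonneg (sub_nonneg.2 h1) (sub_nonneg.2 h2), mul_nonneg (mul_nonneg
      (sub_nonneg.2 h1) (sub_nonneg.2 h2)) (show 0 ≤ c by linarith)]
  have hc4 : c ^ 4 ≤ 22 := by
    calc c ^ 4 ≤ (54 / 25) ^ 4 := by gcongr
      _ ≤ 22 := by norm_num
  have hc5 : c ^ 5 ≤ 48 := by
    calc c ^ 5 ≤ (54 / 25) ^ 5 := by gcongr
      _ ≤ 48 := by norm_num
  rw [abs_le] at hτ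
  rcases le_total 0 τ with h0 | h0
  · have hy : c * τ ≤ 11 / 10 := by nlinarith
    have hy0 : 0 ≤ c * τ := by positivity
    have hc := (cosh_sinh_upper hy0 hy).1
    have hs := sinh_lower hy0
    have hc' := mul_le_mul_of_nonneg_left hc (show 0 ≤ 2 * τ by positivity)
    have h3 : (c ^ 2 - c ^ 3 / 6) * τ ^ 3 ≤ 3 * τ ^ 3 := by gcongr
    have h5 : c ^ 4 * τ ^ 5 ≤ 22 * τ ^ 5 := by gcongr
    have h7 : τ ^ 5 ≤ τ ^ 2 / 8 := by
      have : τ ^ 3 ≤ (1 / 2) ^ 3 := by gcongr; exact hτ.2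
      nlinarith [sq_nonneg τ]
    rw [radialProfile]
    nlinarith
  · obtain ⟨t, rfl⟩ : ∃ t, τ = -t := ⟨-τ, by ring⟩
    have ht : 0 ≤ t := by linarith
    have ht2 : t ≤ 1 / 2 := by linarith
    have hy : c * t ≤ 11 / 10 := by nlinarith
    have hy0 : 0 ≤ c * t := by positivity
    have hs := (cosh_sinh_upper hy0 hy).2
    have hc := cosh_lower hy0
    have hc' := mul_le_mul_of_nonneg_left hc (show 0 ≤ 2 * t by positivity)
    have h3 : 2.945 * t ^ 3 ≤ (c ^ 2 - c ^ 3 / 6) * t ^ 3 := by gcongr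
    have h5 : c ^ 5 * t ^ 5 ≤ 48 * t ^ 5 := by gcongr
    have h6 : t ^ 3 ≤ t ^ 2 / 2 := by nlinarith [sq_nonneg t]
    have h7 : t ^ 5 ≤ t ^ 2 / 8 := by
      have : t ^ 3 ≤ (1 / 2) ^ 3 := by gcongr
      nlinarith [sq_nonneg t]
    have hl : c * t ≤ 54 / 25 * t := by gcongr
    simp only [radialProfile, mul_neg, Real.cosh_neg, Real.sinh_neg]
    nlinarith [sq_nonneg (t - 3 / 10)]

lemma simplexDensity_nonneg {c : ℝ} (h1 : 107 / 50 ≤ c) (h2 : c ≤ 54 / 25) {u θ : ℝ}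
    (hu : u ∈ Icc (0 : ℝ) 1) (hθ : θ ∈ Icc (0 : ℝ) 1) : 0 ≤ simplexDensity c u θ := by
  have a := angularProfile_nonneg h1 h2 (τ := θ - 1 / 2)
    (abs_le.2 ⟨by linarith [hθ.1], by linarith [hθ.2]⟩)
  have b := radialProfile_nonneg h1 h2 (τ := 1 / 2 - u)
    (abs_le.2 ⟨by linarith [hu.2], by linarith [hu.1]⟩)
  have d : 0 ≤ 1 - θ := sub_nonneg.2 hθ.2
  rw [simplexDensity]
  have := hu.1
  have := hθ.1
  positivity

/-- Numerical location of the root of `exp c * (3 - c) = 3 + 2 * c`. -/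
lemma root_bounds {c : ℝ} (h0 : 3 / 4 < c) (h3 : c < 3)
    (hc : c + Real.log (3 - c) - Real.log (3 + 2 * c) = 0) : 107 / 50 ≤ c ∧ c ≤ 54 / 25 := by
  set ρ : ℝ → ℝ := fun x => x + Real.log (3 - x) - Real.log (3 + 2 * x) with hρ
  have hd : ∀ x, 0 ≤ x → x < 3 → HasDerivAt ρ (x * (3 - 2 * x) / ((3 - x) * (3 + 2 * x))) x := by
    intro x hx0 hx3
    have i := hasDerivAt_id' x
    have p1 : 3 - x ≠ 0 := by linarith
    have p2 : 3 + 2 * x ≠ 0 := by linarith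
    have h := (i.add ((i.const_sub 3).log p1)).sub (((i.const_mul 2).const_add 3).log p2)
    refine h.congr_deriv ?_
    field_simp
    ring
  have hanti : StrictAntiOn ρ (Ico (3 / 2) 3) := by
    refine strictAntiOn_of_deriv_neg (convex_Ico _ _)
      (fun x hx => (hd x (by linarith [hx.1]) hx.2).continuousAt.continuousWithinAt) ?_
    intro x hx
    rw [interior_Ico] at hx
    rw [(hd x (by linarith [hx.1]) hx.2).deriv]
    apply div_neg_of_neg_of_pos <;> nlinarith [hx.1, hx.2]
  have hmono : StrictMonoOn ρ (Icc 0 (3 / 2)) := by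
    refine strictMonoOn_of_deriv_pos (convex_Icc _ _)
      (fun x hx => (hd x hx.1 (by linarith [hx.2])).continuousAt.continuousWithinAt) ?_
    intro x hx
    rw [interior_Icc] at hx
    rw [(hd x hx.1.le (by linarith [hx.2])).deriv]
    apply div_pos <;> nlinarith [hx.1, hx.2]
  have hρ0 : ρ 0 = 0 := by simp [hρ]
  have hρc : ρ c = 0 := hc
  have hc32 : 3 / 2 ≤ c := by
    by_contra! h
    have := hmono (left_mem_Icc.2 (by norm_num)) ⟨by linarith, h.le⟩ (show 0 < c by linarith)
    linarith
  have e1 := Real.exp_one_gt_d9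
  have e2 := Real.exp_one_lt_d9
  have hlo : 0 < ρ (107 / 50) := by
    have h : Real.log (3 + 2 * (107 / 50)) < Real.log (Real.exp (107 / 50) * (3 - 107 / 50)) := by
      apply Real.log_lt_log (by norm_num)
      have h4 := Real.quadratic_le_exp_of_nonneg (x := 7 / 50) (by norm_num)
      have h5 : Real.exp (107 / 50) = Real.exp 1 ^ 2 * Real.exp (7 / 50) := by
        rw [← Real.exp_nat_mul, ← Real.exp_add]; norm_num
      have h6 : (7.389 : ℝ) ≤ Real.exp 1 ^ 2 := by nlinarith
      have h7 : (7.389 : ℝ) * (1 + 7 / 50 + (7 / 50) ^ 2 / 2)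
          ≤ Real.exp 1 ^ 2 * Real.exp (7 / 50) :=
        mul_le_mul h6 h4 (by norm_num) (by positivity)
      rw [h5]; linarith
    rw [Real.log_mul (Real.exp_pos _).ne' (by norm_num), Real.log_exp] at h
    simp only [hρ]; linarith
  have hhi : ρ (54 / 25) < 0 := by
    have h : Real.log (Real.exp (54 / 25) * (3 - 54 / 25)) < Real.log (3 + 2 * (54 / 25)) := by
      apply Real.log_lt_log (by norm_num [Real.exp_pos])
      have h4 := Real.exp_bound' (x := 4 / 25) (n := 4) (by norm_num) (by norm_num) (by norm_num)
      norm_num [Finset.sum_range_succ, Nat.factorial] at h4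
      have h5 : Real.exp (54 / 25) = Real.exp 1 ^ 2 * Real.exp (4 / 25) := by
        rw [← Real.exp_nat_mul, ← Real.exp_add]; norm_num
      have h6 : Real.exp 1 ^ 2 ≤ 7.38906 := by nlinarith
      have h7 := mul_le_mul h6 h4 (Real.exp_pos _).le (by norm_num)
      rw [h5]; linarith
    rw [Real.log_mul (Real.exp_pos _).ne' (by norm_num), Real.log_exp] at h
    simp only [hρ]; linarith
  constructor
  · by_contra! h
    have := hanti ⟨hc32, h3⟩ ⟨by norm_num, by norm_num⟩ h
    linarith
  · by_contra! h
    have := hanti ⟨by norm_num, by norm_num⟩ ⟨hc32, h3⟩ h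
    linarith

lemma lintegral_Ioo_reflect (g : ℝ → ENNReal) :
    ∫⁻ u in Ioo (0 : ℝ) 1, g (1 - u) = ∫⁻ u in Ioo (0 : ℝ) 1, g u := by
  have h := (volume.measurePreserving_sub_left (1 : ℝ)).setLIntegral_comp_preimage_emb
    (MeasurableEquiv.subLeft (1 : ℝ)).measurableEmbedding g (Ioo 0 1)
  simpa using h

lemma lintegral_Ioo_scale (g : ℝ → ENNReal) {θ : ℝ} (hθ : 0 < θ) :
    ∫⁻ u in Ioo (0 : ℝ) 1, g u = ∫⁻ s in Ioo 0 θ, ENNReal.ofReal θ⁻¹ * g (s / θ) := by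
  have himg : (fun s : ℝ => s / θ) '' Ioo 0 θ = Ioo 0 1 := by
    ext x
    simp only [mem_image, mem_Ioo]
    constructor
    · rintro ⟨s, hs, rfl⟩
      exact ⟨div_pos hs.1 hθ, (div_lt_one hθ).2 hs.2⟩
    · intro hx
      exact ⟨x * θ, ⟨mul_pos hx.1 hθ, mul_lt_of_lt_one_left hθ hx.2⟩,
        mul_div_cancel_right₀ x hθ.ne'⟩
  have h := lintegral_image_eq_lintegral_abs_deriv_mul (s := Ioo 0 θ) measurableSet_Ioo
    (f := fun s => s / θ) (f' := fun _ => θ⁻¹)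
    (fun x _ => by simpa using ((hasDerivAt_id x).div_const θ).hasDerivWithinAt)
    (fun x _ y _ hxy => by simpa [hθ.ne'] using hxy) g
  rw [himg, abs_of_pos (inv_pos.2 hθ)] at h
  exact h

lemma lintegral_ray {ψ : ℝ → ENNReal} (hψ : Measurable ψ) {W : ℝ → ℝ → ENNReal}
    (hW : Measurable fun p : ℝ × ℝ => W p.1 p.2) :
    ∫⁻ u in Ioo (0 : ℝ) 1, ∫⁻ θ in Ioo (0 : ℝ) 1, ψ (u * θ) * W u θ
      = ∫⁻ s in Ioo (0 : ℝ) 1, ψ s * ∫⁻ θ in Ioo s 1, ENNReal.ofReal θ⁻¹ * W (s / θ) θ := by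
  have hW' : Measurable fun p : ℝ × ℝ => W (p.2 / p.1) p.1 :=
    hW.comp ((measurable_snd.div measurable_fst).prodMk measurable_fst)
  have hK : Measurable fun p : ℝ × ℝ =>
      ψ p.2 * (ENNReal.ofReal p.1⁻¹ * W (p.2 / p.1) p.1) :=
    (hψ.comp measurable_snd).mul (measurable_fst.inv.ennreal_ofReal.mul hW')
  rw [lintegral_lintegral_swap]
  · calc ∫⁻ θ in Ioo (0 : ℝ) 1, ∫⁻ u in Ioo (0 : ℝ) 1, ψ (u * θ) * W u θ
        = ∫⁻ θ in Ioo (0 : ℝ) 1, ∫⁻ s in Ioo (0 : ℝ) 1, {p : ℝ × ℝ | p.2 < p.1}.indicator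
            (fun p => ψ p.2 * (ENNReal.ofReal p.1⁻¹ * W (p.2 / p.1) p.1)) (θ, s) := by
          refine setLIntegral_congr_fun measurableSet_Ioo fun θ hθ => ?_
          have hsub : Ioo (0 : ℝ) 1 ∩ Iio θ = Ioo 0 θ := by
            ext x; simp only [mem_inter_iff, mem_Ioo, mem_Iio]
            exact ⟨fun h => ⟨h.1.1, h.2⟩, fun h => ⟨⟨h.1, h.2.trans hθ.2⟩, h.2⟩⟩
          rw [lintegral_Ioo_scale _ hθ.1, ← hsub, inter_comm,
            ← setLIntegral_indicator measurableSet_Iio]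
          refine lintegral_congr fun s => ?_
          by_cases h : s < θ
          · rw [indicator_of_mem (show s ∈ Iio θ from h),
              indicator_of_mem (show (θ, s) ∈ {p : ℝ × ℝ | p.2 < p.1} from h),
              div_mul_cancel₀ _ hθ.1.ne']
            ring
          · rw [indicator_of_notMem (show s ∉ Iio θ from h),
              indicator_of_notMem (show (θ, s) ∉ {p : ℝ × ℝ | p.2 < p.1} from h)]
      _ = ∫⁻ s in Ioo (0 : ℝ) 1, ψ s * ∫⁻ θ in Ioo s 1, ENNReal.ofReal θ⁻¹ * W (s / θ) θ := by
          rw [lintegral_lintegral_swap]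
          · refine setLIntegral_congr_fun measurableSet_Ioo fun s hs => ?_
            have hsub : Ioi s ∩ Ioo (0 : ℝ) 1 = Ioo s 1 := by
              ext x; simp only [mem_inter_iff, mem_Ioo, mem_Ioi]
              exact ⟨fun h => ⟨h.1, h.2.2⟩, fun h => ⟨h.1, hs.1.trans h.1, h.2⟩⟩
            rw [← lintegral_const_mul, ← hsub, ← setLIntegral_indicator measurableSet_Ioi]
            · refine lintegral_congr fun θ => ?_
              by_cases h : s < θ
              · rw [indicator_of_mem (show θ ∈ Ioi s from h),
                  indicator_of_mem (show (θ, s) ∈ {p : ℝ × ℝ | p.2 < p.1} from h)]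
              · rw [indicator_of_notMem (show θ ∉ Ioi s from h),
                  indicator_of_notMem (show (θ, s) ∉ {p : ℝ × ℝ | p.2 < p.1} from h)]
            · exact measurable_id.inv.ennreal_ofReal.mul
                (hW'.comp (measurable_id.prodMk measurable_const))
          · exact (hK.indicator (measurableSet_lt measurable_snd measurable_fst)).aemeasurable
  · exact ((hψ.comp (measurable_fst.mul measurable_snd)).mul hW).aemeasurable

lemma lintegral_simplexDensity_marginals {c : ℝ} (h1 : 107 / 50 ≤ c) (h2 : c ≤ 54 / 25)
    (hmean : Real.sinh (c / 2) * (c + 6) = 3 * c * Real.cosh (c / 2))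
    {ψ : ℝ → ENNReal} (hψ : Measurable ψ) :
    ∫⁻ u in Ioo (0 : ℝ) 1, ∫⁻ θ in Ioo (0 : ℝ) 1,
        (ψ (1 - u) + ψ (u * θ) + ψ (u * (1 - θ))) * ENNReal.ofReal (simplexDensity c u θ)
      = ∫⁻ s in Ioo (0 : ℝ) 1, ψ s * ENNReal.ofReal (marginalDensity c s) := by
  have hc : c ≠ 0 := by linarith
  set W : ℝ → ℝ → ENNReal := fun u θ => ENNReal.ofReal (simplexDensity c u θ) with hWdef
  have hW : Measurable fun p : ℝ × ℝ => W p.1 p.2 :=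
    (continuous_simplexDensity c).measurable.ennreal_ofReal
  have hWu (u : ℝ) : Measurable (W u) := hW.comp (measurable_const.prodMk measurable_id)
  have m2 : Measurable fun p : ℝ × ℝ => ψ (p.1 * p.2) * W p.1 p.2 :=
    (hψ.comp (measurable_fst.mul measurable_snd)).mul hW
  have hthird (u : ℝ) : ∫⁻ θ in Ioo (0 : ℝ) 1, ψ (u * (1 - θ)) * W u θ
      = ∫⁻ θ in Ioo (0 : ℝ) 1, ψ (u * θ) * W u θ := by
    rw [← lintegral_Ioo_reflect fun θ => ψ (u * θ) * W u θ]
    simp only [hWdef, simplexDensity_symm]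
  have hsplit (u : ℝ) : ∫⁻ θ in Ioo (0 : ℝ) 1, (ψ (1 - u) + ψ (u * θ) + ψ (u * (1 - θ))) * W u θ
      = ψ (1 - u) * (∫⁻ θ in Ioo (0 : ℝ) 1, W u θ)
        + 2 * ∫⁻ θ in Ioo (0 : ℝ) 1, ψ (u * θ) * W u θ := by
    simp only [add_mul]
    rw [lintegral_add_left, lintegral_add_left, hthird, lintegral_const_mul _ (hWu u), two_mul,
      add_assoc]
    · exact (hWu u).const_mul _
    · exact ((hWu u).const_mul _).add (m2.comp (measurable_const.prodMk measurable_id))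
  have hleft (u : ℝ) (hu : u ∈ Ioo (0 : ℝ) 1) : ∫⁻ θ in Ioo (0 : ℝ) 1, W u θ
      = ENNReal.ofReal (marginalDensity c 1 + u * radialProfile c (1 / 2 - u)) := by
    rw [← integral_simplexDensity_left hc hmean, intervalIntegral.integral_of_le zero_le_one,
      integral_Ioc_eq_integral_Ioo, ofReal_integral_eq_lintegral_ofReal]
    · have : Continuous (simplexDensity c u) :=
        (continuous_simplexDensity c).comp (by fun_prop : Continuous fun θ : ℝ => (u, θ))
      exact (this.integrableOn_Icc (a := 0) (b := 1)).mono_set Ioo_subset_Icc_self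
    · filter_upwards [ae_restrict_mem measurableSet_Ioo] with θ hθ
      exact simplexDensity_nonneg h1 h2 ⟨hu.1.le, hu.2.le⟩ ⟨hθ.1.le, hθ.2.le⟩
  have hright (s : ℝ) (hs : s ∈ Ioo (0 : ℝ) 1) :
      2 * ∫⁻ θ in Ioo s 1, ENNReal.ofReal θ⁻¹ * W (s / θ) θ = ENNReal.ofReal
        (marginalDensity c s - marginalDensity c 1 - (1 - s) * radialProfile c (s - 1 / 2)) := by
    rw [← integral_simplexDensity_ray hc hs.1 hs.2, intervalIntegral.integral_of_le hs.2.le,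
      integral_Ioc_eq_integral_Ioo, ENNReal.ofReal_mul zero_le_two,
      ofReal_integral_eq_lintegral_ofReal]
    · rw [ENNReal.ofReal_ofNat]
      congr 1
      refine setLIntegral_congr_fun measurableSet_Ioo fun θ hθ => ?_
      rw [ENNReal.ofReal_mul (inv_nonneg.2 (hs.1.trans hθ.1).le)]
    · have hne : ∀ x ∈ Icc s 1, x ≠ 0 := fun x hx => (hs.1.trans_le hx.1).ne'
      have hcont : ContinuousOn (fun θ => θ⁻¹ * simplexDensity c (s / θ) θ) (Icc s 1) :=
        (continuousOn_id.inv₀ hne).mul ((continuous_simplexDensity c).comp_continuousOn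
          ((continuousOn_const.div continuousOn_id hne).prodMk continuousOn_id))
      exact hcont.integrableOn_Icc.mono_set Ioo_subset_Icc_self
    · filter_upwards [ae_restrict_mem measurableSet_Ioo] with θ hθ
      have hθ0 := hs.1.trans hθ.1
      exact mul_nonneg (inv_nonneg.2 hθ0.le) (simplexDensity_nonneg h1 h2
        ⟨(div_pos hs.1 hθ0).le, (div_le_one hθ0).2 hθ.1.le⟩ ⟨hθ0.le, hθ.2.le⟩)
  have hmW : Measurable fun u => ∫⁻ θ in Ioo (0 : ℝ) 1, W u θ := hW.lintegral_prod_right'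
  have hmψ : Measurable fun u => ψ (1 - u) * ∫⁻ θ in Ioo (0 : ℝ) 1, W u θ :=
    (hψ.comp (measurable_const.sub measurable_id)).mul hmW
  rw [lintegral_congr hsplit, lintegral_add_left hmψ,
    lintegral_const_mul _ m2.lintegral_prod_right', lintegral_ray hψ hW,
    ← lintegral_Ioo_reflect fun u => ψ (1 - u) * ∫⁻ θ in Ioo (0 : ℝ) 1, W u θ,
    ← lintegral_const_mul', ← lintegral_add_left]
  · refine setLIntegral_congr_fun measurableSet_Ioo fun s hs => ?_
    have hs' : 1 - s ∈ Ioo (0 : ℝ) 1 := ⟨by linarith [hs.2], by linarith [hs.1]⟩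
    have hφ : 0 ≤ radialProfile c (s - 1 / 2) := radialProfile_nonneg h1 h2
      (abs_le.2 ⟨by linarith [hs.1], by linarith [hs.2]⟩)
    simp only [sub_sub_cancel]
    rw [mul_left_comm, hright s hs, hleft _ hs', ← mul_add, ← ENNReal.ofReal_add]
    · congr 2; ring_nf
    · have : 0 ≤ marginalDensity c 1 := div_nonneg (Real.exp_pos _).le (by linarith)
      have h3 : 1 / 2 - (1 - s) = s - 1 / 2 := by ring
      rw [h3]
      have := mul_nonneg hs'.1.le hφ
      linarith
    · rw [← integral_simplexDensity_ray hc hs.1 hs.2]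
      refine mul_nonneg zero_le_two (intervalIntegral.integral_nonneg hs.2.le fun θ hθ => ?_)
      have hθ0 := hs.1.trans_le hθ.1
      exact mul_nonneg (inv_nonneg.2 hθ0.le) (simplexDensity_nonneg h1 h2
        ⟨(div_pos hs.1 hθ0).le, (div_le_one hθ0).2 hθ.1⟩ ⟨hθ0.le, hθ.2⟩)
  · exact (hψ.comp (by fun_prop)).mul (hmW.comp (by fun_prop))
  · exact ENNReal.ofNat_ne_top

lemma lintegral_exp_param {l r c : ℝ} (hr : 0 < r) (hc : 0 < c) (hl : r * Real.exp (-c) = l)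
    (ψ : ℝ → ENNReal) :
    ∫⁻ s in Ioo (0 : ℝ) 1, ENNReal.ofReal (c * (r * Real.exp (-(c * s))))
      * ψ (r * Real.exp (-(c * s))) = ∫⁻ x in Ioo l r, ψ x := by
  have hanti : StrictAnti fun s : ℝ => r * Real.exp (-(c * s)) := fun a b hab =>
    mul_lt_mul_of_pos_left (Real.exp_lt_exp.2 (neg_lt_neg (mul_lt_mul_of_pos_left hab hc))) hr
  have himg : (fun s : ℝ => r * Real.exp (-(c * s))) '' Ioo 0 1 = Ioo l r := by
    apply Subset.antisymm
    · rintro _ ⟨s, hs, rfl⟩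
      have a := hanti hs.1
      have b := hanti hs.2
      simp only [mul_one, mul_zero, neg_zero, Real.exp_zero, hl] at a b
      exact ⟨b, a⟩
    · have h := intermediate_value_Ioo' (zero_le_one (α := ℝ))
        (f := fun s : ℝ => r * Real.exp (-(c * s))) (by fun_prop)
      simpa [hl] using h
  rw [← himg, lintegral_image_eq_lintegral_abs_deriv_mul measurableSet_Ioo
    (f' := fun s => -(c * (r * Real.exp (-(c * s))))) _ hanti.injective.injOn]
  · simp only [abs_neg]
    refine lintegral_congr fun s => ?_
    rw [abs_of_pos (by positivity)]
  · intro x _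
    have h : HasDerivAt (fun s => -(c * s)) (-(c * 1)) x := ((hasDerivAt_id' x).const_mul c).neg
    exact ((h.exp.const_mul r).congr_deriv (by ring)).hasDerivWithinAt

lemma measurableSet_Mset (l : ℝ) : MeasurableSet (Mset l) := by
  have h : {p : ℝ × ℝ × ℝ | ∃ t, 0 ≤ t ∧ t ≤ l ∧
      (p = (t, 1 - 2*t, 1 - 2*t) ∨ p = (1 - 2*t, t, 1 - 2*t) ∨ p = (1 - 2*t, 1 - 2*t, t))}
      = (fun t : ℝ => (t, 1 - 2*t, 1 - 2*t)) '' Icc 0 l ∪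
        ((fun t : ℝ => (1 - 2*t, t, 1 - 2*t)) '' Icc 0 l ∪
          (fun t : ℝ => (1 - 2*t, 1 - 2*t, t)) '' Icc 0 l) := by
    ext p
    simp only [mem_ofPred_eq, mem_union, mem_image, mem_Icc, ← exists_or]
    refine exists_congr fun t => ?_
    simp only [eq_comm (a := p)]
    tauto
  refine MeasurableSet.union ?_ ?_
  · rw [h]
    exact ((isCompact_Icc.image (by fun_prop)).measurableSet).union
      (((isCompact_Icc.image (by fun_prop)).measurableSet).union
        ((isCompact_Icc.image (by fun_prop)).measurableSet))
  · apply IsClosed.measurableSet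
    iterate 6 refine IsClosed.and (isClosed_le (by fun_prop) (by fun_prop)) ?_
    exact isClosed_eq (by fun_prop) (by fun_prop)

lemma lintegral_Ioo_affine {l : ℝ} (ψ : ℝ → ENNReal) :
    2 * ∫⁻ t in Ioo 0 l, ψ (1 - 2 * t) = ∫⁻ x in Ioo (1 - 2 * l) 1, ψ x := by
  have himg : (fun t : ℝ => 1 - 2 * t) '' Ioo 0 l = Ioo (1 - 2 * l) 1 := by
    ext x
    simp only [mem_image, mem_Ioo]
    constructor
    · rintro ⟨t, ht, rfl⟩; constructor <;> linarith [ht.1, ht.2]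
    · intro hx; exact ⟨(1 - x) / 2, ⟨by linarith, by linarith⟩, by ring⟩
  rw [← himg, lintegral_image_eq_lintegral_abs_deriv_mul measurableSet_Ioo
    (f' := fun _ => -2) _ (fun x _ y _ h => by simpa using h)]
  · rw [abs_neg, abs_two, ENNReal.ofReal_ofNat, lintegral_const_mul' _ _ ENNReal.ofNat_ne_top]
  · intro x _
    have h := (((hasDerivAt_id' x).const_mul (2 : ℝ)).const_sub 1).hasDerivWithinAt (s := Ioo 0 l)
    simpa using h

/-- The segments contribute the marginals outside `[l, 1 - 2 * l]`. -/
lemma exists_measure_segments {l : ℝ} :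
    ∃ ρ : Measure (ℝ × ℝ × ℝ), ρ (Mset l)ᶜ = 0 ∧ ∀ ψ : ℝ → ENNReal, Measurable ψ →
      ∫⁻ p, (ψ p.1 + ψ p.2.1 + ψ p.2.2) ∂ρ
        = (∫⁻ x in Ioo 0 l, ψ x) + ∫⁻ x in Ioo (1 - 2 * l) 1, ψ x := by
  have hm : Measurable fun t : ℝ => (t, 1 - 2 * t, 1 - 2 * t) := by fun_prop
  refine ⟨(volume.restrict (Ioo 0 l)).map fun t => (t, 1 - 2 * t, 1 - 2 * t), ?_, ?_⟩
  · refine (ae_map_iff hm.aemeasurable (measurableSet_Mset l)).2 ?_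
    filter_upwards [ae_restrict_mem measurableSet_Ioo] with t ht
    exact Or.inl ⟨t, ht.1.le, ht.2.le, Or.inl rfl⟩
  · intro ψ hψ
    rw [lintegral_map (by fun_prop) hm]
    simp only [add_assoc, ← two_mul]
    rw [lintegral_add_left hψ, lintegral_const_mul' _ _ ENNReal.ofNat_ne_top, lintegral_Ioo_affine]

/-- The two-dimensional piece contributes the marginals on `[l, 1 - 2 * l]`. -/
lemma exists_measure_surface {l c : ℝ} (hc1 : 107 / 50 ≤ c) (hc2 : c ≤ 54 / 25)
    (hmean : Real.sinh (c / 2) * (c + 6) = 3 * c * Real.cosh (c / 2))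
    (hr : 0 < 1 - 2 * l) (hl : (1 - 2 * l) * Real.exp (-c) = l) :
    ∃ ρ : Measure (ℝ × ℝ × ℝ), ρ (Mset l)ᶜ = 0 ∧ ∀ ψ : ℝ → ENNReal, Measurable ψ →
      ∫⁻ p, (ψ p.1 + ψ p.2.1 + ψ p.2.2) ∂ρ = ∫⁻ x in Ioo l (1 - 2 * l), ψ x := by
  have hc0 : 0 < c := by linarith
  set X : ℝ → ℝ := fun s => (1 - 2 * l) * Real.exp (-(c * s)) with hX
  have hXm : Measurable X := by fun_prop
  set g : ℝ × ℝ → ℝ × ℝ × ℝ := fun q => (X (1 - q.1), X (q.1 * q.2), X (q.1 * (1 - q.2))) with hg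
  have hgm : Measurable g := by fun_prop
  set A : ℝ := c ^ 2 * ((1 - 2 * l) * Real.exp (-(c / 2))) with hA
  have hA0 : 0 ≤ A := by positivity
  have hw : Measurable fun q : ℝ × ℝ =>
      ENNReal.ofReal A * ENNReal.ofReal (simplexDensity c q.1 q.2) :=
    (continuous_simplexDensity c).measurable.ennreal_ofReal.const_mul _
  set B : Measure (ℝ × ℝ) :=
    (volume.restrict (Ioo (0 : ℝ) 1)).prod (volume.restrict (Ioo (0 : ℝ) 1)) with hB
  have hXmem : ∀ s ∈ Icc (0 : ℝ) 1, l ≤ X s ∧ X s ≤ 1 - 2 * l := by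
    intro s hs
    constructor
    · calc l = (1 - 2 * l) * Real.exp (-c) := hl.symm
        _ ≤ X s := by
          refine mul_le_mul_of_nonneg_left (Real.exp_le_exp.2 ?_) hr.le
          nlinarith [hs.2]
    · refine mul_le_of_le_one_right hr.le (Real.exp_le_one_iff.2 ?_)
      nlinarith [mul_nonneg hc0.le hs.1]
  refine ⟨(B.withDensity fun q => ENNReal.ofReal A
    * ENNReal.ofReal (simplexDensity c q.1 q.2)).map g, ?_, ?_⟩
  · refine (ae_map_iff hgm.aemeasurable (measurableSet_Mset l)).2 ?_
    refine (withDensity_absolutelyContinuous B _).ae_le ?_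
    rw [hB, Measure.prod_restrict]
    filter_upwards [ae_restrict_mem (measurableSet_Ioo.prod measurableSet_Ioo)] with q hq
    obtain ⟨⟨a1, a2⟩, b1, b2⟩ := hq
    have h1 := hXmem (1 - q.1) ⟨by linarith, by linarith⟩
    have h2 := hXmem (q.1 * q.2) ⟨by positivity, by nlinarith⟩
    have h3 := hXmem (q.1 * (1 - q.2)) ⟨by nlinarith, by nlinarith⟩
    refine Or.inr ⟨h1.1, h1.2, h2.1, h2.2, h3.1, h3.2, ?_⟩
    have he : Real.exp (-(c * (1 - q.1))) * Real.exp (-(c * (q.1 * q.2)))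
        * Real.exp (-(c * (q.1 * (1 - q.2)))) = Real.exp (-c) := by
      rw [← Real.exp_add, ← Real.exp_add]; congr 1; ring
    calc X (1 - q.1) * X (q.1 * q.2) * X (q.1 * (1 - q.2))
        = (1 - 2 * l) ^ 2 * ((1 - 2 * l) * (Real.exp (-(c * (1 - q.1)))
          * Real.exp (-(c * (q.1 * q.2))) * Real.exp (-(c * (q.1 * (1 - q.2)))))) := by
          simp only [hX]; ring
      _ = l * (1 - 2 * l) ^ 2 := by rw [he, hl]; ring
  · intro ψ hψ
    have hψX : Measurable (ψ ∘ X) := hψ.comp hXm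
    have hF : Measurable fun p : ℝ × ℝ × ℝ => ψ p.1 + ψ p.2.1 + ψ p.2.2 := by fun_prop
    rw [lintegral_map hF hgm,
      show (fun q => ψ (g q).1 + ψ (g q).2.1 + ψ (g q).2.2)
        = (fun p : ℝ × ℝ × ℝ => ψ p.1 + ψ p.2.1 + ψ p.2.2) ∘ g from rfl,
      lintegral_withDensity_eq_lintegral_mul _ hw (hF.comp hgm), hB,
      lintegral_prod _ (hw.mul (hF.comp hgm)).aemeasurable,
      ← lintegral_exp_param hr hc0 hl]
    have key := lintegral_simplexDensity_marginals hc1 hc2 hmean hψX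
    calc _ = ∫⁻ u in Ioo (0 : ℝ) 1, ENNReal.ofReal A * ∫⁻ θ in Ioo (0 : ℝ) 1,
          ((ψ ∘ X) (1 - u) + (ψ ∘ X) (u * θ) + (ψ ∘ X) (u * (1 - θ)))
            * ENNReal.ofReal (simplexDensity c u θ) := by
          refine lintegral_congr fun u => ?_
          rw [← lintegral_const_mul' _ _ ENNReal.ofReal_ne_top]
          refine lintegral_congr fun θ => ?_
          simp only [Pi.mul_apply, Function.comp_apply, hg]
          ring
      _ = _ := by
          rw [lintegral_const_mul' _ _ ENNReal.ofReal_ne_top, key,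
            ← lintegral_const_mul' _ _ ENNReal.ofReal_ne_top]
          refine lintegral_congr fun s => ?_
          rw [mul_left_comm, ← ENNReal.ofReal_mul hA0, mul_comm]
          refine congrArg (fun a => ENNReal.ofReal a * ψ (X s)) ?_
          have he : Real.exp (-(c / 2)) * Real.exp (-(c * (s - 1 / 2))) = Real.exp (-(c * s)) := by
            rw [← Real.exp_add]; congr 1; ring
          rw [← he, hA, marginalDensity]
          field_simp

/-- Symmetrizing a measure under cyclic permutations of the coordinates. -/
lemma exists_cyclic_symmetrization {S : Set (ℝ × ℝ × ℝ)} (hS : MeasurableSet S)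
    (hcyc : ∀ p ∈ S, (p.2.1, p.2.2, p.1) ∈ S) {ρ : Measure (ℝ × ℝ × ℝ)} (hρ : ρ Sᶜ = 0)
    {ν : Measure ℝ} (hν : ∀ ψ : ℝ → ENNReal, Measurable ψ →
      ∫⁻ p, (ψ p.1 + ψ p.2.1 + ψ p.2.2) ∂ρ = ∫⁻ x, ψ x ∂ν) :
    ∃ π : Measure (ℝ × ℝ × ℝ), π Sᶜ = 0 ∧ π.map (fun p => p.1) = ν ∧
      π.map (fun p => p.2.1) = ν ∧ π.map (fun p => p.2.2) = ν := by
  have hσ : Measurable fun p : ℝ × ℝ × ℝ => (p.2.1, p.2.2, p.1) := by fun_prop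
  have hτ : Measurable fun p : ℝ × ℝ × ℝ => (p.2.2, p.1, p.2.1) := by fun_prop
  have hmem : ∀ᵐ p ∂ρ, p ∈ S := hρ
  have hsum (ψ : ℝ → ENNReal) (hψ : Measurable ψ) : (∫⁻ p, ψ p.1 ∂ρ) + (∫⁻ p, ψ p.2.1 ∂ρ)
      + ∫⁻ p, ψ p.2.2 ∂ρ = ∫⁻ x, ψ x ∂ν := by
    rw [← hν ψ hψ, lintegral_add_left (by fun_prop), lintegral_add_left (by fun_prop)]
  refine ⟨ρ + ρ.map (fun p => (p.2.1, p.2.2, p.1)) + ρ.map (fun p => (p.2.2, p.1, p.2.1)),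
    ?_, ?_, ?_, ?_⟩
  · have e1 : ρ.map (fun p => (p.2.1, p.2.2, p.1)) Sᶜ = 0 :=
      (ae_map_iff hσ.aemeasurable hS).2 (hmem.mono fun p hp => hcyc p hp)
    have e2 : ρ.map (fun p => (p.2.2, p.1, p.2.1)) Sᶜ = 0 :=
      (ae_map_iff hτ.aemeasurable hS).2 (hmem.mono fun p hp => hcyc _ (hcyc p hp))
    rw [Measure.add_apply, Measure.add_apply, hρ, e1, e2]
    simp
  all_goals
    refine Measure.ext_of_lintegral _ fun ψ hψ => ?_
    rw [lintegral_map hψ (by fun_prop), lintegral_add_measure, lintegral_add_measure,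
      lintegral_map (by fun_prop) hσ, lintegral_map (by fun_prop) hτ, ← hsum ψ hψ]
  all_goals ring

/-- If `l ∈ (0, 1/4)` satisfies `9l + log(1−2l) − log l = 3`, then there exists a
`(3,1)`-stochastic probability measure concentrated on the set `M`. -/
theorem exists_stochastic_measure_on_M (l : ℝ) (hl : l ∈ Set.Ioo (0 : ℝ) (1/4))
    (hroot : 9 * l + Real.log (1 - 2*l) - Real.log l = 3) :
    ∃ π : Measure (ℝ × ℝ × ℝ), IsProbabilityMeasure π ∧ π (Mset l) = 1 ∧
      π.map (fun p => p.1) = volume.restrict (Set.Icc (0 : ℝ) 1) ∧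
      π.map (fun p => p.2.1) = volume.restrict (Set.Icc (0 : ℝ) 1) ∧
      π.map (fun p => p.2.2) = volume.restrict (Set.Icc (0 : ℝ) 1) := by
  obtain ⟨l0, l4⟩ := hl
  have hr : 0 < 1 - 2 * l := by linarith
  obtain ⟨c, hc⟩ : ∃ c, c = 3 - 9 * l := ⟨_, rfl⟩
  have hlogs : c + Real.log (3 - c) - Real.log (3 + 2 * c) = 0 := by
    rw [show 3 - c = 9 * l by linarith, show 3 + 2 * c = 9 * (1 - 2 * l) by linarith,
      Real.log_mul (by norm_num) l0.ne', Real.log_mul (by norm_num) hr.ne']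
    linarith
  obtain ⟨hc1, hc2⟩ := root_bounds (by linarith) (by linarith) hlogs
  have hexp : (1 - 2 * l) * Real.exp (-c) = l := by
    rw [show -c = Real.log l - Real.log (1 - 2 * l) by linarith, Real.exp_sub,
      Real.exp_log l0, Real.exp_log hr]
    field_simp
  have hmean : Real.sinh (c / 2) * (c + 6) = 3 * c * Real.cosh (c / 2) := by
    have h1 : Real.exp (-c) = Real.exp (-(c / 2)) * Real.exp (-(c / 2)) := by
      rw [← Real.exp_add]; congr 1; ring
    have h2 : Real.exp (c / 2) * Real.exp (-(c / 2)) = 1 := by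
      rw [← Real.exp_add]; simp
    have h3 : (3 + 2 * c) * Real.exp (-(c / 2)) = (3 - c) * Real.exp (c / 2) := by
      have h4 : (3 + 2 * c) * Real.exp (-c) = 3 - c := by
        rw [show 3 + 2 * c = 9 * (1 - 2 * l) by linarith]; linarith
      rw [← h4, h1]
      linear_combination (-(3 + 2 * c) * Real.exp (-(c / 2))) * h2
    rw [Real.sinh_eq, Real.cosh_eq]
    linear_combination -h3
  obtain ⟨ρ₁, hρ₁, hψ₁⟩ := exists_measure_segments (l := l)
  obtain ⟨ρ₂, hρ₂, hψ₂⟩ := exists_measure_surface hc1 hc2 hmean hr hexp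
  have hunion (ψ : ℝ → ENNReal) : (∫⁻ x in Ioo 0 l, ψ x) + (∫⁻ x in Ioo (1 - 2 * l) 1, ψ x)
      + (∫⁻ x in Ioo l (1 - 2 * l), ψ x) = ∫⁻ x in Icc 0 1, ψ x := by
    simp only [setLIntegral_congr Ioo_ae_eq_Ioc, setLIntegral_congr Ioc_ae_eq_Icc.symm]
    rw [← Ioc_union_Ioc_eq_Ioc l0.le (show l ≤ 1 by linarith),
      ← Ioc_union_Ioc_eq_Ioc (show l ≤ 1 - 2 * l by linarith) (show 1 - 2 * l ≤ 1 by linarith),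
      lintegral_union (measurableSet_Ioc.union measurableSet_Ioc),
      lintegral_union measurableSet_Ioc (Ioc_disjoint_Ioc_of_le le_rfl)]
    · ring
    · rw [Ioc_union_Ioc_eq_Ioc (by linarith) (by linarith)]
      exact Ioc_disjoint_Ioc_of_le le_rfl
  have hcyc : ∀ p ∈ Mset l, (p.2.1, p.2.2, p.1) ∈ Mset l := by
    rintro p (⟨t, h0, h1, rfl | rfl | rfl⟩ | ⟨h1, h2, h3, h4, h5, h6, h7⟩)
    · exact Or.inl ⟨t, h0, h1, Or.inr (Or.inr rfl)⟩
    · exact Or.inl ⟨t, h0, h1, Or.inl rfl⟩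
    · exact Or.inl ⟨t, h0, h1, Or.inr (Or.inl rfl)⟩
    · exact Or.inr ⟨h3, h4, h5, h6, h1, h2, by simp only; linarith⟩
  obtain ⟨π, hπ, m1, m2, m3⟩ := exists_cyclic_symmetrization (measurableSet_Mset l) hcyc
    (ρ := ρ₁ + ρ₂) (ν := volume.restrict (Icc (0 : ℝ) 1))
    (by rw [Measure.add_apply, hρ₁, hρ₂, add_zero])
    (fun ψ hψ => by rw [lintegral_add_measure, hψ₁ ψ hψ, hψ₂ ψ hψ, hunion])
  have huniv : π univ = 1 := by
    have h := congrArg (fun μ : Measure ℝ => μ univ) m1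
    rw [Measure.map_apply (by fun_prop) MeasurableSet.univ] at h
    simpa using h
  have hprob : IsProbabilityMeasure π := ⟨huniv⟩
  exact ⟨π, hprob, (prob_compl_eq_zero_iff (measurableSet_Mset l)).1 hπ, m1, m2, m3⟩
end

section
/- Let C : [0,1] → ℝ be continuously differentiable such that t ↦ t·C'(t) is strictly increasing on [0,1]. Let l ∈ (0, 1/6) satisfy 9l + log(1−2l) − log l = 3, let r = 1 − 2l, c = l·r², let λ be as defined, and set f̂(s) = ∫₀^s λ(t)·C'(t·λ(t)) dt. Call a triple (f, g, h) of Lebesgue-integrable functions on [0,1] admissible if f(x) + g(y) + h(z) ≤ C(x·y·z) for all (x,y,z) ∈ [0,1]³, and call an admissible triple a dual solution if ∫₀¹ f + ∫₀¹ g + ∫₀¹ h ≥ ∫₀¹ f' + ∫₀¹ g' + ∫₀¹ h' for every admissible triple (f', g', h'). Then (f, g, h) is a dual solution if and only if there exist constants C_f, C_g, C_h with C_f + C_g + C_h = C(0) − 2·∫₀¹ λ(t)·C'(t·λ(t)) dt such that f(x) ≤ f̂(x) + C_f, g(y) ≤ f̂(y) + C_g, h(z) ≤ f̂(z) + C_h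 for all x, y, z ∈ [0,1], with equality holding Lebesgue-almost everywhere in each of the three inequalities. -/
open Set MeasureTheory intervalIntegral

/-- The piecewise function `λ`: `(1−2x)²` on `[0, l)`, `c/x` on `[l, r)` and `x(1−x)/2` on
`[r, 1]`, where `r = 1 − 2l` and `c = l·r²`. -/
noncomputable def lam (l : ℝ) (x : ℝ) : ℝ :=
  if x < l then (1 - 2*x)^2
  else if x < 1 - 2*l then (l * (1 - 2*l)^2) / x
  else x * (1 - x) / 2

/-- The potential `f̂(s) = ∫₀^s λ(t)·C'(t·λ(t)) dt`. -/
noncomputable def fhat (l : ℝ) (C' : ℝ → ℝ) (s : ℝ) : ℝ :=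
  ∫ t in (0 : ℝ)..s, lam l t * C' (t * lam l t)

/-- A triple `(f, g, h)` of Lebesgue-integrable functions on `[0,1]` is admissible for the
cost `C(xyz)` if `f(x) + g(y) + h(z) ≤ C(xyz)` for all `(x,y,z) ∈ [0,1]³`. -/
def Admissible (C : ℝ → ℝ) (f g h : ℝ → ℝ) : Prop :=
  IntegrableOn f (Set.Icc (0 : ℝ) 1) ∧ IntegrableOn g (Set.Icc (0 : ℝ) 1) ∧
  IntegrableOn h (Set.Icc (0 : ℝ) 1) ∧
  ∀ x ∈ Set.Icc (0 : ℝ) 1, ∀ y ∈ Set.Icc (0 : ℝ) 1, ∀ z ∈ Set.Icc (0 : ℝ) 1,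
    f x + g y + h z ≤ C (x * y * z)

/-- An admissible triple is a dual solution if it maximizes
`∫₀¹ f + ∫₀¹ g + ∫₀¹ h` among all admissible triples. -/
def IsDualSolution (C : ℝ → ℝ) (f g h : ℝ → ℝ) : Prop :=
  Admissible C f g h ∧
  ∀ f' g' h' : ℝ → ℝ, Admissible C f' g' h' →
    (∫ x in Set.Icc (0 : ℝ) 1, f' x) + (∫ x in Set.Icc (0 : ℝ) 1, g' x)
        + (∫ x in Set.Icc (0 : ℝ) 1, h' x) ≤
      (∫ x in Set.Icc (0 : ℝ) 1, f x) + (∫ x in Set.Icc (0 : ℝ) 1, g x)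
        + (∫ x in Set.Icc (0 : ℝ) 1, h x)

/-- If `S p + S q + S s ≤ 0` on the simplex `p + q + s = L`, the same inequality holds for the
averages of `S` over the coordinate projections of a segment in the simplex. -/
theorem sum_segment_averages_nonpos {L : ℝ} {S : ℝ → ℝ}
    (hint : ∀ a b, IntervalIntegrable S volume a b)
    (hS : ∀ p q s, 0 ≤ p → 0 ≤ q → 0 ≤ s → p + q + s = L → S p + S q + S s ≤ 0)
    {p₀ q₀ s₀ p₁ q₁ s₁ : ℝ} (hp₀ : 0 ≤ p₀) (hq₀ : 0 ≤ q₀) (hs₀ : 0 ≤ s₀)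
    (hp₁ : 0 ≤ p₁) (hq₁ : 0 ≤ q₁) (hs₁ : 0 ≤ s₁)
    (h₀ : p₀ + q₀ + s₀ = L) (h₁ : p₁ + q₁ + s₁ = L)
    (hp : p₀ ≠ p₁) (hq : q₀ ≠ q₁) (hs : s₀ ≠ s₁) :
    (∫ x in p₀..p₁, S x) / (p₁ - p₀) + (∫ x in q₀..q₁, S x) / (q₁ - q₀)
      + (∫ x in s₀..s₁, S x) / (s₁ - s₀) ≤ 0 := by
  have avg : ∀ a b : ℝ, a ≠ b → IntervalIntegrable (fun t => S (a + (b - a) * t)) volume 0 1 ∧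
      (∫ t in (0 : ℝ)..1, S (a + (b - a) * t)) = (∫ x in a..b, S x) / (b - a) := by
    intro a b hab
    have hne : b - a ≠ 0 := sub_ne_zero.2 hab.symm
    constructor
    · have h := ((hint a b).comp_add_left a).comp_mul_left (c := b - a)
      simpa [hne] using h
    · rw [intervalIntegral.integral_comp_add_mul _ hne]
      simp [div_eq_inv_mul]
  obtain ⟨ip, ep⟩ := avg _ _ hp
  obtain ⟨iq, eq⟩ := avg _ _ hq
  obtain ⟨is, es⟩ := avg _ _ hs
  rw [← ep, ← eq, ← es, ← intervalIntegral.integral_add ip iq,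
    ← intervalIntegral.integral_add (ip.add iq) is]
  have hmono := intervalIntegral.integral_mono_on (a := 0) (b := 1) (μ := volume) zero_le_one
    ((ip.add iq).add is) (intervalIntegrable_const (c := (0 : ℝ))) (fun t ht => by
      have key : ∀ a b : ℝ, 0 ≤ a → 0 ≤ b → 0 ≤ a + (b - a) * t := fun a b ha hb => by
        nlinarith [mul_nonneg ha (sub_nonneg.2 ht.2), mul_nonneg hb ht.1]
      exact hS _ _ _ (key _ _ hp₀ hp₁) (key _ _ hq₀ hq₁) (key _ _ hs₀ hs₁) (by
        have : p₀ + (p₁ - p₀) * t + (q₀ + (q₁ - q₀) * t) + (s₀ + (s₁ - s₀) * t)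
          = (p₀ + q₀ + s₀) * (1 - t) + (p₁ + q₁ + s₁) * t := by ring
        rw [this, h₀, h₁]; ring))
  simpa using hmono

/-- Under the simplex inequality, a positive maximum of the primitive of `S` cannot be attained
on both sides of `2L/3`. -/
theorem primitive_max_nonpos {L : ℝ} {S : ℝ → ℝ}
    (hint : ∀ a b, IntervalIntegrable S volume a b)
    (hS : ∀ p q s, 0 ≤ p → 0 ≤ q → 0 ≤ s → p + q + s = L → S p + S q + S s ≤ 0)
    {a b M : ℝ} (ha : a ∈ Icc 0 (2 * L / 3)) (hb : b ∈ Icc (2 * L / 3) L)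
    (hMa : ∫ x in (0 : ℝ)..a, S x = M) (hMb : ∫ x in (0 : ℝ)..b, S x = M)
    (hM : ∀ y ∈ Icc 0 L, ∫ x in (0 : ℝ)..y, S x ≤ M) : M ≤ 0 := by
  by_contra! hpos
  obtain ⟨ha0, ha1⟩ := ha
  obtain ⟨hb0, hb1⟩ := hb
  have ha_pos : 0 < a := by
    rcases ha0.eq_or_lt with h | h
    · rw [← h] at hMa; simp at hMa; linarith
    · exact h
  have sub : ∀ x y : ℝ, ∫ t in x..y, S t = (∫ t in (0 : ℝ)..y, S t) - ∫ t in (0 : ℝ)..x, S t :=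
    fun x y => (intervalIntegral.integral_interval_sub_left (hint _ _) (hint _ _)).symm
  have first : 0 < (∫ x in (0 : ℝ)..a, S x) / (a - 0) := by
    rw [hMa]; exact div_pos hpos (by linarith)
  have up : ∀ y c, 0 ≤ y → y ≤ L → y < c → ∫ x in (0 : ℝ)..c, S x = M →
      0 ≤ (∫ x in y..c, S x) / (c - y) := fun y c hy hyL hyc hc => by
    rw [sub, hc]; exact div_nonneg (by linarith [hM y ⟨hy, hyL⟩]) (by linarith)
  have down : ∀ y c, 0 ≤ y → y ≤ L → y < c → ∫ x in (0 : ℝ)..c, S x = M →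
      0 ≤ (∫ x in c..y, S x) / (y - c) := fun y c hy hyL hyc hc => by
    have := up y c hy hyL hyc hc
    rw [intervalIntegral.integral_symm, ← neg_sub c y, neg_div_neg_eq]; exact this
  by_cases h1 : a + b ≤ L
  · have := sum_segment_averages_nonpos hint hS (p₀ := b) (q₀ := 0) (s₀ := L - b)
      (p₁ := L - a - b) (q₁ := a) (s₁ := b) (by linarith) le_rfl (by linarith) (by linarith)
      (by linarith) (by linarith) (by ring) (by ring) (by intro h; linarith) ha_pos.ne
      (by intro h; linarith)
    linarith [down (L - a - b) b (by linarith) (by linarith) (by linarith) hMb,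
      up (L - b) b (by linarith) (by linarith) (by linarith) hMb]
  push Not at h1
  by_cases h2 : 2 * a ≤ L
  · have := sum_segment_averages_nonpos hint hS (p₀ := b) (q₀ := L - b) (s₀ := 0)
      (p₁ := L - 2 * a) (q₁ := a) (s₁ := a) (by linarith) (by linarith) le_rfl (by linarith)
      (by linarith) (by linarith) (by ring) (by ring) (by intro h; linarith)
      (by intro h; linarith) ha_pos.ne
    linarith [down (L - 2 * a) b (by linarith) (by linarith) (by linarith) hMb,
      up (L - b) a (by linarith) (by linarith) (by linarith) hMa]
  · push Not at h2
    have hseg := sum_segment_averages_nonpos hint hS (p₀ := 0) (q₀ := L - a) (s₀ := a)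
      (p₁ := a) (q₁ := 0) (s₁ := L - a) le_rfl (by linarith) (by linarith) (by linarith)
      le_rfl (by linarith) (by ring) (by ring) ha_pos.ne (by intro h; linarith)
      (by intro h; linarith)
    have hd := down (L - a) a (by linarith) (by linarith) (by linarith) hMa
    rcases le_total 0 (∫ x in (0 : ℝ)..(L - a), S x) with h3 | h3
    · have : 0 ≤ (∫ x in (L - a)..0, S x) / (0 - (L - a)) := by
        rw [intervalIntegral.integral_symm, zero_sub, neg_div_neg_eq]
        exact div_nonneg h3 (by linarith)
      linarith
    · rw [intervalIntegral.integral_symm (μ := volume) 0 (L - a), sub a (L - a), zero_sub,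
        neg_div_neg_eq, hMa, sub_zero] at hseg
      set B := ∫ x in (0 : ℝ)..(L - a), S x
      have e : (B - M) / (L - a - a) = M / (2 * a - L) + -B / (2 * a - L) := by
        rw [← add_div, ← neg_div_neg_eq]; congr 1 <;> ring
      rw [e] at hseg
      have h4 : 0 < M / a := div_pos hpos ha_pos
      have h5 : 0 < M / (2 * a - L) := div_pos hpos (by linarith)
      have h6 : 0 ≤ B / (L - a) + -B / (2 * a - L) := by
        have : -B / (L - a) ≤ -B / (2 * a - L) :=
          div_le_div_of_nonneg_left (by linarith) (by linarith) (by linarith)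
        rw [neg_div] at this
        linarith
      linarith

/-- Under the simplex inequality, the primitive of `S` lies below a parabola vanishing at `0`
and `2L/3`. -/
theorem exists_primitive_le_parabola {L : ℝ} (hL : 0 < L) {S : ℝ → ℝ}
    (hint : ∀ a b, IntervalIntegrable S volume a b)
    (hS : ∀ p q s, 0 ≤ p → 0 ≤ q → 0 ≤ s → p + q + s = L → S p + S q + S s ≤ 0) :
    ∃ k : ℝ, ∀ x ∈ Icc 0 L, ∫ t in (0 : ℝ)..x, S t ≤ k * (x * (x - 2 * L / 3)) := by
  set A : ℝ → ℝ := fun x => ∫ t in (0 : ℝ)..x, S t with hA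
  have hAc : Continuous A := intervalIntegral.continuous_primitive hint 0
  set m := 2 * L / 3 with hm
  set B : ℝ → ℝ → ℝ := fun k x => A x - k * (x * (x - m)) with hB
  have hBc : Continuous (Function.uncurry B) := by
    simp only [hB, Function.uncurry_def]
    fun_prop
  have hBc' : ∀ k, Continuous (B k) := fun k => by simp only [hB]; fun_prop
  set M₁ : ℝ → ℝ := fun k => sSup (B k '' Icc 0 m)
  set M₂ : ℝ → ℝ := fun k => sSup (B k '' Icc m L)
  have hM₁c : Continuous M₁ := isCompact_Icc.continuous_sSup hBc
  have hM₂c : Continuous M₂ := isCompact_Icc.continuous_sSup hBc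
  have le₁ : ∀ k, ∀ x ∈ Icc 0 m, B k x ≤ M₁ k := fun k x hx =>
    le_csSup (isCompact_Icc.image (hBc' k)).bddAbove (mem_image_of_mem _ hx)
  have le₂ : ∀ k, ∀ x ∈ Icc m L, B k x ≤ M₂ k := fun k x hx =>
    le_csSup (isCompact_Icc.image (hBc' k)).bddAbove (mem_image_of_mem _ hx)
  have hm0 : 0 < m := by rw [hm]; linarith
  have hmL : m < L := by rw [hm]; linarith
  have ne₁ : (Icc 0 m).Nonempty := nonempty_Icc.2 hm0.le
  have ne₂ : (Icc m L).Nonempty := nonempty_Icc.2 hmL.le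
  obtain ⟨k, hk⟩ : ∃ k, M₁ k - M₂ k = 0 := by
    have hlow : ∃ k, M₁ k - M₂ k ≤ 0 := by
      have hpos : 0 < L * (L - m) := mul_pos hL (by linarith)
      set k := min 0 ((A L - M₁ 0) / (L * (L - m)))
      have hk0 : k ≤ 0 := min_le_left _ _
      refine ⟨k, ?_⟩
      have h1 : M₁ k ≤ M₁ 0 := by
        refine csSup_le (ne₁.image _) ?_
        rintro _ ⟨x, hx, rfl⟩
        refine le_trans ?_ (le₁ 0 x hx)
        simp only [hB]
        have : x * (x - m) ≤ 0 := mul_nonpos_of_nonneg_of_nonpos hx.1 (by linarith [hx.2])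
        nlinarith [mul_nonneg_of_nonpos_of_nonpos hk0 this]
      have h2 := le₂ k L ⟨hmL.le, le_rfl⟩
      simp only [hB] at h2
      have h3 : k * (L * (L - m)) ≤ A L - M₁ 0 := (le_div_iff₀ hpos).1 (min_le_right _ _)
      linarith
    have hhigh : ∃ k, 0 ≤ M₁ k - M₂ k := by
      have hpos : 0 < m / 2 * (m / 2) := by positivity
      set k := max 0 ((M₂ 0 - A (m / 2)) / (m / 2 * (m / 2)))
      have hk0 : 0 ≤ k := le_max_left _ _
      refine ⟨k, ?_⟩
      have h1 : M₂ k ≤ M₂ 0 := by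
        refine csSup_le (ne₂.image _) ?_
        rintro _ ⟨x, hx, rfl⟩
        refine le_trans ?_ (le₂ 0 x hx)
        simp only [hB]
        have : 0 ≤ x * (x - m) := mul_nonneg (by linarith [hx.1]) (by linarith [hx.1])
        nlinarith [mul_nonneg hk0 this]
      have h2 := le₁ k (m / 2) ⟨by linarith, by linarith⟩
      simp only [hB] at h2
      have h3 : M₂ 0 - A (m / 2) ≤ k * (m / 2 * (m / 2)) :=
        (div_le_iff₀ hpos).1 (le_max_right _ _)
      have h4 : k * (m / 2 * (m / 2 - m)) = -(k * (m / 2 * (m / 2))) := by ring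
      linarith
    obtain ⟨k₁, h₁⟩ := hlow
    obtain ⟨k₂, h₂⟩ := hhigh
    exact mem_range_of_exists_le_of_exists_ge (hM₁c.sub hM₂c) ⟨k₁, h₁⟩ ⟨k₂, h₂⟩
  refine ⟨k, ?_⟩
  obtain ⟨a, ha, hMa⟩ := isCompact_Icc.exists_sSup_image_eq ne₁ (hBc' k).continuousOn
  obtain ⟨b, hb, hMb⟩ := isCompact_Icc.exists_sSup_image_eq ne₂ (hBc' k).continuousOn
  have hle : ∀ x ∈ Icc 0 L, B k x ≤ M₁ k := by
    intro x hx
    rcases le_total x m with h | h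
    · exact le₁ k x ⟨hx.1, h⟩
    · exact (le₂ k x ⟨h, hx.2⟩).trans_eq (by linarith)
  have hpoly : ∀ a b, IntervalIntegrable (fun x : ℝ => k * (2 * x - m)) volume a b := fun a b =>
    (by fun_prop : Continuous fun x : ℝ => k * (2 * x - m)).intervalIntegrable _ _
  have hprim : ∀ x, ∫ t in (0 : ℝ)..x, (S t - k * (2 * t - m)) = B k x := fun x => by
    rw [intervalIntegral.integral_sub (hint _ _) (hpoly _ _), intervalIntegral.integral_const_mul,
      intervalIntegral.integral_sub ((continuous_const_mul 2).intervalIntegrable _ _)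
        intervalIntegrable_const,
      intervalIntegral.integral_const_mul, integral_id]
    simp only [hB, hA, intervalIntegral.integral_const, smul_eq_mul]
    ring
  have hM := primitive_max_nonpos (L := L) (S := fun x => S x - k * (2 * x - m)) (M := M₁ k)
    (fun a b => (hint a b).sub (hpoly a b))
    (fun p q s hp hq hs h => by
      have : k * (2 * p - m) + k * (2 * q - m) + k * (2 * s - m) = 0 := by
        rw [hm]; linear_combination 2 * k * h
      linarith [hS p q s hp hq hs h])
    ha hb (by rw [hprim]; exact hMa.symm) (by rw [hprim, ← hMb]; linarith)
    (fun y hy => by rw [hprim]; exact hle y hy)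
  intro x hx
  have := hle x hx
  simp only [hB] at this
  linarith

/-- Integration by parts of an integrable function against `exp (-x)`. -/
theorem integral_mul_exp_neg {L : ℝ} {S : ℝ → ℝ} (hint : ∀ a b, IntervalIntegrable S volume a b) :
    ∫ x in (0 : ℝ)..L, S x * Real.exp (-x) =
      (∫ t in (0 : ℝ)..L, S t) * Real.exp (-L)
        + ∫ x in (0 : ℝ)..L, (∫ t in (0 : ℝ)..x, S t) * Real.exp (-x) := by
  have hAC := (hint 0 L).absolutelyContinuousOnInterval_intervalIntegral left_mem_uIcc
  have hexp : AbsolutelyContinuousOnInterval (fun x : ℝ => Real.exp (-x)) 0 L :=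
    ContDiffOn.absolutelyContinuousOnInterval (by fun_prop)
  have hparts := hexp.integral_mul_deriv_eq_deriv_mul hAC
  have hderiv : ∀ x : ℝ, deriv (fun x : ℝ => Real.exp (-x)) x = -Real.exp (-x) := fun x => by
    simpa using ((hasDerivAt_neg x).exp).deriv
  simp only [hderiv, intervalIntegral.integral_same, mul_zero, sub_zero] at hparts
  have hae : ∫ x in (0 : ℝ)..L, S x * Real.exp (-x) =
      ∫ x in (0 : ℝ)..L, Real.exp (-x) * deriv (fun x => ∫ v in (0 : ℝ)..x, S v) x := by
    refine intervalIntegral.integral_congr_ae ?_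
    filter_upwards [(hint 0 L).ae_hasDerivAt_integral] with x hx hxI
    rw [(hx (uIoc_subset_uIcc hxI) 0 left_mem_uIcc).deriv, mul_comm]
  rw [hae, hparts]
  simp only [neg_mul, intervalIntegral.integral_neg, sub_neg_eq_add, mul_comm]

theorem integral_linear_mul_exp_neg (m L : ℝ) :
    ∫ x in (0 : ℝ)..L, (2 * x - m) * Real.exp (-x) =
      (2 - m) - (2 * L - m + 2) * Real.exp (-L) := by
  have h : ∀ x ∈ uIcc 0 L, HasDerivAt (fun x : ℝ => -(2 * x - m + 2) * Real.exp (-x))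
      ((2 * x - m) * Real.exp (-x)) x := fun x _ => by
    have h1 : HasDerivAt (fun x : ℝ => -(2 * x - m + 2)) (-(2 * 1)) x :=
      ((((hasDerivAt_id x).const_mul 2).sub_const m).add_const 2).neg
    exact (h1.mul (hasDerivAt_neg x).exp).congr_deriv (by ring)
  rw [intervalIntegral.integral_eq_sub_of_hasDerivAt h
    ((by fun_prop : Continuous _).intervalIntegrable _ _)]
  simp
  ring

/-- The exponential density on `[0, L]` with mean `L/3` is dual to the simplex inequality; in the
extremal case `S` is almost everywhere affine. -/
theorem integral_mul_exp_neg_nonpos {L : ℝ} (hL : 0 < L)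
    (hmean : 1 - L / 3 = (2 * L / 3 + 1) * Real.exp (-L)) {S : ℝ → ℝ}
    (hint : ∀ a b, IntervalIntegrable S volume a b)
    (hS : ∀ p q s, 0 ≤ p → 0 ≤ q → 0 ≤ s → p + q + s = L → S p + S q + S s ≤ 0) :
    ∫ x in (0 : ℝ)..L, S x * Real.exp (-x) ≤ 0 ∧
      (0 ≤ ∫ x in (0 : ℝ)..L, S x * Real.exp (-x) →
        ∃ k : ℝ, ∀ᵐ x, x ∈ Icc 0 L → S x = k * (2 * x - 2 * L / 3)) := by
  obtain ⟨k, hk⟩ := exists_primitive_le_parabola hL hint hS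
  set m := 2 * L / 3 with hm
  have hpoly : ∀ a b, IntervalIntegrable (fun x : ℝ => k * (2 * x - m)) volume a b := fun a b =>
    (by fun_prop : Continuous fun x : ℝ => k * (2 * x - m)).intervalIntegrable _ _
  have hR : ∀ a b, IntervalIntegrable (fun x => S x - k * (2 * x - m)) volume a b :=
    fun a b => (hint a b).sub (hpoly a b)
  set B : ℝ → ℝ := fun x => ∫ t in (0 : ℝ)..x, (S t - k * (2 * t - m)) with hB
  have hBc : Continuous B := intervalIntegral.continuous_primitive hR 0
  have hBle : ∀ x ∈ Icc 0 L, B x ≤ 0 := fun x hx => by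
    have : B x = (∫ t in (0 : ℝ)..x, S t) - k * (x * (x - m)) := by
      simp only [hB]
      rw [intervalIntegral.integral_sub (hint _ _) (hpoly _ _),
        intervalIntegral.integral_const_mul,
        intervalIntegral.integral_sub ((continuous_const_mul 2).intervalIntegrable _ _)
          intervalIntegrable_const, intervalIntegral.integral_const_mul, integral_id]
      simp only [intervalIntegral.integral_const, smul_eq_mul]
      ring
    linarith [hk x hx]
  have hexp : ContinuousOn (fun x : ℝ => Real.exp (-x)) (uIcc 0 L) := by fun_prop
  have hsplit : ∫ x in (0 : ℝ)..L, S x * Real.exp (-x) =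
      ∫ x in (0 : ℝ)..L, (S x - k * (2 * x - m)) * Real.exp (-x) := by
    have h0 : ∫ x in (0 : ℝ)..L, k * (2 * x - m) * Real.exp (-x) = 0 := by
      simp only [mul_assoc, intervalIntegral.integral_const_mul]
      rw [integral_linear_mul_exp_neg]
      have : 2 - m - (2 * L - m + 2) * Real.exp (-L) = 0 := by
        rw [hm]; linear_combination 2 * hmean
      rw [this, mul_zero]
    simp only [sub_mul _ (k * _)]
    rw [intervalIntegral.integral_sub ((hint 0 L).mul_continuousOn hexp)
      ((hpoly 0 L).mul_continuousOn hexp), h0, sub_zero]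
  rw [hsplit, integral_mul_exp_neg hR]
  have hlast : B L * Real.exp (-L) ≤ 0 :=
    mul_nonpos_of_nonpos_of_nonneg (hBle L ⟨hL.le, le_rfl⟩) (Real.exp_pos _).le
  have hneg : ∀ x ∈ Icc 0 L, 0 ≤ -(B x * Real.exp (-x)) := fun x hx =>
    neg_nonneg.2 (mul_nonpos_of_nonpos_of_nonneg (hBle x hx) (Real.exp_pos _).le)
  have hBint : ∫ x in (0 : ℝ)..L, B x * Real.exp (-x) ≤ 0 := by
    have := intervalIntegral.integral_nonneg (μ := volume) hL.le hneg
    rw [intervalIntegral.integral_neg] at this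
    linarith
  refine ⟨add_nonpos hlast hBint, fun h0 => ⟨k, ?_⟩⟩
  have hB0 : ∀ x ∈ Icc 0 L, B x = 0 := by
    by_contra! hx
    obtain ⟨x, hx, hne⟩ := hx
    have hpos := intervalIntegral.integral_pos hL
      (f := fun x => -(B x * Real.exp (-x))) (by fun_prop)
      (fun x hx => hneg x (Ioc_subset_Icc_self hx))
      ⟨x, hx, neg_pos.2 (mul_neg_of_neg_of_pos (lt_of_le_of_ne (hBle x hx) hne)
        (Real.exp_pos _))⟩
    rw [intervalIntegral.integral_neg] at hpos
    have h0' : 0 ≤ B L * Real.exp (-L) + ∫ x in (0 : ℝ)..L, B x * Real.exp (-x) := h0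
    linarith
  have hne0 : ∀ᵐ x : ℝ, x ≠ 0 := by simp [ae_iff]
  have hneL : ∀ᵐ x : ℝ, x ≠ L := by simp [ae_iff]
  filter_upwards [(hR 0 L).ae_hasDerivAt_integral, hne0, hneL] with x hx hx0 hxL hxI
  have hd := hx (by rwa [uIcc_of_le hL.le]) 0 left_mem_uIcc
  have hloc : B =ᶠ[nhds x] fun _ => 0 := by
    filter_upwards [Icc_mem_nhds (lt_of_le_of_ne hxI.1 hx0.symm) (lt_of_le_of_ne hxI.2 hxL)]
      with y hy using hB0 y hy
  have := hd.unique ((hasDerivAt_const x (0 : ℝ)).congr_of_eventuallyEq hloc)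
  linarith

/-- The inequality for the uniform distribution on `[l, r]` and the surface `xyz = l r²`, with
almost every point lying on an active triple in the extremal case. -/
theorem integral_nonpos_of_surface {l r : ℝ} (hl : 0 < l) (hlr : l < r)
    (hmean : (1 - Real.log (r / l) / 3) * r = (2 * Real.log (r / l) / 3 + 1) * l) {S : ℝ → ℝ}
    (hint : IntegrableOn S (Icc l r))
    (hS : ∀ x ∈ Icc l r, ∀ y ∈ Icc l r, ∀ z ∈ Icc l r, x * y * z = l * r ^ 2 →
      S x + S y + S z ≤ 0) :
    ∫ x in Icc l r, S x ≤ 0 ∧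
      (0 ≤ ∫ x in Icc l r, S x → ∀ᵐ x, x ∈ Icc l r → ∃ y ∈ Icc l r, ∃ z ∈ Icc l r,
        x * y * z = l * r ^ 2 ∧ S x + S y + S z = 0) := by
  have hr : 0 < r := hl.trans hlr
  set L := Real.log (r / l) with hLdef
  have hL : 0 < L := Real.log_pos ((one_lt_div hl).2 hlr)
  have hexpL : Real.exp (-L) = l / r := by
    rw [Real.exp_neg, hLdef, Real.exp_log (by positivity), inv_div]
  set φ : ℝ → ℝ := fun p => r * Real.exp (-p) with hφ
  have hφd : ∀ p, HasDerivAt φ (-(r * Real.exp (-p))) p := fun p =>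
    ((hasDerivAt_neg p).exp.const_mul r).congr_deriv (by ring)
  have hφinj : Function.Injective φ := fun p q h => by
    have := Real.exp_injective (mul_left_cancel₀ hr.ne' h)
    linarith
  have hφmem : ∀ p ∈ Icc 0 L, φ p ∈ Icc l r := fun p hp => by
    constructor
    · have : Real.exp (-L) ≤ Real.exp (-p) := Real.exp_le_exp.2 (by linarith [hp.2])
      rw [hexpL, div_le_iff₀ hr] at this
      simp only [hφ]; linarith
    · have : Real.exp (-p) ≤ 1 := Real.exp_le_one_iff.2 (by linarith [hp.1])
      simp only [hφ]; nlinarith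
  have hφimg : φ '' Icc 0 L = Icc l r := by
    refine Subset.antisymm (by rintro _ ⟨p, hp, rfl⟩; exact hφmem p hp) fun x hx => ?_
    have hx0 : 0 < x := hl.trans_le hx.1
    refine ⟨Real.log (r / x), ⟨Real.log_nonneg ((one_le_div hx0).2 hx.2), ?_⟩, ?_⟩
    · exact Real.log_le_log (by positivity) (div_le_div_of_nonneg_left hr.le hl hx.1)
    · simp only [hφ]
      rw [Real.exp_neg, Real.exp_log (by positivity)]
      field_simp
  have hφmul : ∀ p q s, p + q + s = L → φ p * φ q * φ s = l * r ^ 2 := fun p q s h => by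
    have : φ p * φ q * φ s = r ^ 3 * Real.exp (-L) := by
      rw [← h, neg_add, neg_add, Real.exp_add, Real.exp_add]; simp only [hφ]; ring
    rw [this, hexpL]; field_simp
  set T : ℝ → ℝ := (Icc 0 L).indicator (fun p => S (φ p)) with hT
  have hTval : ∀ p ∈ Icc 0 L, T p = S (φ p) := fun p hp => indicator_of_mem hp _
  have habs : ∀ p, |-(r * Real.exp (-p))| = r * Real.exp (-p) := fun p => by
    rw [abs_neg, abs_of_pos (by positivity)]
  have hTint : Integrable T := by
    rw [hT, integrable_indicator_iff measurableSet_Icc]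
    have h1 := (integrableOn_image_iff_integrableOn_abs_deriv_smul measurableSet_Icc
      (fun p _ => (hφd p).hasDerivWithinAt) hφinj.injOn S).1 (by rwa [hφimg])
    have h2 := IntegrableOn.continuousOn_mul (g := fun p => (r * Real.exp (-p))⁻¹)
      (ContinuousOn.inv₀ (by fun_prop) fun p _ => by positivity) h1 isCompact_Icc
    refine h2.congr_fun (fun p _ => ?_) measurableSet_Icc
    simp only [habs, smul_eq_mul]
    field_simp
  have hTii : ∀ a b, IntervalIntegrable T volume a b := fun a b => hTint.intervalIntegrable
  have hTS : ∀ p q s, 0 ≤ p → 0 ≤ q → 0 ≤ s → p + q + s = L → T p + T q + T s ≤ 0 := by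
    intro p q s hp hq hs h
    have mp : p ∈ Icc 0 L := ⟨hp, by linarith⟩
    have mq : q ∈ Icc 0 L := ⟨hq, by linarith⟩
    have ms : s ∈ Icc 0 L := ⟨hs, by linarith⟩
    rw [hTval p mp, hTval q mq, hTval s ms]
    exact hS _ (hφmem p mp) _ (hφmem q mq) _ (hφmem s ms) (hφmul p q s h)
  have hval : ∫ x in Icc l r, S x = r * ∫ p in (0 : ℝ)..L, T p * Real.exp (-p) := by
    rw [← hφimg, integral_image_eq_integral_abs_deriv_smul measurableSet_Icc
      (fun p _ => (hφd p).hasDerivWithinAt) hφinj.injOn S, ← intervalIntegral.integral_const_mul,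
      intervalIntegral.integral_of_le hL.le, integral_Icc_eq_integral_Ioc]
    refine setIntegral_congr_fun measurableSet_Ioc fun p hp => ?_
    simp only [habs, smul_eq_mul, hTval p (Ioc_subset_Icc_self hp)]
    ring
  obtain ⟨hle, heq⟩ := integral_mul_exp_neg_nonpos hL (by
    rw [hexpL]; field_simp; linear_combination 3 * hmean) hTii hTS
  rw [hval]
  refine ⟨mul_nonpos_of_nonneg_of_nonpos hr.le hle, fun h0 => ?_⟩
  obtain ⟨k, hk⟩ := heq (nonneg_of_mul_nonneg_right h0 hr)
  have himg : volume (φ '' {p | ¬ (p ∈ Icc 0 L → T p = k * (2 * p - 2 * L / 3))}) = 0 :=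
    addHaar_image_eq_zero_of_differentiableOn_of_addHaar_eq_zero volume
      (fun p _ => (hφd p).differentiableAt.differentiableWithinAt) (ae_iff.1 hk)
  have hnel : ∀ᵐ x : ℝ, x ≠ l := by simp [ae_iff]
  filter_upwards [compl_mem_ae_iff.2 himg, hnel] with x hxN hxl hx
  obtain ⟨p, hp, rfl⟩ : x ∈ φ '' Icc 0 L := by rwa [hφimg]
  have hpE : T p = k * (2 * p - 2 * L / 3) := by
    by_contra h
    exact hxN ⟨p, fun h' => h (h' hp), rfl⟩
  have hpL : p < L := by
    refine lt_of_le_of_ne hp.2 fun h => hxl ?_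
    simp only [hφ, h, hexpL]; field_simp
  have hk' : ∀ᵐ q : ℝ, L - p - q ∈ Icc 0 L →
      T (L - p - q) = k * (2 * (L - p - q) - 2 * L / 3) :=
    (Measure.measurePreserving_sub_left volume (L - p)).quasiMeasurePreserving.ae hk
  obtain ⟨q, hq, hq1, hq2⟩ := (Measure.dense_of_ae (hk.and hk')).inter_open_nonempty
    (Ioo 0 (L - p)) isOpen_Ioo (nonempty_Ioo.2 (by linarith))
  have mq : q ∈ Icc 0 L := ⟨hq.1.le, by linarith [hq.2, hp.1]⟩
  have ms : L - p - q ∈ Icc 0 L := ⟨by linarith [hq.2], by linarith [hq.1, hp.1]⟩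
  refine ⟨φ q, hφmem q mq, φ (L - p - q), hφmem _ ms, hφmul _ _ _ (by ring), ?_⟩
  rw [← hTval p hp, ← hTval q mq, ← hTval _ ms, hpE, hq1 mq, hq2 ms]
  ring

/-- The contact set of the problem: the curve `(t, 1 − 2t, 1 − 2t)`, `t ∈ [0, l]`, with its
permutations, and the surface `xyz = l (1 − 2l)²` inside `[l, 1 − 2l]³`. -/
def Contact (l x y z : ℝ) : Prop :=
  (x ∈ Icc 0 l ∧ y = 1 - 2 * x ∧ z = 1 - 2 * x) ∨
  (y ∈ Icc 0 l ∧ z = 1 - 2 * y ∧ x = 1 - 2 * y) ∨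
  (z ∈ Icc 0 l ∧ x = 1 - 2 * z ∧ y = 1 - 2 * z) ∨
  (x ∈ Icc l (1 - 2 * l) ∧ y ∈ Icc l (1 - 2 * l) ∧ z ∈ Icc l (1 - 2 * l) ∧
    x * y * z = l * (1 - 2 * l) ^ 2)

namespace Contact

variable {l x y z : ℝ}

theorem rotate (h : Contact l x y z) : Contact l y z x := by
  rcases h with h | h | h | ⟨hx, hy, hz, h⟩
  · exact Or.inr (Or.inr (Or.inl h))
  · exact Or.inl h
  · exact Or.inr (Or.inl h)
  · exact Or.inr (Or.inr (Or.inr ⟨hy, hz, hx, by linarith⟩))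

theorem mem_left (hl : l ∈ Ioo (0 : ℝ) (1 / 6)) (h : Contact l x y z) : x ∈ Icc (0 : ℝ) 1 := by
  obtain ⟨h0, h1⟩ := hl
  rcases h with ⟨hx, -, -⟩ | ⟨hy, -, rfl⟩ | ⟨hz, rfl, -⟩ | ⟨hx, -, -, -⟩
  · exact ⟨hx.1, by linarith [hx.2]⟩
  · exact ⟨by linarith [hy.2], by linarith [hy.1]⟩
  · exact ⟨by linarith [hz.2], by linarith [hz.1]⟩
  · exact ⟨by linarith [hx.1], by linarith [hx.2]⟩

theorem mem_middle (hl : l ∈ Ioo (0 : ℝ) (1 / 6)) (h : Contact l x y z) : y ∈ Icc (0 : ℝ) 1 :=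
  h.rotate.mem_left hl

theorem mem_right (hl : l ∈ Ioo (0 : ℝ) (1 / 6)) (h : Contact l x y z) : z ∈ Icc (0 : ℝ) 1 :=
  h.rotate.rotate.mem_left hl

theorem mul_eq_lam (hl : l ∈ Ioo (0 : ℝ) (1 / 6)) (h : Contact l x y z) : y * z = lam l x := by
  obtain ⟨h0, h1⟩ := hl
  have hupper : ∀ t ∈ Icc 0 l, t * (1 - 2 * t) = lam l (1 - 2 * t) := fun t ht => by
    rw [lam, if_neg (by linarith [ht.2]), if_neg (by linarith [ht.2])]
    ring
  have hmid : ∀ y z, l ≤ x → x ≤ 1 - 2 * l → x * y * z = l * (1 - 2 * l) ^ 2 →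
      y * z = lam l x := by
    intro y z hlx hxr hc
    have hx0 : 0 < x := by linarith
    have hyz : y * z = l * (1 - 2 * l) ^ 2 / x := by
      rw [eq_div_iff hx0.ne']; linear_combination hc
    rw [lam, if_neg (not_lt.2 hlx)]
    rcases hxr.lt_or_eq with h | h
    · rw [if_pos h, hyz]
    · rw [if_neg h.not_lt, hyz, h]
      have : (1 - 2 * l) ≠ 0 := by linarith
      field_simp
      ring
  rcases h with ⟨hx, rfl, rfl⟩ | ⟨hy, rfl, rfl⟩ | ⟨hz, rfl, rfl⟩ | ⟨hx, -, -, h⟩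
  · rcases hx.2.lt_or_eq with h | h
    · rw [lam, if_pos h]; ring
    · exact hmid _ _ h.ge (by linarith) (by rw [h]; ring)
  · exact hupper y hy
  · rw [mul_comm]; exact hupper z hz
  · exact hmid y z hx.1 hx.2 h

theorem exists_of_mem (hl : l ∈ Ioo (0 : ℝ) (1 / 6)) (hx : x ∈ Icc (0 : ℝ) 1) :
    ∃ y z, Contact l x y z := by
  obtain ⟨h0, h1⟩ := hl
  rcases le_total x l with h | h
  · exact ⟨_, _, Or.inl ⟨⟨hx.1, h⟩, rfl, rfl⟩⟩
  rcases le_total x (1 - 2 * l) with h' | h'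
  · have hx0 : 0 < x := by linarith
    refine ⟨1 - 2 * l, l * (1 - 2 * l) / x, Or.inr (Or.inr (Or.inr ⟨⟨h, h'⟩, ?_, ?_, ?_⟩))⟩
    · exact ⟨by linarith, le_rfl⟩
    · exact ⟨by rw [le_div_iff₀ hx0]; nlinarith, by rw [div_le_iff₀ hx0]; nlinarith⟩
    · field_simp
  · exact ⟨(1 - x) / 2, x, Or.inr (Or.inl ⟨⟨by linarith [hx.2], by linarith⟩, by ring, by ring⟩)⟩

end Contact

/-- If `S x + S y + S z ≤ 0` on the contact set then `∫₀¹ S ≤ 0`, and in the extremal case almost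
every `x` belongs to a contact triple with equality. -/
theorem integral_nonpos_of_contact {l : ℝ} (hl : l ∈ Ioo (0 : ℝ) (1 / 6))
    (hroot : 9 * l + Real.log (1 - 2 * l) - Real.log l = 3) {S : ℝ → ℝ}
    (hint : IntegrableOn S (Icc (0 : ℝ) 1))
    (hS : ∀ x y z, Contact l x y z → S x + S y + S z ≤ 0) :
    ∫ x in Icc (0 : ℝ) 1, S x ≤ 0 ∧
      (0 ≤ ∫ x in Icc (0 : ℝ) 1, S x →
        ∀ᵐ x, x ∈ Icc (0 : ℝ) 1 → ∃ y z, Contact l x y z ∧ S x + S y + S z = 0) := by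
  obtain ⟨h0, h1⟩ := id hl
  set r := 1 - 2 * l with hr
  have hii : ∀ a b, a ∈ Icc (0 : ℝ) 1 → b ∈ Icc (0 : ℝ) 1 → IntervalIntegrable S volume a b :=
    fun a b ha hb => ((intervalIntegrable_iff_integrableOn_Icc_of_le zero_le_one).2 hint).mono_set
      (by rw [uIcc_of_le zero_le_one]; exact uIcc_subset_Icc ha hb)
  have m0 : (0 : ℝ) ∈ Icc (0 : ℝ) 1 := ⟨le_rfl, zero_le_one⟩
  have ml : l ∈ Icc (0 : ℝ) 1 := ⟨h0.le, by linarith⟩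
  have mr : r ∈ Icc (0 : ℝ) 1 := ⟨by linarith, by linarith⟩
  have m1 : (1 : ℝ) ∈ Icc (0 : ℝ) 1 := ⟨zero_le_one, le_rfl⟩
  have hlr : l < r := by linarith
  have hcomp : IntervalIntegrable (fun t => S (1 - 2 * t)) volume 0 l := by
    have h := ((hii 1 r m1 mr).comp_sub_left 1).comp_mul_left (c := 2)
    have e : (1 - r) / 2 = l := by rw [hr]; ring
    simpa [e] using h
  have hchange : ∫ x in r..1, S x = 2 * ∫ t in (0 : ℝ)..l, S (1 - 2 * t) := by
    rw [intervalIntegral.integral_comp_sub_mul S two_ne_zero 1]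
    simp [hr]
  have hcurve : ∀ t ∈ Icc 0 l, S t + 2 * S (1 - 2 * t) ≤ 0 := fun t ht => by
    have := hS _ _ _ (Or.inl ⟨ht, rfl, rfl⟩)
    linarith
  have hsum_int : IntervalIntegrable (fun t => S t + 2 * S (1 - 2 * t)) volume 0 l :=
    (hii 0 l m0 ml).add (hcomp.const_mul 2)
  have hsplit : ∫ x in Icc (0 : ℝ) 1, S x =
      (∫ t in (0 : ℝ)..l, (S t + 2 * S (1 - 2 * t))) + ∫ x in Icc l r, S x := by
    rw [intervalIntegral.integral_add (hii 0 l m0 ml) (hcomp.const_mul 2),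
      intervalIntegral.integral_const_mul, ← hchange, integral_Icc_eq_integral_Ioc,
      integral_Icc_eq_integral_Ioc, ← intervalIntegral.integral_of_le zero_le_one,
      ← intervalIntegral.integral_of_le hlr.le,
      ← intervalIntegral.integral_add_adjacent_intervals (hii 0 l m0 ml) (hii l 1 ml m1),
      ← intervalIntegral.integral_add_adjacent_intervals (hii l r ml mr) (hii r 1 mr m1)]
    ring
  have hcurve_int : 0 ≤ ∫ t in (0 : ℝ)..l, -(S t + 2 * S (1 - 2 * t)) :=
    intervalIntegral.integral_nonneg h0.le fun t ht => neg_nonneg.2 (hcurve t ht)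
  have hcurve_int' := hcurve_int
  rw [intervalIntegral.integral_neg] at hcurve_int'
  have hlog : Real.log (r / l) = 3 - 9 * l := by
    rw [Real.log_div (by linarith) h0.ne']; linarith
  obtain ⟨hsurf, hsurf_eq⟩ := integral_nonpos_of_surface h0 hlr
    (by rw [hlog, hr]; ring) (hint.mono_set (Icc_subset_Icc h0.le (by linarith)))
    (fun x hx y hy z hz h => hS x y z (Or.inr (Or.inr (Or.inr ⟨hx, hy, hz, h⟩))))
  rw [hsplit]
  refine ⟨by linarith, fun hnn => ?_⟩
  have hsurf_ae := hsurf_eq (by linarith)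
  have hzero : ∫ t in (0 : ℝ)..l, -(S t + 2 * S (1 - 2 * t)) = 0 := by
    rw [intervalIntegral.integral_neg]; linarith
  have hcurve_ae : ∀ᵐ t, t ∈ Ioc 0 l → S t + 2 * S (1 - 2 * t) = 0 := by
    rw [intervalIntegral.integral_of_le h0.le] at hzero
    have h := (setIntegral_eq_zero_iff_of_nonneg_ae
      (ae_restrict_of_forall_mem measurableSet_Ioc fun t ht =>
        neg_nonneg.2 (hcurve t (Ioc_subset_Icc_self ht))) hsum_int.1.neg).1 hzero
    filter_upwards [(ae_restrict_iff' measurableSet_Ioc).1 h] with t ht hmem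
    simpa using neg_eq_zero.1 (ht hmem)
  have himg : volume ((fun t : ℝ => 1 - 2 * t) ''
      {t | ¬ (t ∈ Ioc 0 l → S t + 2 * S (1 - 2 * t) = 0)}) = 0 :=
    addHaar_image_eq_zero_of_differentiableOn_of_addHaar_eq_zero volume
      (by fun_prop) (ae_iff.1 hcurve_ae)
  have hne0 : ∀ᵐ x : ℝ, x ≠ 0 := by simp [ae_iff]
  have hne1 : ∀ᵐ x : ℝ, x ≠ 1 := by simp [ae_iff]
  filter_upwards [hcurve_ae, compl_mem_ae_iff.2 himg, hsurf_ae, hne0, hne1]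
    with x hxc hxN hxs hx0 hx1 hx
  rcases le_total x l with h | h
  · refine ⟨_, _, Or.inl ⟨⟨hx.1, h⟩, rfl, rfl⟩, ?_⟩
    linarith [hxc ⟨lt_of_le_of_ne hx.1 hx0.symm, h⟩]
  rcases le_total x r with h' | h'
  · obtain ⟨y, hy, z, hz, hxyz, hsum⟩ := hxs ⟨h, h'⟩
    exact ⟨y, z, Or.inr (Or.inr (Or.inr ⟨⟨h, h'⟩, hy, hz, hxyz⟩)), hsum⟩
  · have hlt : x < 1 := lt_of_le_of_ne hx.2 hx1
    have hmem : (1 - x) / 2 ∈ Ioc 0 l := ⟨by linarith, by rw [hr] at h'; linarith⟩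
    have hxt : 1 - 2 * ((1 - x) / 2) = x := by ring
    refine ⟨(1 - x) / 2, x, Or.inr (Or.inl ⟨⟨hmem.1.le, hmem.2⟩, hxt.symm, hxt.symm⟩), ?_⟩
    by_contra hne
    refine hxN ⟨(1 - x) / 2, fun himp => hne ?_, hxt⟩
    have := himp hmem
    rw [hxt] at this
    linarith

section Potential

variable {l : ℝ}

theorem mul_lam_of_mem_middle (h0 : 0 < l) {x : ℝ} (hx : x ∈ Icc l (1 - 2 * l)) :
    x * lam l x = l * (1 - 2 * l) ^ 2 := by
  have hx0 : 0 < x := h0.trans_le hx.1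
  rw [lam, if_neg (not_lt.2 hx.1)]
  rcases hx.2.lt_or_eq with h | h
  · rw [if_pos h]; field_simp
  · rw [if_neg h.not_lt, h]; ring

theorem continuous_lam (hl : l ∈ Ioo (0 : ℝ) (1 / 6)) : Continuous (lam l) := by
  obtain ⟨h0, h1⟩ := hl
  have heq : lam l = fun x => if x ≤ l then (1 - 2 * x) ^ 2
      else if x ≤ 1 - 2 * l then l * (1 - 2 * l) ^ 2 / max x l else x * (1 - x) / 2 := by
    funext x
    have hne : (1 - 2 * l) ≠ 0 := by linarith
    rcases lt_trichotomy x l with h | h | h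
    · rw [lam, if_pos h, if_pos h.le]
    · rw [lam, if_neg h.not_lt, if_pos (by linarith : x < 1 - 2 * l), if_pos h.le, h]
      field_simp
    · rw [lam, if_neg h.not_gt, if_neg h.not_ge, max_eq_left h.le]
      rcases lt_trichotomy x (1 - 2 * l) with h' | h' | h'
      · rw [if_pos h', if_pos h'.le]
      · rw [if_neg h'.not_lt, if_pos h'.le, h']
        field_simp
        ring
      · rw [if_neg h'.not_gt, if_neg h'.not_ge]
  rw [heq]
  refine Continuous.if_le (by fun_prop) ?_ continuous_id continuous_const ?_
  · refine Continuous.if_le ?_ (by fun_prop) continuous_id continuous_const ?_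
    · refine Continuous.div (by fun_prop) (by fun_prop) fun x => ?_
      exact (h0.trans_le (le_max_right _ _)).ne'
    · rintro x rfl
      rw [max_eq_left (by linarith)]
      have : (1 - 2 * l) ≠ 0 := by linarith
      field_simp
      ring
  · rintro x rfl
    rw [if_pos (by linarith), max_self]
    field_simp

theorem lam_mem_Icc (hl : l ∈ Ioo (0 : ℝ) (1 / 6)) {x : ℝ} (hx : x ∈ Icc (0 : ℝ) 1) :
    lam l x ∈ Icc (0 : ℝ) 1 := by
  obtain ⟨y, z, h⟩ := Contact.exists_of_mem hl hx
  have hy := h.mem_middle hl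
  have hz := h.mem_right hl
  rw [← h.mul_eq_lam hl]
  exact ⟨mul_nonneg hy.1 hz.1, mul_le_one₀ hy.2 hz.1 hz.2⟩

theorem mul_mem_unit {x y : ℝ} (hx : x ∈ Icc (0 : ℝ) 1) (hy : y ∈ Icc (0 : ℝ) 1) :
    x * y ∈ Icc (0 : ℝ) 1 :=
  ⟨mul_nonneg hx.1 hy.1, mul_le_one₀ hx.2 hy.1 hy.2⟩

theorem lam_one (hl : l ∈ Ioo (0 : ℝ) (1 / 6)) : lam l 1 = 0 := by
  obtain ⟨h0, h1⟩ := hl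
  rw [lam, if_neg (by linarith), if_neg (by linarith)]
  norm_num

theorem eq_of_mul_sq_eq {s t : ℝ} (hs : s < 1 / 6) (ht : t < 1 / 6)
    (h : s * (1 - 2 * s) ^ 2 = t * (1 - 2 * t) ^ 2) : s = t := by
  have hfac : (s - t) * (1 - 4 * (s + t) + 4 * (s ^ 2 + s * t + t ^ 2)) = 0 := by
    linear_combination h
  rcases mul_eq_zero.1 hfac with h | h
  · linarith
  · nlinarith [mul_pos (sub_pos.2 hs) (sub_pos.2 ht),
      mul_pos (sub_pos.2 hs) (sub_pos.2 hs), mul_pos (sub_pos.2 ht) (sub_pos.2 ht)]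

theorem mul_lam_cases (hl : l ∈ Ioo (0 : ℝ) (1 / 6)) {x : ℝ} (hx : x ∈ Ioo (0 : ℝ) 1) :
    (∃ t ∈ Ioc 0 l, (x = t ∨ x = 1 - 2 * t) ∧ x * lam l x = t * (1 - 2 * t) ^ 2) ∨
      (x ∈ Icc l (1 - 2 * l) ∧ x * lam l x = l * (1 - 2 * l) ^ 2) := by
  rcases lt_or_ge x l with h | h
  · exact Or.inl ⟨x, ⟨hx.1, h.le⟩, Or.inl rfl, by rw [lam, if_pos h]⟩
  rcases le_or_gt x (1 - 2 * l) with h' | h'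
  · exact Or.inr ⟨⟨h, h'⟩, mul_lam_of_mem_middle hl.1 ⟨h, h'⟩⟩
  · refine Or.inl ⟨(1 - x) / 2, ⟨by linarith [hx.2], by linarith⟩, Or.inr (by ring), ?_⟩
    rw [lam, if_neg (not_lt.2 h), if_neg h'.not_gt]
    ring

/-- A triple of interior points at which `x λ(x) = y λ(y) = z λ(z) = xyz` is a contact triple. -/
theorem contact_of_mul_lam_eq (hl : l ∈ Ioo (0 : ℝ) (1 / 6)) {x y z : ℝ}
    (hx : x ∈ Ioo (0 : ℝ) 1) (hy : y ∈ Ioo (0 : ℝ) 1) (hz : z ∈ Ioo (0 : ℝ) 1)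
    (hxv : x * lam l x = x * y * z) (hyv : y * lam l y = x * y * z)
    (hzv : z * lam l z = x * y * z) : Contact l x y z := by
  obtain ⟨h0, h1⟩ := id hl
  by_cases hc : x * y * z = l * (1 - 2 * l) ^ 2
  · have mid : ∀ w ∈ Ioo (0 : ℝ) 1, w * lam l w = x * y * z → w ∈ Icc l (1 - 2 * l) := by
      intro w hw hwv
      rcases mul_lam_cases hl hw with ⟨t, ht, hwt, e⟩ | h
      · have : t = l := eq_of_mul_sq_eq (ht.2.trans_lt h1) h1 (by
          rw [← e, hwv, hc])
        subst this
        rcases hwt with rfl | rfl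
        · exact ⟨le_rfl, by linarith⟩
        · exact ⟨by linarith, le_rfl⟩
      · exact h.1
    exact Or.inr (Or.inr (Or.inr ⟨mid x hx hxv, mid y hy hyv, mid z hz hzv, hc⟩))
  · have outer : ∀ w ∈ Ioo (0 : ℝ) 1, w * lam l w = x * y * z →
        ∃ t ∈ Ioc 0 l, (w = t ∨ w = 1 - 2 * t) ∧ x * y * z = t * (1 - 2 * t) ^ 2 := by
      intro w hw hwv
      rcases mul_lam_cases hl hw with ⟨t, ht, hwt, e⟩ | h
      · exact ⟨t, ht, hwt, by rw [← hwv, e]⟩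
      · exact absurd (hwv.symm.trans h.2) hc
    obtain ⟨t, ht, hxt, e⟩ := outer x hx hxv
    have same : ∀ w ∈ Ioo (0 : ℝ) 1, w * lam l w = x * y * z → w = t ∨ w = 1 - 2 * t := by
      intro w hw hwv
      obtain ⟨s, hs, hws, e'⟩ := outer w hw hwv
      have : s = t := eq_of_mul_sq_eq (hs.2.trans_lt h1) (ht.2.trans_lt h1)
        (by rw [← e, e'])
      rwa [this] at hws
    have ht0 := ht.1
    have htl := ht.2
    set w := 1 - 2 * t with hw
    have htw : t < w := by linarith
    have hw0 : 0 < w := by linarith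
    have hmem : t ∈ Icc 0 l := ⟨ht0.le, htl⟩
    have n₁ : t * t * t ≠ t * w ^ 2 := fun h => by nlinarith [mul_pos ht0 hw0, mul_pos ht0 ht0]
    have n₂ : t * t * w ≠ t * w ^ 2 := fun h => by nlinarith [mul_pos ht0 hw0]
    have n₃ : w * w * w ≠ t * w ^ 2 := fun h => by nlinarith [mul_pos hw0 hw0]
    rcases hxt with rfl | hx' <;> rcases same y hy hyv with hy' | hy' <;>
      rcases same z hz hzv with hz' | hz' <;> simp only [hy', hz'] at e ⊢
    · exact absurd e n₁
    · exact absurd e n₂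
    · exact absurd (by linarith) n₂
    · exact Or.inl ⟨hmem, rfl, rfl⟩
    · exact absurd (by rw [hx'] at e; linarith) n₂
    · exact Or.inr (Or.inl ⟨hmem, rfl, hx'⟩)
    · exact Or.inr (Or.inr (Or.inl ⟨hmem, hx', rfl⟩))
    · exact absurd (by rw [hx'] at e; linarith) n₃

variable {C C' : ℝ → ℝ}

theorem continuousOn_lam_mul_deriv (hl : l ∈ Ioo (0 : ℝ) (1 / 6))
    (hC'cont : ContinuousOn C' (Icc (0 : ℝ) 1)) :
    ContinuousOn (fun p : ℝ × ℝ => lam l p.2 * C' (p.1 * lam l p.2))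
      (Icc (0 : ℝ) 1 ×ˢ Icc (0 : ℝ) 1) := by
  have h := continuous_lam hl
  refine ContinuousOn.mul (by fun_prop) (hC'cont.comp (by fun_prop) ?_)
  rintro ⟨s, t⟩ ⟨hs, ht⟩
  exact mul_mem_unit hs (lam_mem_Icc hl ht)

theorem hasDerivWithinAt_fhat (hl : l ∈ Ioo (0 : ℝ) (1 / 6))
    (hC'cont : ContinuousOn C' (Icc (0 : ℝ) 1)) {x : ℝ} (hx : x ∈ Icc (0 : ℝ) 1) :
    HasDerivWithinAt (fhat l C') (lam l x * C' (x * lam l x)) (Icc 0 1) x := by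
  have hcont : ContinuousOn (fun t => lam l t * C' (t * lam l t)) (Icc (0 : ℝ) 1) :=
    (continuousOn_lam_mul_deriv hl hC'cont).comp (f := fun t : ℝ => (t, t)) (by fun_prop)
      fun t ht => ⟨ht, ht⟩
  set ρ : ℝ → ℝ := IccExtend zero_le_one ((Icc (0 : ℝ) 1).domRestrict
    fun t => lam l t * C' (t * lam l t)) with hρ
  have hρc : Continuous ρ := hcont.domRestrict.Icc_extend'
  have hρv : ∀ t ∈ Icc (0 : ℝ) 1, ρ t = lam l t * C' (t * lam l t) := fun t ht => by
    rw [hρ, IccExtend_of_mem _ _ ht]; rfl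
  have hfhat : ∀ s ∈ Icc (0 : ℝ) 1, fhat l C' s = ∫ t in (0 : ℝ)..s, ρ t := fun s hs => by
    refine intervalIntegral.integral_congr fun t ht => (hρv t ?_).symm
    rw [uIcc_of_le hs.1] at ht
    exact ⟨ht.1, ht.2.trans hs.2⟩
  rw [← hρv x hx]
  exact ((hρc.integral_hasStrictDerivAt 0 x).hasDerivAt.hasDerivWithinAt).congr hfhat (hfhat x hx)

theorem continuousOn_fhat (hl : l ∈ Ioo (0 : ℝ) (1 / 6))
    (hC'cont : ContinuousOn C' (Icc (0 : ℝ) 1)) : ContinuousOn (fhat l C') (Icc 0 1) :=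
  fun _ hx => (hasDerivWithinAt_fhat hl hC'cont hx).continuousWithinAt

theorem fhat_zero : fhat l C' 0 = 0 := by simp [fhat]

theorem deriv_pos_of_strictMonoOn (hU : StrictMonoOn (fun t => t * C' t) (Icc (0 : ℝ) 1)) {t : ℝ}
    (ht : t ∈ Ioc (0 : ℝ) 1) : 0 < t * C' t := by
  have := hU ⟨le_rfl, zero_le_one⟩ (Ioc_subset_Icc_self ht) ht.1
  simpa using this

theorem fhat_monotoneOn (hl : l ∈ Ioo (0 : ℝ) (1 / 6))
    (hC'cont : ContinuousOn C' (Icc (0 : ℝ) 1))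
    (hU : StrictMonoOn (fun t => t * C' t) (Icc (0 : ℝ) 1)) :
    MonotoneOn (fhat l C') (Icc 0 1) := by
  refine monotoneOn_of_hasDerivWithinAt_nonneg (convex_Icc 0 1) (continuousOn_fhat hl hC'cont)
    (f' := fun x => lam l x * C' (x * lam l x)) (fun x hx => ?_) fun x hx => ?_
  · exact (hasDerivWithinAt_fhat hl hC'cont (interior_subset hx)).mono interior_subset
  · rw [interior_Icc] at hx
    have hx' := Ioo_subset_Icc_self hx
    have hlam := lam_mem_Icc hl hx'
    rcases hlam.1.eq_or_lt with h | h
    · rw [← h]; simp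
    · have hpos : 0 < x * lam l x := mul_pos hx.1 h
      exact mul_nonneg h.le (pos_of_mul_pos_right
        (deriv_pos_of_strictMonoOn hU ⟨hpos, (mul_mem_unit hx' hlam).2⟩) hpos.le).le

theorem continuousOn_of_hasDerivWithinAt
    (hC : ∀ t ∈ Icc (0 : ℝ) 1, HasDerivWithinAt C (C' t) (Icc (0 : ℝ) 1) t) :
    ContinuousOn C (Icc 0 1) := fun t ht => (hC t ht).continuousWithinAt

theorem fhat_curve (hC : ∀ t ∈ Icc (0 : ℝ) 1, HasDerivWithinAt C (C' t) (Icc (0 : ℝ) 1) t)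
    (hl : l ∈ Ioo (0 : ℝ) (1 / 6)) (hC'cont : ContinuousOn C' (Icc (0 : ℝ) 1)) {t : ℝ}
    (ht : t ∈ Icc 0 l) :
    fhat l C' t + 2 * fhat l C' (1 - 2 * t) + (C 0 - 2 * fhat l C' 1) =
      C (t * (1 - 2 * t) ^ 2) := by
  obtain ⟨h0, h1⟩ := id hl
  have hder : ∀ s ∈ Icc 0 l, HasDerivWithinAt
      (fun s => C (s * (1 - 2 * s) ^ 2) - (fhat l C' s + 2 * fhat l C' (1 - 2 * s))) 0
      (Icc 0 l) s := by
    intro s hs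
    have hcon : Contact l s (1 - 2 * s) (1 - 2 * s) := Or.inl ⟨hs, rfl, rfl⟩
    have e₁ := hcon.mul_eq_lam hl
    have e₂ := hcon.rotate.mul_eq_lam hl
    have hmaps₁ : MapsTo (fun s : ℝ => 1 - 2 * s) (Icc 0 l) (Icc 0 1) := fun u hu =>
      ⟨by linarith [hu.2], by linarith [hu.1]⟩
    have hsub : Icc 0 l ⊆ Icc (0 : ℝ) 1 := Icc_subset_Icc le_rfl (by linarith)
    have hmaps₂ : MapsTo (fun s : ℝ => s * (1 - 2 * s) ^ 2) (Icc 0 l) (Icc 0 1) := fun u hu => by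
      show u * (1 - 2 * u) ^ 2 ∈ Icc (0 : ℝ) 1
      rw [sq]; exact mul_mem_unit (hsub hu) (mul_mem_unit (hmaps₁ hu) (hmaps₁ hu))
    have d₁ : HasDerivAt (fun s : ℝ => 1 - 2 * s) (-(2 * 1)) s :=
      ((hasDerivAt_id s).const_mul 2).const_sub 1
    have d₂ : HasDerivAt (fun s : ℝ => s * (1 - 2 * s) ^ 2)
        (1 * (1 - 2 * s) ^ 2 + s * (2 * (1 - 2 * s) ^ 1 * (-(2 * 1)))) s := by
      have := (hasDerivAt_id s).mul (d₁.pow 2)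
      exact this
    have dC := (hC _ (hmaps₂ hs)).comp s d₂.hasDerivWithinAt hmaps₂
    have df := (hasDerivWithinAt_fhat hl hC'cont (hmaps₁ hs)).comp s d₁.hasDerivWithinAt hmaps₁
    have df' := (hasDerivWithinAt_fhat hl hC'cont (hsub hs)).mono hsub
    refine (dC.sub (df'.add (df.const_mul 2))).congr_deriv ?_
    rw [← e₁, ← e₂]
    have a₁ : s * ((1 - 2 * s) * (1 - 2 * s)) = s * (1 - 2 * s) ^ 2 := by ring
    have a₂ : (1 - 2 * s) * ((1 - 2 * s) * s) = s * (1 - 2 * s) ^ 2 := by ring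
    rw [a₁, a₂]
    ring
  have hconst := constant_of_derivWithin_zero (fun s hs => (hder s hs).differentiableWithinAt)
    (fun s hs => (hder s (Ico_subset_Icc_self hs)).derivWithin
      (uniqueDiffOn_Icc h0 s (Ico_subset_Icc_self hs))) t ht
  simp only [zero_mul, mul_zero, sub_zero, fhat_zero] at hconst
  linarith

theorem fhat_middle (hl : l ∈ Ioo (0 : ℝ) (1 / 6)) (hC'cont : ContinuousOn C' (Icc (0 : ℝ) 1)) :
    ∃ a b : ℝ, ∀ x ∈ Icc l (1 - 2 * l), fhat l C' x = a * Real.log x + b := by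
  obtain ⟨h0, h1⟩ := id hl
  set c := l * (1 - 2 * l) ^ 2 with hc
  have hder : ∀ x ∈ Icc l (1 - 2 * l), HasDerivWithinAt
      (fun x => fhat l C' x - c * C' c * Real.log x) 0 (Icc l (1 - 2 * l)) x := by
    intro x hx
    have hx0 : 0 < x := h0.trans_le hx.1
    have hsub : Icc l (1 - 2 * l) ⊆ Icc (0 : ℝ) 1 := Icc_subset_Icc h0.le (by linarith)
    have d := (hasDerivWithinAt_fhat hl hC'cont (hsub hx)).mono hsub
    refine (d.sub ((Real.hasDerivAt_log hx0.ne').hasDerivWithinAt.const_mul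
      (c * C' c))).congr_deriv ?_
    have hm := mul_lam_of_mem_middle h0 hx
    rw [hm, ← hc]
    have : lam l x = c / x := by rw [eq_div_iff hx0.ne', hc]; linarith
    rw [this]
    field_simp
    ring
  refine ⟨c * C' c, fhat l C' l - c * C' c * Real.log l, fun x hx => ?_⟩
  have hconst := constant_of_derivWithin_zero (fun s hs => (hder s hs).differentiableWithinAt)
    (fun s hs => (hder s (Ico_subset_Icc_self hs)).derivWithin
      (uniqueDiffOn_Icc (by linarith) s (Ico_subset_Icc_self hs))) x hx
  linarith

/-- The potential `f̂` saturates the constraint on the contact set. -/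
theorem fhat_eq_of_contact
    (hC : ∀ t ∈ Icc (0 : ℝ) 1, HasDerivWithinAt C (C' t) (Icc (0 : ℝ) 1) t)
    (hl : l ∈ Ioo (0 : ℝ) (1 / 6)) (hC'cont : ContinuousOn C' (Icc (0 : ℝ) 1)) {x y z : ℝ}
    (h : Contact l x y z) :
    fhat l C' x + fhat l C' y + fhat l C' z + (C 0 - 2 * fhat l C' 1) = C (x * y * z) := by
  obtain ⟨h0, h1⟩ := id hl
  rcases h with ⟨hx, rfl, rfl⟩ | ⟨hy, rfl, rfl⟩ | ⟨hz, rfl, rfl⟩ | ⟨hx, hy, hz, h⟩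
  · rw [show x * (1 - 2 * x) * (1 - 2 * x) = x * (1 - 2 * x) ^ 2 by ring]
    linarith [fhat_curve hC hl hC'cont hx]
  · rw [show (1 - 2 * y) * y * (1 - 2 * y) = y * (1 - 2 * y) ^ 2 by ring]
    linarith [fhat_curve hC hl hC'cont hy]
  · rw [show (1 - 2 * z) * (1 - 2 * z) * z = z * (1 - 2 * z) ^ 2 by ring]
    linarith [fhat_curve hC hl hC'cont hz]
  · obtain ⟨a, b, hab⟩ := fhat_middle (C' := C') hl hC'cont
    have hcurve := fhat_curve hC hl hC'cont (right_mem_Icc.2 h0.le)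
    have hx0 : 0 < x := h0.trans_le hx.1
    have hy0 : 0 < y := h0.trans_le hy.1
    have hz0 : 0 < z := h0.trans_le hz.1
    have hr0 : 0 < 1 - 2 * l := by linarith
    have hlog := congrArg Real.log h
    rw [Real.log_mul (by positivity) hz0.ne', Real.log_mul hx0.ne' hy0.ne',
      Real.log_mul h0.ne' (by positivity), Real.log_pow] at hlog
    push_cast at hlog
    rw [h, ← hcurve, hab x hx, hab y hy, hab z hz, hab l ⟨le_rfl, by linarith⟩,
      hab _ ⟨by linarith, le_rfl⟩]
    linear_combination a * hlog

end Potential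

section Duality

variable {l : ℝ} {C C' f g h : ℝ → ℝ}

theorem mul_lam_eq_of_isMinOn
    (hC : ∀ t ∈ Icc (0 : ℝ) 1, HasDerivWithinAt C (C' t) (Icc (0 : ℝ) 1) t)
    (hl : l ∈ Ioo (0 : ℝ) (1 / 6)) (hC'cont : ContinuousOn C' (Icc (0 : ℝ) 1))
    (hU : StrictMonoOn (fun t => t * C' t) (Icc (0 : ℝ) 1)) {x v : ℝ} (hx : x ∈ Ioc (0 : ℝ) 1)
    (hv : v ∈ Ioc (0 : ℝ) 1)
    (hmin : IsMinOn (fun s => C (s * v) - fhat l C' s) (Icc 0 1) x) :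
    x < 1 ∧ x * lam l x = x * v := by
  have hx' := Ioc_subset_Icc_self hx
  have hv' := Ioc_subset_Icc_self hv
  have hder : HasDerivWithinAt (fun s => C (s * v) - fhat l C' s)
      (C' (x * v) * (1 * v) - lam l x * C' (x * lam l x)) (Icc 0 1) x :=
    ((hC _ (mul_mem_unit hx' hv')).comp x (((hasDerivAt_id x).mul_const v).hasDerivWithinAt)
      fun s hs => mul_mem_unit hs hv').sub (hasDerivWithinAt_fhat hl hC'cont hx')
  have hdir : ∀ y ∈ Icc (0 : ℝ) 1,
      0 ≤ (y - x) * (C' (x * v) * (1 * v) - lam l x * C' (x * lam l x)) := fun y hy => by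
    have := hmin.localize.hasFDerivWithinAt_nonneg hder.hasFDerivWithinAt
      (sub_mem_posTangentConeAt_of_segment_subset ((convex_Icc (0 : ℝ) 1).segment_subset hx' hy))
    simpa using this
  have h₀ := hdir 0 ⟨le_rfl, zero_le_one⟩
  have h₁ := hdir 1 ⟨zero_le_one, le_rfl⟩
  have hlt : x < 1 := by
    refine lt_of_le_of_ne hx.2 ?_
    rintro rfl
    rw [lam_one hl] at h₀
    have := deriv_pos_of_strictMonoOn hU hv
    simp only [one_mul] at h₀
    linarith
  refine ⟨hlt, ?_⟩
  have hzero : C' (x * v) * (1 * v) - lam l x * C' (x * lam l x) = 0 :=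
    le_antisymm (by nlinarith [hx.1]) (nonneg_of_mul_nonneg_right h₁ (sub_pos.2 hlt))
  refine hU.injOn (mul_mem_unit hx' (lam_mem_Icc hl hx')) (mul_mem_unit hx' hv') ?_
  show x * lam l x * C' (x * lam l x) = x * v * C' (x * v)
  linear_combination -x * hzero

/-- The triple `(f̂, f̂, f̂ + C 0 - 2 f̂ 1)` satisfies the dual constraint. -/
theorem fhat_add_le (hC : ∀ t ∈ Icc (0 : ℝ) 1, HasDerivWithinAt C (C' t) (Icc (0 : ℝ) 1) t)
    (hl : l ∈ Ioo (0 : ℝ) (1 / 6)) (hC'cont : ContinuousOn C' (Icc (0 : ℝ) 1))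
    (hU : StrictMonoOn (fun t => t * C' t) (Icc (0 : ℝ) 1)) {x y z : ℝ}
    (hx : x ∈ Icc (0 : ℝ) 1) (hy : y ∈ Icc (0 : ℝ) 1) (hz : z ∈ Icc (0 : ℝ) 1) :
    fhat l C' x + fhat l C' y + fhat l C' z + (C 0 - 2 * fhat l C' 1) ≤ C (x * y * z) := by
  have hCc := continuousOn_of_hasDerivWithinAt hC
  have hfc := continuousOn_fhat hl hC'cont
  set Q : Set (ℝ × ℝ × ℝ) := Icc 0 1 ×ˢ Icc 0 1 ×ˢ Icc 0 1
  set D : ℝ × ℝ × ℝ → ℝ := fun p =>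
    C (p.1 * p.2.1 * p.2.2) - fhat l C' p.1 - fhat l C' p.2.1 - fhat l C' p.2.2 with hD
  have hDc : ContinuousOn D Q :=
    (((hCc.comp (by fun_prop) fun p hp => mul_mem_unit (mul_mem_unit hp.1 hp.2.1) hp.2.2).sub
      (hfc.comp continuousOn_fst fun p hp => hp.1)).sub
      (hfc.comp (by fun_prop) fun p hp => hp.2.1)).sub
      (hfc.comp (by fun_prop) fun p hp => hp.2.2)
  obtain ⟨⟨a, b, c⟩, ⟨ha, hb, hc⟩, hmin⟩ :=
    (isCompact_Icc.prod (isCompact_Icc.prod isCompact_Icc)).exists_isMinOn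
      ⟨(x, y, z), hx, hy, hz⟩ hDc
  have hle : ∀ {u v w}, u ∈ Icc (0 : ℝ) 1 → v ∈ Icc (0 : ℝ) 1 → w ∈ Icc (0 : ℝ) 1 →
      D (a, b, c) ≤ D (u, v, w) := fun hu hv hw => hmin ⟨hu, hv, hw⟩
  suffices C 0 - 2 * fhat l C' 1 ≤ D (a, b, c) by
    have := this.trans (hle hx hy hz)
    simp only [hD] at this
    linarith
  have hone : ∀ s ∈ Icc (0 : ℝ) 1, fhat l C' s ≤ fhat l C' 1 := fun s hs =>
    fhat_monotoneOn hl hC'cont hU hs ⟨zero_le_one, le_rfl⟩ hs.2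
  have h1a := hone a ha
  have h1b := hone b hb
  have h1c := hone c hc
  simp only [hD] at hle ⊢
  rcases ha.1.eq_or_lt with rfl | ha0
  · simp only [zero_mul, fhat_zero]; linarith
  rcases hb.1.eq_or_lt with rfl | hb0
  · simp only [zero_mul, mul_zero, fhat_zero]; linarith
  rcases hc.1.eq_or_lt with rfl | hc0
  · simp only [mul_zero, fhat_zero]; linarith
  obtain ⟨ha1, hav⟩ := mul_lam_eq_of_isMinOn hC hl hC'cont hU ⟨ha0, ha.2⟩
    ⟨mul_pos hb0 hc0, (mul_mem_unit hb hc).2⟩ fun s hs => by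
      show C (a * (b * c)) - fhat l C' a ≤ C (s * (b * c)) - fhat l C' s
      have := hle hs hb hc
      rw [← mul_assoc, ← mul_assoc]
      linarith
  obtain ⟨hb1, hbv⟩ := mul_lam_eq_of_isMinOn hC hl hC'cont hU ⟨hb0, hb.2⟩
    ⟨mul_pos ha0 hc0, (mul_mem_unit ha hc).2⟩ fun s hs => by
      show C (b * (a * c)) - fhat l C' b ≤ C (s * (a * c)) - fhat l C' s
      have := hle ha hs hc
      rw [mul_left_comm, ← mul_assoc, mul_left_comm s, ← mul_assoc]
      linarith
  obtain ⟨hc1, hcv⟩ := mul_lam_eq_of_isMinOn hC hl hC'cont hU ⟨hc0, hc.2⟩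
    ⟨mul_pos ha0 hb0, (mul_mem_unit ha hb).2⟩ fun s hs => by
      show C (c * (a * b)) - fhat l C' c ≤ C (s * (a * b)) - fhat l C' s
      have := hle ha hb hs
      rw [mul_comm, mul_comm s]
      linarith
  have := fhat_eq_of_contact hC hl hC'cont (contact_of_mul_lam_eq hl ⟨ha0, ha1⟩ ⟨hb0, hb1⟩
    ⟨hc0, hc1⟩ (by linarith) (by linarith) (by linarith))
  linarith

/-- A function on a subset of `ℝ` meeting every interval between its points, with locally
uniformly vanishing difference quotients, is constant. -/
theorem eq_of_local_slope_le {A : Set ℝ} {G : ℝ → ℝ}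
    (hA : ∀ x ∈ A, ∀ x' ∈ A, ∀ a b, x ≤ a → a < b → b ≤ x' → ∃ m ∈ A, a < m ∧ m < b)
    (hG : ∀ ε > 0, ∃ δ > 0, ∀ x ∈ A, ∀ x' ∈ A, x < x' → x' - x < δ →
      |G x' - G x| ≤ ε * (x' - x)) {x x' : ℝ} (hx : x ∈ A) (hx' : x' ∈ A) : G x = G x' := by
  wlog hxx : x ≤ x' generalizing x x'
  · exact (this hx' hx (le_of_not_ge hxx)).symm
  have hlip : ∀ ε > 0, |G x' - G x| ≤ ε * (x' - x) := by
    intro ε hε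
    obtain ⟨δ, hδ, hloc⟩ := hG ε hε
    have key : ∀ n : ℕ, ∀ u ∈ A, u ≤ x' → x' - u ≤ n * (δ / 2) →
        |G x' - G u| ≤ ε * (x' - u) := by
      intro n
      induction n with
      | zero =>
        intro u _ hux hu
        have : u = x' := by norm_num at hu; linarith
        simp [this]
      | succ n ih =>
        intro u hu hux hn
        rcases hux.eq_or_lt with rfl | hlt
        · simp
        rcases lt_or_ge (x' - u) δ with hd | hd
        · exact hloc u hu x' hx' hlt hd
        obtain ⟨m, hm, hm₁, hm₂⟩ := hA u hu x' hx' (u + δ / 2) (u + δ) (by linarith)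
          (by linarith) (by linarith)
        push_cast at hn
        have h₁ := ih m hm (by linarith) (by linarith)
        have h₂ := hloc u hu m hm (by linarith) (by linarith)
        calc |G x' - G u| ≤ |G x' - G m| + |G m - G u| := abs_sub_le _ _ _
          _ ≤ ε * (x' - u) := by linarith
    obtain ⟨n, hn⟩ := exists_nat_ge ((x' - x) / (δ / 2))
    exact key n x hx hxx (by rwa [div_le_iff₀ (by linarith)] at hn)
  have hzero : |G x' - G x| ≤ 0 := by
    refine le_of_forall_pos_le_add fun ε hε => ?_
    have h := hlip (ε / (x' - x + 1)) (by apply div_pos hε; linarith)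
    rw [div_mul_eq_mul_div, le_div_iff₀ (by linarith)] at h
    nlinarith [abs_nonneg (G x' - G x)]
  linarith [abs_nonpos_iff.1 hzero]

theorem exists_comp_mul_sub_eq
    (hC : ∀ t ∈ Icc (0 : ℝ) 1, HasDerivWithinAt C (C' t) (Icc (0 : ℝ) 1) t) {v x x' : ℝ}
    (hv : v ∈ Icc (0 : ℝ) 1) (hx : 0 ≤ x) (hlt : x < x') (hx' : x' ≤ 1) :
    ∃ ξ ∈ Ioo x x', C (x' * v) - C (x * v) = (x' - x) * (v * C' (ξ * v)) := by
  have hmaps : MapsTo (fun s : ℝ => s * v) (Icc 0 1) (Icc 0 1) := fun s hs => mul_mem_unit hs hv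
  have hder : ∀ s ∈ Icc (0 : ℝ) 1,
      HasDerivWithinAt (fun s => C (s * v)) (C' (s * v) * (1 * v)) (Icc 0 1) s := fun s hs =>
    (hC _ (hmaps hs)).comp s (((hasDerivAt_id s).mul_const v).hasDerivWithinAt) hmaps
  have hsub : Icc x x' ⊆ Icc 0 1 := Icc_subset_Icc hx hx'
  obtain ⟨ξ, hξ, e⟩ := exists_hasDerivAt_eq_slope (fun s => C (s * v))
    (fun s => C' (s * v) * (1 * v)) hlt
    (fun s hs => ((hder s (hsub hs)).continuousWithinAt).mono hsub)
    fun s hs => (hder s (hsub (Ioo_subset_Icc_self hs))).hasDerivAt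
      (Icc_mem_nhds (hx.trans_lt hs.1) (hs.2.trans_le hx'))
  refine ⟨ξ, hξ, ?_⟩
  rw [eq_div_iff (sub_pos.2 hlt).ne'] at e
  linear_combination -e

/-- A component of an admissible triple that saturates the constraint on the contact set almost
everywhere agrees with `f̂` up to a constant. -/
theorem ae_eq_fhat_add_const
    (hC : ∀ t ∈ Icc (0 : ℝ) 1, HasDerivWithinAt C (C' t) (Icc (0 : ℝ) 1) t)
    (hl : l ∈ Ioo (0 : ℝ) (1 / 6)) (hC'cont : ContinuousOn C' (Icc (0 : ℝ) 1))
    (hU : StrictMonoOn (fun t => t * C' t) (Icc (0 : ℝ) 1))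
    (hle : ∀ x ∈ Icc (0 : ℝ) 1, ∀ y ∈ Icc (0 : ℝ) 1, ∀ z ∈ Icc (0 : ℝ) 1,
      f x + g y + h z ≤ C (x * y * z))
    (heq : ∀ᵐ x, x ∈ Icc (0 : ℝ) 1 → ∃ y z, Contact l x y z ∧ f x + g y + h z = C (x * y * z)) :
    ∃ k, ∀ᵐ x, x ∈ Icc (0 : ℝ) 1 → f x = fhat l C' x + k := by
  have hdense := Measure.dense_of_ae heq
  set A : Set ℝ := {x | x ∈ Icc (0 : ℝ) 1 ∧
    ∃ y z, Contact l x y z ∧ f x + g y + h z = C (x * y * z)}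
  have hfA : ∀ x ∈ A, ∀ x' ∈ Icc (0 : ℝ) 1,
      f x' - f x ≤ C (x' * lam l x) - C (x * lam l x) ∧
      fhat l C' x' - fhat l C' x ≤ C (x' * lam l x) - C (x * lam l x) := by
    rintro x ⟨-, y, z, hcon, e⟩ x' hx'
    have hy := hcon.mem_middle hl
    have hz := hcon.mem_right hl
    have e' := fhat_eq_of_contact hC hl hC'cont hcon
    have h₁ := hle x' hx' y hy z hz
    have h₂ := fhat_add_le hC hl hC'cont hU hx' hy hz
    rw [← hcon.mul_eq_lam hl, ← mul_assoc, ← mul_assoc]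
    constructor <;> linarith
  have hcons : ∀ x ∈ A, ∀ x' ∈ A, f x - fhat l C' x = f x' - fhat l C' x' := by
    intro x hx x' hx'
    refine eq_of_local_slope_le (A := A) (G := fun x => f x - fhat l C' x) ?_ ?_ hx hx'
    · intro x hx x' hx' a b hxa hab hbx
      obtain ⟨m, hm, hm₁, hm₂⟩ := hdense.exists_between hab
      have hm01 : m ∈ Icc (0 : ℝ) 1 :=
        ⟨by linarith [hx.1.1], by linarith [hx'.1.2]⟩
      exact ⟨m, ⟨hm01, hm hm01⟩, hm₁, hm₂⟩
    · intro ε hε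
      have huc := (isCompact_Icc.prod isCompact_Icc).uniformContinuousOn_of_continuous
        (continuousOn_lam_mul_deriv hl hC'cont)
      obtain ⟨δ, hδ, huc⟩ := Metric.uniformContinuousOn_iff.1 huc ε hε
      refine ⟨δ, hδ, fun x hx x' hx' hlt hd => ?_⟩
      obtain ⟨ξ, hξ, e⟩ := exists_comp_mul_sub_eq hC (lam_mem_Icc hl hx.1) hx.1.1 hlt hx'.1.2
      obtain ⟨η, hη, e'⟩ := exists_comp_mul_sub_eq hC (lam_mem_Icc hl hx'.1) hx.1.1 hlt hx'.1.2
      have hclose := huc (ξ, x)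
        ⟨⟨hx.1.1.trans hξ.1.le, hξ.2.le.trans hx'.1.2⟩, hx.1⟩ (η, x')
        ⟨⟨hx.1.1.trans hη.1.le, hη.2.le.trans hx'.1.2⟩, hx'.1⟩ (by
          rw [Prod.dist_eq, max_lt_iff, Real.dist_eq, Real.dist_eq, abs_lt, abs_lt]
          refine ⟨⟨?_, ?_⟩, ?_, ?_⟩ <;> simp only <;> linarith [hξ.1, hξ.2, hη.1, hη.2])
      rw [Real.dist_eq] at hclose
      obtain ⟨h₁, h₂⟩ := hfA x hx x' hx'.1
      obtain ⟨h₃, h₄⟩ := hfA x' hx' x hx.1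
      have hpos := sub_pos.2 hlt
      have hbound : |(f x' - fhat l C' x') - (f x - fhat l C' x)| ≤ (x' - x) *
          |lam l x * C' (ξ * lam l x) - lam l x' * C' (η * lam l x')| := by
        nth_rw 1 [← abs_of_pos hpos]
        rw [← abs_mul, mul_sub, ← e, ← e']
        refine (abs_le.2 ⟨?_, ?_⟩).trans (le_abs_self _) <;> linarith
      refine hbound.trans ?_
      rw [mul_comm]
      exact mul_le_mul_of_nonneg_right hclose.le hpos.le
  obtain ⟨m, hm, hm₁, hm₂⟩ := hdense.exists_between (zero_lt_one (α := ℝ))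
  have hmA : m ∈ A := ⟨⟨hm₁.le, hm₂.le⟩, hm ⟨hm₁.le, hm₂.le⟩⟩
  refine ⟨f m - fhat l C' m, ?_⟩
  filter_upwards [heq] with x hx hx01
  linarith [hcons x ⟨hx01, hx hx01⟩ m hmA]

theorem le_of_ae_le_of_continuousOn {φ : ℝ → ℝ} {a : ℝ} (hφ : ContinuousOn φ (Icc (0 : ℝ) 1))
    (hae : ∀ᵐ x, x ∈ Icc (0 : ℝ) 1 → a ≤ φ x) {x : ℝ} (hx : x ∈ Icc (0 : ℝ) 1) : a ≤ φ x := by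
  have hcl : x ∈ closure (Ioo (0 : ℝ) 1 ∩ {x | x ∈ Icc (0 : ℝ) 1 → a ≤ φ x}) := by
    have := closure_mono ((Measure.dense_of_ae hae).open_subset_closure_inter
      (isOpen_Ioo (a := (0 : ℝ)) (b := 1)))
    rw [closure_Ioo zero_ne_one, closure_closure] at this
    exact this hx
  exact ContinuousWithinAt.closure_le hcl continuousWithinAt_const
    ((hφ x hx).mono fun y hy => Ioo_subset_Icc_self hy.1)
    fun y hy => hy.2 (Ioo_subset_Icc_self hy.1)

/-- The constraint, saturated almost everywhere by two components, bounds the third. -/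
theorem le_fhat_add_of_ae_eq
    (hC : ∀ t ∈ Icc (0 : ℝ) 1, HasDerivWithinAt C (C' t) (Icc (0 : ℝ) 1) t)
    (hl : l ∈ Ioo (0 : ℝ) (1 / 6)) (hC'cont : ContinuousOn C' (Icc (0 : ℝ) 1)) {a b c : ℝ}
    (hsum : a + b + c = C 0 - 2 * fhat l C' 1)
    (hle : ∀ x ∈ Icc (0 : ℝ) 1, ∀ y ∈ Icc (0 : ℝ) 1, ∀ z ∈ Icc (0 : ℝ) 1,
      f x + g y + h z ≤ C (x * y * z))
    (hg : ∀ᵐ y, y ∈ Icc (0 : ℝ) 1 → g y = fhat l C' y + b)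
    (hh : ∀ᵐ z, z ∈ Icc (0 : ℝ) 1 → h z = fhat l C' z + c) {x : ℝ} (hx : x ∈ Icc (0 : ℝ) 1) :
    f x ≤ fhat l C' x + a := by
  have hCc := continuousOn_of_hasDerivWithinAt hC
  have hfc := continuousOn_fhat hl hC'cont
  have hle' : ∀ y ∈ Icc (0 : ℝ) 1, ∀ z ∈ Icc (0 : ℝ) 1,
      f x + g y + c ≤ C (x * y * z) - fhat l C' z := fun y hy z hz =>
    le_of_ae_le_of_continuousOn (φ := fun z => C (x * y * z) - fhat l C' z)
      ((hCc.comp (by fun_prop) fun z hz => mul_mem_unit (mul_mem_unit hx hy) hz).sub hfc)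
      (by
        filter_upwards [hh] with w hw hw01
        linarith [hw hw01, hle x hx y hy w hw01]) hz
  have hle'' : ∀ z ∈ Icc (0 : ℝ) 1, ∀ y ∈ Icc (0 : ℝ) 1,
      f x + b + c + fhat l C' z ≤ C (x * y * z) - fhat l C' y := fun z hz y hy =>
    le_of_ae_le_of_continuousOn (φ := fun y => C (x * y * z) - fhat l C' y)
      ((hCc.comp (by fun_prop) fun y hy => mul_mem_unit (mul_mem_unit hx hy) hz).sub hfc)
      (by
        filter_upwards [hg] with w hw hw01
        linarith [hw hw01, hle' w hw01 z hz]) hy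
  obtain ⟨y, z, hcon⟩ := Contact.exists_of_mem hl hx
  linarith [hle'' z (hcon.mem_right hl) y (hcon.mem_middle hl),
    fhat_eq_of_contact hC hl hC'cont hcon]

theorem Admissible.integral_le (hadm : Admissible C f g h)
    (hC : ∀ t ∈ Icc (0 : ℝ) 1, HasDerivWithinAt C (C' t) (Icc (0 : ℝ) 1) t)
    (hl : l ∈ Ioo (0 : ℝ) (1 / 6)) (hC'cont : ContinuousOn C' (Icc (0 : ℝ) 1))
    (hroot : 9 * l + Real.log (1 - 2 * l) - Real.log l = 3) :
    (∫ x in Icc (0 : ℝ) 1, f x) + (∫ x in Icc (0 : ℝ) 1, g x) + (∫ x in Icc (0 : ℝ) 1, h x) ≤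
        3 * (∫ x in Icc (0 : ℝ) 1, fhat l C' x) + (C 0 - 2 * fhat l C' 1) ∧
      (3 * (∫ x in Icc (0 : ℝ) 1, fhat l C' x) + (C 0 - 2 * fhat l C' 1) ≤
        (∫ x in Icc (0 : ℝ) 1, f x) + (∫ x in Icc (0 : ℝ) 1, g x) +
          (∫ x in Icc (0 : ℝ) 1, h x) →
        ∀ᵐ x, x ∈ Icc (0 : ℝ) 1 → ∃ y z, Contact l x y z ∧ f x + g y + h z = C (x * y * z) ∧
          g x + h y + f z = C (x * y * z) ∧ h x + f y + g z = C (x * y * z)) := by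
  obtain ⟨hf, hg, hh, hle⟩ := hadm
  have hfh : IntegrableOn (fhat l C') (Icc 0 1) :=
    (continuousOn_fhat hl hC'cont).integrableOn_Icc
  set K := C 0 - 2 * fhat l C' 1
  set S : ℝ → ℝ := fun x => f x + g x + h x - (3 * fhat l C' x + K) with hS
  have hKint : IntegrableOn (fun _ : ℝ => K) (Icc 0 1) :=
    continuousOn_const.integrableOn_Icc
  have hSint : IntegrableOn S (Icc 0 1) :=
    ((hf.add hg).add hh).sub ((hfh.const_mul 3).add hKint)
  have hSval : ∫ x in Icc (0 : ℝ) 1, S x = (∫ x in Icc (0 : ℝ) 1, f x) +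
      (∫ x in Icc (0 : ℝ) 1, g x) + (∫ x in Icc (0 : ℝ) 1, h x) -
        (3 * (∫ x in Icc (0 : ℝ) 1, fhat l C' x) + K) := by
    rw [MeasureTheory.integral_sub (f := fun x => f x + g x + h x)
        (g := fun x => 3 * fhat l C' x + K) ((hf.add hg).add hh) ((hfh.const_mul 3).add hKint),
      MeasureTheory.integral_add (f := fun x => f x + g x) (hf.add hg) hh,
      MeasureTheory.integral_add hf hg, MeasureTheory.integral_add (hfh.const_mul 3) hKint,
      MeasureTheory.integral_const_mul]
    simp
  have hterms : ∀ x y z, Contact l x y z →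
      S x + S y + S z = (f x + g y + h z - C (x * y * z)) + (g x + h y + f z - C (x * y * z)) +
        (h x + f y + g z - C (x * y * z)) ∧ f x + g y + h z ≤ C (x * y * z) ∧
        g x + h y + f z ≤ C (x * y * z) ∧ h x + f y + g z ≤ C (x * y * z) := by
    intro x y z hcon
    have hx := hcon.mem_left hl
    have hy := hcon.mem_middle hl
    have hz := hcon.mem_right hl
    have h₂ := hle z hz x hx y hy
    have h₃ := hle y hy z hz x hx
    rw [show z * x * y = x * y * z by ring] at h₂
    rw [show y * z * x = x * y * z by ring] at h₃
    refine ⟨?_, hle x hx y hy z hz, by linarith, by linarith⟩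
    have := fhat_eq_of_contact hC hl hC'cont hcon
    simp only [hS]
    linear_combination -3 * this
  obtain ⟨hnonpos, hzero⟩ := integral_nonpos_of_contact hl hroot hSint fun x y z hcon => by
    obtain ⟨e, h₁, h₂, h₃⟩ := hterms x y z hcon
    linarith
  refine ⟨by linarith, fun hge => ?_⟩
  filter_upwards [hzero (by linarith)] with x hx hx01
  obtain ⟨y, z, hcon, e⟩ := hx hx01
  obtain ⟨e', h₁, h₂, h₃⟩ := hterms x y z hcon
  exact ⟨y, z, hcon, by linarith, by linarith, by linarith⟩

theorem setIntegral_eq_of_ae_eq_fhat_add (hfh : IntegrableOn (fhat l C') (Icc 0 1)) {k : ℝ}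
    (hae : ∀ᵐ x ∂(volume.restrict (Icc (0 : ℝ) 1)), f x = fhat l C' x + k) :
    ∫ x in Icc (0 : ℝ) 1, f x = (∫ x in Icc (0 : ℝ) 1, fhat l C' x) + k := by
  rw [integral_congr_ae hae, integral_add hfh (continuousOn_const.integrableOn_Icc)]
  simp

end Duality

/-- Uniqueness of the dual solution: `(f, g, h)` is a dual solution if and only if there are
constants `C_f + C_g + C_h = C(0) − 2∫₀¹ λ(t)C'(tλ(t)) dt` with `f ≤ f̂ + C_f`, `g ≤ f̂ + C_g`,
`h ≤ f̂ + C_h` everywhere on `[0,1]` and equality Lebesgue-almost everywhere. -/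
theorem dual_solution_unique (C C' : ℝ → ℝ)
    (hC : ∀ t ∈ Set.Icc (0 : ℝ) 1, HasDerivWithinAt C (C' t) (Set.Icc (0 : ℝ) 1) t)
    (hC'cont : ContinuousOn C' (Set.Icc (0 : ℝ) 1))
    (hU : StrictMonoOn (fun t => t * C' t) (Set.Icc (0 : ℝ) 1))
    (l : ℝ) (hl : l ∈ Set.Ioo (0 : ℝ) (1/6))
    (hroot : 9 * l + Real.log (1 - 2*l) - Real.log l = 3)
    (f g h : ℝ → ℝ)
    (hf : IntegrableOn f (Set.Icc (0 : ℝ) 1)) (hg : IntegrableOn g (Set.Icc (0 : ℝ) 1))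
    (hh : IntegrableOn h (Set.Icc (0 : ℝ) 1)) :
    IsDualSolution C f g h ↔
      ∃ Cf Cg Ch : ℝ,
        Cf + Cg + Ch = C 0 - 2 * (∫ t in (0 : ℝ)..1, lam l t * C' (t * lam l t)) ∧
        (∀ x ∈ Set.Icc (0 : ℝ) 1, f x ≤ fhat l C' x + Cf) ∧
        (∀ y ∈ Set.Icc (0 : ℝ) 1, g y ≤ fhat l C' y + Cg) ∧
        (∀ z ∈ Set.Icc (0 : ℝ) 1, h z ≤ fhat l C' z + Ch) ∧
        (∀ᵐ x ∂(volume.restrict (Set.Icc (0 : ℝ) 1)), f x = fhat l C' x + Cf) ∧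
        (∀ᵐ y ∂(volume.restrict (Set.Icc (0 : ℝ) 1)), g y = fhat l C' y + Cg) ∧
        (∀ᵐ z ∂(volume.restrict (Set.Icc (0 : ℝ) 1)), h z = fhat l C' z + Ch) := by
  have hfc := continuousOn_fhat hl hC'cont
  have hfh : IntegrableOn (fhat l C') (Icc 0 1) := hfc.integrableOn_Icc
  constructor
  · rintro ⟨hadm, hopt⟩
    have hle := hadm.2.2.2
    set K := C 0 - 2 * fhat l C' 1
    have hint : IntegrableOn (fun x => fhat l C' x + K / 3) (Icc 0 1) :=
      (hfc.add continuousOn_const).integrableOn_Icc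
    have hbest := hopt _ _ _ ⟨hint, hint, hint, fun x hx y hy z hz => by
      linarith [fhat_add_le hC hl hC'cont hU hx hy hz]⟩
    rw [setIntegral_eq_of_ae_eq_fhat_add (k := K / 3) hfh (ae_of_all _ fun _ => rfl)] at hbest
    have hcon := (hadm.integral_le hC hl hC'cont hroot).2 (by linarith)
    have hle₂ : ∀ x ∈ Icc (0 : ℝ) 1, ∀ y ∈ Icc (0 : ℝ) 1, ∀ z ∈ Icc (0 : ℝ) 1,
        g x + h y + f z ≤ C (x * y * z) := fun x hx y hy z hz => by
      have := hle z hz x hx y hy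
      rw [show z * x * y = x * y * z by ring] at this
      linarith
    have hle₃ : ∀ x ∈ Icc (0 : ℝ) 1, ∀ y ∈ Icc (0 : ℝ) 1, ∀ z ∈ Icc (0 : ℝ) 1,
        h x + f y + g z ≤ C (x * y * z) := fun x hx y hy z hz => by
      have := hle₂ z hz x hx y hy
      rw [show z * x * y = x * y * z by ring] at this
      linarith
    obtain ⟨Cf, hCf⟩ := ae_eq_fhat_add_const hC hl hC'cont hU hle <| by
      filter_upwards [hcon] with x hx hx01
      obtain ⟨y, z, hxyz, e, -, -⟩ := hx hx01
      exact ⟨y, z, hxyz, e⟩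
    obtain ⟨Cg, hCg⟩ := ae_eq_fhat_add_const hC hl hC'cont hU hle₂ <| by
      filter_upwards [hcon] with x hx hx01
      obtain ⟨y, z, hxyz, -, e, -⟩ := hx hx01
      exact ⟨y, z, hxyz, e⟩
    obtain ⟨Ch, hCh⟩ := ae_eq_fhat_add_const hC hl hC'cont hU hle₃ <| by
      filter_upwards [hcon] with x hx hx01
      obtain ⟨y, z, hxyz, -, -, e⟩ := hx hx01
      exact ⟨y, z, hxyz, e⟩
    have hf' := (ae_restrict_iff' measurableSet_Icc).2 hCf
    have hg' := (ae_restrict_iff' measurableSet_Icc).2 hCg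
    have hh' := (ae_restrict_iff' measurableSet_Icc).2 hCh
    have hsum : Cf + Cg + Ch = K := by
      have hub := (hadm.integral_le hC hl hC'cont hroot).1
      rw [setIntegral_eq_of_ae_eq_fhat_add hfh hf', setIntegral_eq_of_ae_eq_fhat_add hfh hg',
        setIntegral_eq_of_ae_eq_fhat_add hfh hh'] at hub hbest
      linarith
    exact ⟨Cf, Cg, Ch, hsum,
      fun x hx => le_fhat_add_of_ae_eq hC hl hC'cont hsum hle hCg hCh hx,
      fun x hx => le_fhat_add_of_ae_eq hC hl hC'cont (by linarith) hle₂ hCh hCf hx,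
      fun x hx => le_fhat_add_of_ae_eq hC hl hC'cont (by linarith) hle₃ hCf hCg hx,
      hf', hg', hh'⟩
  · rintro ⟨Cf, Cg, Ch, hsum, hfle, hgle, hhle, hf', hg', hh'⟩
    change Cf + Cg + Ch = C 0 - 2 * fhat l C' 1 at hsum
    refine ⟨⟨hf, hg, hh, fun x hx y hy z hz => ?_⟩, fun f' g' h' hadm => ?_⟩
    · linarith [hfle x hx, hgle y hy, hhle z hz, fhat_add_le hC hl hC'cont hU hx hy hz]
    · rw [setIntegral_eq_of_ae_eq_fhat_add hfh hf', setIntegral_eq_of_ae_eq_fhat_add hfh hg',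
        setIntegral_eq_of_ae_eq_fhat_add hfh hh']
      linarith [(hadm.integral_le hC hl hC'cont hroot).1]
end

section
/- Let μ_x, μ_y and μ_s be compactly supported probability measures on ℝ. Let Π be the set of probability measures π on ℝ² such that the pushforward of π under (x,y) ↦ x equals μ_x, the pushforward under (x,y) ↦ y equals μ_y, and the pushforward under (x,y) ↦ x + y equals μ_s. Assume Π is nonempty and let π ∈ Π be an extreme point of Π, i.e., whenever π₁, π₂ ∈ Π and π = (1/2)·π₁ + (1/2)·π₂, then π₁ = π₂ = π. Then there exists a Borel set S ⊆ ℝ² of two-dimensional Lebesgue measure zero with π(S) = 1; in other words, π is singular with respect to two-dimensional Lebesgue measure. -/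
open Set MeasureTheory

/-- The set of probability measures on `ℝ²` with first marginal `μx`, second marginal `μy`,
and pushforward under `(x, y) ↦ x + y` equal to `μs`. -/
def PlanSet (μx μy μs : Measure ℝ) : Set (Measure (ℝ × ℝ)) :=
  {π | IsProbabilityMeasure π ∧ π.map Prod.fst = μx ∧ π.map Prod.snd = μy ∧
    π.map (fun p => p.1 + p.2) = μs}

open scoped ENNReal Topology
open Filter

/-- If `μ` is not singular with respect to `ν`, then `μ` dominates a positive multiple of the
restriction of `ν` to some non-null set. -/
lemma exists_smul_restrict_le_of_not_mutuallySingular {α : Type*} [MeasurableSpace α]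
    (μ ν : Measure α) [SigmaFinite μ] [SigmaFinite ν] (h : ¬ μ ⟂ₘ ν) :
    ∃ ε : ℝ≥0∞, ε ≠ 0 ∧ ε ≠ ∞ ∧ ∃ A, MeasurableSet A ∧ ν A ≠ 0 ∧ ε • ν.restrict A ≤ μ := by
  set g := μ.rnDeriv ν
  have hg : Measurable g := Measure.measurable_rnDeriv μ ν
  have hn : ∃ n : ℕ, ν {x | (n : ℝ≥0∞)⁻¹ ≤ g x} ≠ 0 := by
    by_contra! H
    refine h ((Measure.rnDeriv_eq_zero μ ν).1 ?_)
    have H' : ∀ᵐ x ∂ν, ∀ n : ℕ, ¬ (n : ℝ≥0∞)⁻¹ ≤ g x :=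
      ae_all_iff.2 fun n => by simpa [ae_iff] using H n
    filter_upwards [H'] with x hx
    by_contra hne
    obtain ⟨n, hn⟩ := ENNReal.exists_inv_nat_lt hne
    exact hx n hn.le
  obtain ⟨n, hn⟩ := hn
  -- the infimum with `1` keeps the constant finite when `n = 0`
  refine ⟨min (n : ℝ≥0∞)⁻¹ 1, by simp, by simp, _, measurableSet_le measurable_const hg, hn, ?_⟩
  refine Measure.le_iff.2 fun s hs => ?_
  have hA : MeasurableSet {x | (n : ℝ≥0∞)⁻¹ ≤ g x} := measurableSet_le measurable_const hg
  calc (min (n : ℝ≥0∞)⁻¹ 1 • ν.restrict {x | (n : ℝ≥0∞)⁻¹ ≤ g x}) s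
      ≤ (n : ℝ≥0∞)⁻¹ * ν (s ∩ {x | (n : ℝ≥0∞)⁻¹ ≤ g x}) := by
        rw [Measure.smul_apply, smul_eq_mul, Measure.restrict_apply hs]
        gcongr
        exact min_le_left _ _
    _ = ∫⁻ _ in s ∩ {x | (n : ℝ≥0∞)⁻¹ ≤ g x}, (n : ℝ≥0∞)⁻¹ ∂ν := by simp
    _ ≤ ∫⁻ x in s ∩ {x | (n : ℝ≥0∞)⁻¹ ≤ g x}, g x ∂ν :=
        setLIntegral_mono hg fun x hx => hx.2
    _ ≤ μ (s ∩ {x | (n : ℝ≥0∞)⁻¹ ≤ g x}) := Measure.setLIntegral_rnDeriv_le _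
    _ ≤ μ s := measure_mono inter_subset_left

open scoped Pointwise in
/-- For a compact set `A` of positive Haar measure and a finite set `F` of vectors, the set of
points of `A` which remain in `A` after translation by `t • v` for all `v ∈ F` has positive
measure when `t` is small. -/
lemma eventually_measure_setOf_forall_add_smul_mem_pos {E : Type*} [NormedAddCommGroup E]
    [NormedSpace ℝ E] [FiniteDimensional ℝ E] [MeasurableSpace E] [BorelSpace E]
    (μ : Measure E) [μ.IsAddHaarMeasure] {A : Set E} (hA : IsCompact A) (hμA : μ A ≠ 0)
    (F : Finset E) :
    ∀ᶠ t : ℝ in 𝓝 0, 0 < μ {p | p ∈ A ∧ ∀ v ∈ F, t • v + p ∈ A} := by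
  have key : ∀ v : E, Tendsto (fun t : ℝ => μ (((t • v) +ᵥ A) \ A)) (𝓝 0) (𝓝 0) := fun v => by
    have h := tendsto_measure_vadd_sdiff_isCompact_isClosed (μ := μ) hA hA.isClosed
    refine h.comp ?_
    have : Continuous fun t : ℝ => t • v := by fun_prop
    simpa using this.tendsto 0
  have hsum : Tendsto (fun t : ℝ => ∑ v ∈ F, μ (((t • v) +ᵥ A) \ A)) (𝓝 0) (𝓝 0) := by
    simpa using tendsto_finsetSum F fun v _ => key v
  filter_upwards [hsum.eventually_lt_const (pos_iff_ne_zero.2 hμA)] with t ht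
  by_contra hzero
  refine ht.not_ge ?_
  have hsub : A ⊆ {p | p ∈ A ∧ ∀ v ∈ F, t • v + p ∈ A} ∪
      ⋃ v ∈ F, (fun p => t • v + p) ⁻¹' (((t • v) +ᵥ A) \ A) := by
    intro p hp
    by_cases h : ∀ v ∈ F, t • v + p ∈ A
    · exact Or.inl ⟨hp, h⟩
    · push Not at h
      obtain ⟨v, hv, hvp⟩ := h
      exact Or.inr (mem_iUnion₂.2 ⟨v, hv, ⟨p, hp, rfl⟩, hvp⟩)
  calc μ A ≤ _ := measure_mono hsub
    _ ≤ _ := measure_union_le _ _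
    _ ≤ 0 + ∑ v ∈ F, μ ((fun p => t • v + p) ⁻¹' (((t • v) +ᵥ A) \ A)) :=
        add_le_add (not_lt.1 hzero) (measure_biUnion_finset_le _ _)
    _ = _ := by simp only [zero_add, measure_preimage_add]

/-- Exchanging a part `Q` of a plan `π` for a measure `P` with the same three projections
yields a plan. -/
lemma sub_add_mem_planSet {μx μy μs : Measure ℝ} {π P Q : Measure (ℝ × ℝ)}
    [IsFiniteMeasure Q] (hπ : π ∈ PlanSet μx μy μs) (hQ : Q ≤ π)
    (h₁ : P.map Prod.fst = Q.map Prod.fst) (h₂ : P.map Prod.snd = Q.map Prod.snd)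
    (h₃ : P.map (fun p => p.1 + p.2) = Q.map (fun p => p.1 + p.2)) :
    π - Q + P ∈ PlanSet μx μy μs := by
  obtain ⟨hprob, hπ₁, hπ₂, hπ₃⟩ := hπ
  have hmap : ∀ f : ℝ × ℝ → ℝ, Measurable f → P.map f = Q.map f →
      (π - Q + P).map f = π.map f := fun f hf h => by
    rw [Measure.map_add _ _ hf, h, ← Measure.map_add _ _ hf, Measure.sub_add_cancel_of_le hQ]
  refine ⟨⟨?_⟩, (hmap _ measurable_fst h₁).trans hπ₁, (hmap _ measurable_snd h₂).trans hπ₂,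
    (hmap _ (by fun_prop) h₃).trans hπ₃⟩
  rw [← preimage_univ (f := Prod.fst), ← Measure.map_apply measurable_fst .univ,
    hmap _ measurable_fst h₁, Measure.map_apply measurable_fst .univ, preimage_univ, measure_univ]

/-- An extreme plan cannot dominate two distinct measures with the same three projections. -/
lemma eq_of_le_of_extreme {μx μy μs : Measure ℝ} {π P Q : Measure (ℝ × ℝ)}
    [IsFiniteMeasure P] [IsFiniteMeasure Q] (hπ : π ∈ PlanSet μx μy μs)
    (hext : ∀ π₁ ∈ PlanSet μx μy μs, ∀ π₂ ∈ PlanSet μx μy μs,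
      π = (2 : ℝ≥0∞)⁻¹ • π₁ + (2 : ℝ≥0∞)⁻¹ • π₂ → π₁ = π ∧ π₂ = π)
    (hP : P ≤ π) (hQ : Q ≤ π)
    (h₁ : P.map Prod.fst = Q.map Prod.fst) (h₂ : P.map Prod.snd = Q.map Prod.snd)
    (h₃ : P.map (fun p => p.1 + p.2) = Q.map (fun p => p.1 + p.2)) : P = Q := by
  have := hπ.1
  have hsum : (π - Q + P) + (π - P + Q) = π + π := by
    rw [add_add_add_comm, add_comm P Q, add_add_add_comm, Measure.sub_add_cancel_of_le hP,
      Measure.sub_add_cancel_of_le hQ]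
  have h := (hext _ (sub_add_mem_planSet hπ hQ h₁ h₂ h₃) _
    (sub_add_mem_planSet hπ hP h₁.symm h₂.symm h₃.symm) (by
      rw [← smul_add, hsum, smul_add, ← add_smul, ENNReal.inv_two_add_inv_two, one_smul])).1
  ext s hs
  have h' : (π - Q) s + P s = (π - Q) s + Q s := by
    rw [← Measure.add_apply, ← Measure.add_apply, h, Measure.sub_add_cancel_of_le hQ]
  exact (ENNReal.add_right_inj (measure_ne_top _ _)).1 h'

/-- A translate of the restriction of an invariant measure is dominated by its restriction to any
measurable set containing the translated set. -/
lemma map_add_left_restrict_le {G : Type*} [AddGroup G] [MeasurableSpace G] [MeasurableAdd G]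
    (μ : Measure G) [μ.IsAddLeftInvariant] {A B : Set G} {w : G} (h : ∀ p ∈ B, w + p ∈ A) :
    (μ.restrict B).map (fun p => w + p) ≤ μ.restrict A := by
  refine Measure.le_iff.2 fun s hs => ?_
  have hw : Measurable fun p : G => w + p := measurable_const_add w
  rw [Measure.map_apply hw hs, Measure.restrict_apply (hw hs), Measure.restrict_apply hs,
    ← measure_preimage_add μ w (s ∩ A)]
  exact measure_mono fun p hp => ⟨hp.1, h p hp.2⟩

/-- An extreme point of the set of probability measures on `ℝ²` with prescribed projections
onto the two axes and onto the diagonal (via `(x,y) ↦ x + y`), the three marginals being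
compactly supported, is singular with respect to two-dimensional Lebesgue measure. -/
theorem extreme_point_singular (μx μy μs : Measure ℝ)
    [IsProbabilityMeasure μx] [IsProbabilityMeasure μy] [IsProbabilityMeasure μs]
    (hx : ∃ K : Set ℝ, IsCompact K ∧ μx Kᶜ = 0)
    (hy : ∃ K : Set ℝ, IsCompact K ∧ μy Kᶜ = 0)
    (hs : ∃ K : Set ℝ, IsCompact K ∧ μs Kᶜ = 0)
    (π : Measure (ℝ × ℝ)) (hπ : π ∈ PlanSet μx μy μs)
    (hext : ∀ π₁ ∈ PlanSet μx μy μs, ∀ π₂ ∈ PlanSet μx μy μs,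
      π = (2 : ENNReal)⁻¹ • π₁ + (2 : ENNReal)⁻¹ • π₂ → π₁ = π ∧ π₂ = π) :
    ∃ S : Set (ℝ × ℝ), MeasurableSet S ∧ volume S = 0 ∧ π S = 1 := by
  have := hπ.1
  by_cases hsing : π ⟂ₘ volume
  · obtain ⟨S, hS, hπS, hvol⟩ := hsing
    exact ⟨Sᶜ, hS.compl, hvol, (prob_compl_eq_one_iff hS).2 hπS⟩
  exfalso
  obtain ⟨ε, hε0, hεtop, A, hA, hA0, hAπ⟩ :=
    exists_smul_restrict_le_of_not_mutuallySingular π volume hsing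
  obtain ⟨K, hKA, hK, hK0⟩ := hA.exists_lt_isCompact (pos_iff_ne_zero.2 hA0)
  -- the vertices of a hexagon: each projection identifies every one of the first three vertices
  -- with one of the last three
  let F : Finset (ℝ × ℝ) := {(1, 0), (-1, 1), (0, -1), (0, 1), (-1, 0), (1, -1)}
  obtain ⟨t, ht, ht0⟩ := ((eventually_measure_setOf_forall_add_smul_mem_pos volume hK hK0.ne'
    F).filter_mono nhdsWithin_le_nhds |>.and (self_mem_nhdsWithin (s := Ioi (0 : ℝ)))).exists
  set C : Set (ℝ × ℝ) := {p | p ∈ K ∧ ∀ v ∈ F, t • v + p ∈ K}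
  obtain ⟨z, -, hz⟩ := exists_mem_forall_mem_nhdsWithin_pos_measure ht.ne'
  set B : Set (ℝ × ℝ) := C ∩ Metric.ball z (t / 2)
  have hB0 : 0 < volume B :=
    hz B (inter_mem self_mem_nhdsWithin
      (mem_nhdsWithin_of_mem_nhds (Metric.ball_mem_nhds z (by positivity))))
  have hBtop : volume B ≠ ∞ :=
    ((measure_mono fun p hp => hp.1.1).trans_lt hK.measure_lt_top).ne
  have : IsFiniteMeasure (volume.restrict B) := isFiniteMeasure_restrict.2 hBtop
  have hc0 : ε / 3 ≠ 0 := by simp [ENNReal.div_eq_zero_iff, hε0]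
  have hctop : ε / 3 ≠ ∞ := ENNReal.div_ne_top hεtop (by norm_num)
  let T : ℝ × ℝ → Measure (ℝ × ℝ) := fun v => (volume.restrict B).map (fun p => t • v + p)
  have hTapply : ∀ v {s}, MeasurableSet s → T v s = volume ((fun p => t • v + p) ⁻¹' s ∩ B) :=
    fun v s hs => by
      rw [Measure.map_apply (measurable_const_add _) hs,
        Measure.restrict_apply (measurable_const_add _ hs)]
  have hT : ∀ v ∈ F, T v ≤ volume.restrict A := fun v hv =>
    map_add_left_restrict_le volume fun p hp => hKA (hp.1.2 v hv)
  have hTπ : ∀ u ∈ F, ∀ v ∈ F, ∀ w ∈ F, (ε / 3) • (T u + T v + T w) ≤ π := by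
    intro u hu v hv w hw
    refine le_trans (Measure.le_iff.2 fun s _ => ?_) hAπ
    simp only [Measure.smul_apply, Measure.add_apply, smul_eq_mul]
    calc ε / 3 * (T u s + T v s + T w s)
        ≤ ε / 3 * (volume.restrict A s + volume.restrict A s + volume.restrict A s) := by
          gcongr
          exacts [hT u hu, hT v hv, hT w hw]
      _ = ε / 3 * 3 * volume.restrict A s := by ring
      _ = ε * volume.restrict A s := by
          rw [ENNReal.div_mul_cancel (by norm_num) (by norm_num)]
  have hfin : ∀ u v w, IsFiniteMeasure ((ε / 3) • (T u + T v + T w)) := fun u v w =>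
    Measure.smul_finite _ hctop
  have hmap : ∀ f : ℝ × ℝ → ℝ, Measurable f → ∀ u v w,
      ((ε / 3) • (T u + T v + T w)).map f = (ε / 3) •
        ((volume.restrict B).map (fun p => f (t • u + p)) +
          (volume.restrict B).map (fun p => f (t • v + p)) +
          (volume.restrict B).map (fun p => f (t • w + p))) := fun f hf u v w => by
    simp only [Measure.map_smul, Measure.map_add _ _ hf, T,
      Measure.map_map hf (measurable_const_add _), Function.comp_def]
  have heq := eq_of_le_of_extreme
    (P := (ε / 3) • (T (1, 0) + T (-1, 1) + T (0, -1)))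
    (Q := (ε / 3) • (T (0, 1) + T (-1, 0) + T (1, -1))) hπ hext
    (hTπ _ (by simp [F]) _ (by simp [F]) _ (by simp [F]))
    (hTπ _ (by simp [F]) _ (by simp [F]) _ (by simp [F]))
    (by
      rw [hmap _ measurable_fst, hmap _ measurable_fst]
      simp only [Prod.fst_add, Prod.smul_fst]
      congr 1; abel)
    (by
      rw [hmap _ measurable_snd, hmap _ measurable_snd]
      simp only [Prod.snd_add, Prod.smul_snd]
      congr 1; abel)
    (by
      rw [hmap _ (by fun_prop), hmap _ (by fun_prop)]
      have hadd : ∀ (v p : ℝ × ℝ), (t • v + p).1 + (t • v + p).2 =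
          t * (v.1 + v.2) + (p.1 + p.2) := fun v p => by
        simp only [Prod.fst_add, Prod.snd_add, Prod.smul_fst, Prod.smul_snd, smul_eq_mul]; ring
      simp only [hadd, add_zero, zero_add, neg_add_cancel, add_neg_cancel]
      congr 1; abel)
  set D : Set (ℝ × ℝ) := Metric.ball (z.1 + t, z.2) (t / 2)
  have hDmeas : MeasurableSet D := measurableSet_ball
  have hD : ∀ p, p ∈ D ↔ |p.1 - (z.1 + t)| < t / 2 ∧ |p.2 - z.2| < t / 2 := fun p => by
    simp [D, Prod.dist_eq, Real.dist_eq]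
  have hball : ∀ p ∈ B, |p.1 - z.1| < t / 2 ∧ |p.2 - z.2| < t / 2 := fun p hp => by
    simpa [Prod.dist_eq, Real.dist_eq] using hp.2
  have hPD : T (1, 0) D ≠ 0 := by
    rw [hTapply _ hDmeas]
    refine ne_of_gt (hB0.trans_le (measure_mono (subset_inter (fun p hp => ?_) subset_rfl)))
    have := hball p hp
    simp only [mem_preimage, hD, Prod.fst_add, Prod.snd_add, Prod.smul_fst,
      Prod.smul_snd, smul_eq_mul, mul_one, mul_zero, zero_add]
    rwa [show t + p.1 - (z.1 + t) = p.1 - z.1 by ring]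
  have hQD : ∀ v : ℝ × ℝ, v.1 ≤ 0 ∨ v.2 ≤ -1 → T v D = 0 := fun v hv => by
    rw [hTapply _ hDmeas]
    refine measure_mono_null (t := ∅) (fun p hp => ?_) measure_empty
    obtain ⟨h₁, h₂⟩ := hball p hp.2
    obtain ⟨h₃, h₄⟩ := (hD _).1 hp.1
    simp only [Prod.fst_add, Prod.snd_add, Prod.smul_fst, Prod.smul_snd, smul_eq_mul,
      abs_lt] at h₁ h₂ h₃ h₄
    rcases hv with hv | hv <;> exact absurd hv (by nlinarith)
  have hval := congrArg (fun m : Measure (ℝ × ℝ) => m D) heq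
  simp only [Measure.smul_apply, Measure.add_apply, smul_eq_mul, hQD (0, 1) (by norm_num),
    hQD (-1, 0) (by norm_num), hQD (1, -1) (by norm_num), add_zero, mul_zero] at hval
  simp [hc0, hPD] at hval
end
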